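/- arXiv:0805.3522 — 2 statements merged into one kernel-verified Lean document; each statement's English description precedes it below -/
import Mathlib

section
/- (The 2|G|/3 Theorem.) Let S be a finite generating subset of an abelian group G of order at least 2, and T a finite subset of G with |S| ≤ |T|, S + T aperiodic, 0 ∈ S ∩ T, and (2|G| + 2)/3 ≥ |S + T| = |S| + |T| - 1. Let H be a hyper-atom of S and φ : G → G/H the canonical morphism. Then S and T are H-quasi-periodic, and φ(S) and φ(T) are arithmetic progressions in G/H with the same difference. -/
open scoped Pointwise Classical

/-- The `k`-th connectivity `κ_k(S)`: minimum of `|X + S| - |X|` over finite `X`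
with `|X| ≥ k` and `|X + S| ≤ |G| - k`, with `min ∅ = |G| - 2k + 1`. -/
noncomputable def kappa {G : Type*} [AddCommGroup G] [DecidableEq G]
    (k : ℕ) (S : Finset G) : ℕ :=
  if ∃ X : Finset G, k ≤ X.card ∧ (X + S).card ≤ Nat.card G - k then
    sInf {d : ℕ | ∃ X : Finset G, k ≤ X.card ∧ (X + S).card ≤ Nat.card G - k ∧
      d = (X + S).card - X.card}
  else Nat.card G - 2 * k + 1

/-- `S` is `k`-separable: some `X` has `|X| ≥ k` and `|G \ (X + S)| ≥ k`. -/
def KSeparable {G : Type*} [AddCommGroup G] [DecidableEq G] (k : ℕ) (S : Finset G) : Prop :=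
  ∃ X : Finset G, k ≤ X.card ∧ (X + S).card ≤ Nat.card G - k

/-- `X` is a `k`-fragment of `S`: `|X| ≥ k`, `|G \ (X + S)| ≥ k` and
`|X + S| - |X| = κ_k(S)`. -/
def IsFragment {G : Type*} [AddCommGroup G] [DecidableEq G] (k : ℕ) (S X : Finset G) : Prop :=
  k ≤ X.card ∧ (X + S).card ≤ Nat.card G - k ∧ (X + S).card - X.card = kappa k S

/-- A hyper-atom of `S` is a subgroup of maximal cardinality which is a `1`-fragment. -/
def IsHyperAtom {G : Type*} [AddCommGroup G] [DecidableEq G]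
    (S : Finset G) (H : AddSubgroup G) : Prop :=
  (∃ HF : Finset G, (HF : Set G) = (H : Set G) ∧ IsFragment 1 S HF) ∧
  ∀ (K : AddSubgroup G) (KF : Finset G), (KF : Set G) = (K : Set G) →
    IsFragment 1 S KF → Nat.card K ≤ Nat.card H

/-- A finite set is aperiodic if its period `{g : A + g = A}` is trivial. -/
def IsAperiodic {G : Type*} [AddCommGroup G] [DecidableEq G] (A : Finset G) : Prop :=
  ∀ g : G, A + ({g} : Finset G) = A → g = 0

/-- `A` is `H`-quasi-periodic: there is `x` with `(A \ (x + H)) + H = A \ (x + H)`. -/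
def QuasiPeriodic {G : Type*} [AddCommGroup G] (H A : Set G) : Prop :=
  ∃ x : G, (A \ ({x} + H)) + H = A \ ({x} + H)

/-- `A` is an arithmetic progression with difference `d`. -/
def IsAPWith {G : Type*} [AddCommGroup G] [DecidableEq G] (d : G) (A : Finset G) : Prop :=
  ∃ (a : G) (k : ℕ), A.card = k ∧
    A = (Finset.range k).image (fun i => a + (i : ℕ) • d)

namespace TT

/-! ### Kneser's theorem -/

/-- The stabilizer of a finite set. -/
def st {G : Type*} [AddCommGroup G] (C : Finset G) : AddSubgroup G where
  carrier := {g | ∀ x, g + x ∈ C ↔ x ∈ C}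
  zero_mem' := by intro x; simp
  add_mem' := by
    intro a b ha hb x
    rw [add_assoc, ha, hb]
  neg_mem' := by
    intro a ha x
    rw [← ha (-a + x)]; simp

/-- The finset of elements of a subgroup. -/
noncomputable def fs {G : Type*} [AddCommGroup G] [Fintype G] (K : AddSubgroup G) : Finset G :=
  Finset.univ.filter (· ∈ K)

variable {G : Type*} [AddCommGroup G] [Fintype G] [DecidableEq G]

lemma mem_st {C : Finset G} {g : G} : g ∈ st C ↔ ∀ x, g + x ∈ C ↔ x ∈ C := Iff.rfl

@[simp] lemma mem_fs {K : AddSubgroup G} {g : G} : g ∈ fs K ↔ g ∈ K := by simp [fs]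

lemma fs_pos (K : AddSubgroup G) : 0 < (fs K).card :=
  Finset.card_pos.2 ⟨0, by simp [K.zero_mem]⟩

/-- a set invariant under `K` is empty or has at least `|K|` elements. -/
lemma card_periodic (K : AddSubgroup G) (U : Finset G)
    (h : ∀ k ∈ K, ∀ x ∈ U, k + x ∈ U) : U.card = 0 ∨ (fs K).card ≤ U.card := by
  by_cases hU : U = ∅
  · left; simp [hU]
  · right
    obtain ⟨x, hx⟩ := Finset.nonempty_iff_ne_empty.2 hU
    apply Finset.card_le_card_of_injOn (fun k => k + x)
    · intro k hk
      exact h k (by simpa using hk) x hx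
    · intro a _ b _ hab
      simpa using hab

lemma grid_bound (H1 H2 : AddSubgroup G) (P Q D : Finset G)  (x : G)
    (hP : ∀ y ∈ P, y ∈ H1) (hQ : ∀ z ∈ Q, z ∈ H2)
    (hD : ∀ y ∈ P, ∀ z ∈ Q, x + y + z ∈ D) :
    P.card * Q.card ≤ (fs (H1 ⊓ H2)).card * D.card := by
  rw [← Finset.card_product]
  apply Finset.card_le_mul_card_image_of_maps_to (f := fun p : G × G => x + p.1 + p.2)
  · intro p hp
    rw [Finset.mem_product] at hp
    exact hD _ hp.1 _ hp.2
  · intro d _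
    by_cases hne : (Finset.filter (fun p : G × G => x + p.1 + p.2 = d) (P ×ˢ Q)) = ∅
    · rw [hne]; simp
    · obtain ⟨p0, hp0⟩ := Finset.nonempty_iff_ne_empty.2 hne
      rw [Finset.mem_filter, Finset.mem_product] at hp0
      apply Finset.card_le_card_of_injOn (fun p => p.1 - p0.1)
      · intro p hp
        rw [Finset.mem_coe, Finset.mem_filter, Finset.mem_product] at hp
        rw [Finset.mem_coe, mem_fs, AddSubgroup.mem_inf]
        refine ⟨H1.sub_mem (hP _ hp.1.1) (hP _ hp0.1.1), ?_⟩
        have : p.1 - p0.1 = p0.2 - p.2 := by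
          have := hp.2.trans hp0.2.symm
          rw [sub_eq_sub_iff_add_eq_add]
          have h2 : x + (p.1 + p.2) = x + (p0.1 + p0.2) := by
            rw [← add_assoc, ← add_assoc]; exact this
          rw [add_left_cancel h2, add_comm]
        simp only [this]
        exact H2.sub_mem (hQ _ hp0.1.2) (hQ _ hp.1.2)
      · intro p hp p' hp' hpp
        rw [Finset.mem_coe, Finset.mem_filter, Finset.mem_product] at hp hp'
        have h1 : p.1 = p'.1 := by simpa using hpp
        have h2 : p.2 = p'.2 := by
          have := hp.2.trans hp'.2.symm
          rw [h1] at this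
          exact add_left_cancel this
        exact Prod.ext h1 h2

lemma arith_union (h0 p p' w w' A B : ℕ) (_hh : 0 < h0) (hp : h0 ≤ p) (hw' : h0 ≤ w')
    (hp' : p' = 0 ∨ h0 ≤ p') (hw : w = 0 ∨ h0 ≤ w)
    (h1 : p * w' ≤ h0 * A) (h2 : p' * w ≤ h0 * B) :
    p + p' ≤ A + h0 ∨ w + w' ≤ B + h0 ∨ w + w' ≤ A := by
  rcases hp' with hp' | hp'
  · left
    have : h0 * p ≤ h0 * A := by nlinarith
    have := Nat.le_of_mul_le_mul_left this _hh
    omega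
  · rcases hw with hw | hw
    · right; right
      have : h0 * w' ≤ h0 * A := by nlinarith
      have := Nat.le_of_mul_le_mul_left this _hh
      omega
    · by_contra hcon
      push Not at hcon
      obtain ⟨a1, a2, -⟩ := hcon
      obtain ⟨p, rfl⟩ := Nat.exists_eq_add_of_le hp
      obtain ⟨p', rfl⟩ := Nat.exists_eq_add_of_le hp'
      obtain ⟨w, rfl⟩ := Nat.exists_eq_add_of_le hw
      obtain ⟨w', rfl⟩ := Nat.exists_eq_add_of_le hw'
      have e1 : A + 1 ≤ h0 + p + p' := by omega
      have e2 : B + 1 ≤ h0 + w + w' := by omega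
      -- (h0+p)(h0+w')(h0+p')(h0+w) ≤ h0^2 A B
      have k1 := Nat.mul_le_mul h1 h2
      have k2 : h0 * (h0 + p + p') ≤ (h0 + p) * (h0 + p') := by nlinarith
      have k3 : h0 * (h0 + w + w') ≤ (h0 + w) * (h0 + w') := by nlinarith
      have k4 := Nat.mul_le_mul k2 k3
      have k5 : A * B < (h0 + p + p') * (h0 + w + w') :=
        Nat.mul_lt_mul'' (by omega) (by omega)
      have k6 : (h0 * h0) * (A * B) < (h0 * h0) * ((h0 + p + p') * (h0 + w + w')) :=
        Nat.mul_lt_mul_of_pos_left k5 (by positivity)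
      nlinarith

/-- one half of the union lemma -/
lemma union_half (C1 C2 : Finset G) (H1 H2 : AddSubgroup G)
    (s1 : ∀ g ∈ H1, ∀ x, g + x ∈ C1 ↔ x ∈ C1) (s2 : ∀ g ∈ H2, ∀ x, g + x ∈ C2 ↔ x ∈ C2)
    (x : G) (hx2 : x ∈ C2) (hx1 : x ∉ C1) :
    (fs H1).card ≤ (C2 \ C1).card + (fs (H1 ⊓ H2)).card ∨
    (fs H2).card ≤ (C1 \ C2).card + (fs (H1 ⊓ H2)).card ∨ (fs H2).card ≤ (C2 \ C1).card := by
  have key1 : ∀ y ∈ H1, ∀ z, x + y + z ∈ C1 ↔ x + z ∈ C1 := by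
    intro y hy z
    rw [show x + y + z = y + (x + z) by abel]; exact s1 y hy _
  have key2 : ∀ z ∈ H2, ∀ y, x + y + z ∈ C2 ↔ x + y ∈ C2 := by
    intro z hz y
    rw [show x + y + z = z + (x + y) by abel]; exact s2 z hz _
  set P := (fs H1).filter (fun y => x + y ∈ C2) with hP
  set P' := (fs H1).filter (fun y => ¬ x + y ∈ C2) with hP'
  set W := (fs H2).filter (fun y => x + y ∈ C1) with hW
  set W' := (fs H2).filter (fun y => ¬ x + y ∈ C1) with hW'
  have e1 : P.card + P'.card = (fs H1).card := Finset.card_filter_add_card_filter_not _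
  have e2 : W.card + W'.card = (fs H2).card := Finset.card_filter_add_card_filter_not _
  have inv1 : ∀ k ∈ H1 ⊓ H2, ∀ y, (k + y ∈ H1 ↔ y ∈ H1) := fun k hk y =>
    AddSubgroup.add_mem_cancel_left _ (AddSubgroup.mem_inf.1 hk).1
  have inv2 : ∀ k ∈ H1 ⊓ H2, ∀ y, (k + y ∈ H2 ↔ y ∈ H2) := fun k hk y =>
    AddSubgroup.add_mem_cancel_left _ (AddSubgroup.mem_inf.1 hk).2
  have inv3 : ∀ k ∈ H1 ⊓ H2, ∀ y, (x + (k + y) ∈ C2 ↔ x + y ∈ C2) := fun k hk y => by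
    rw [show x + (k + y) = k + (x + y) by abel]; exact s2 k (AddSubgroup.mem_inf.1 hk).2 _
  have inv4 : ∀ k ∈ H1 ⊓ H2, ∀ y, (x + (k + y) ∈ C1 ↔ x + y ∈ C1) := fun k hk y => by
    rw [show x + (k + y) = k + (x + y) by abel]; exact s1 k (AddSubgroup.mem_inf.1 hk).1 _
  have cP := card_periodic (H1 ⊓ H2) P (by
    intro k hk y hy
    rw [hP, Finset.mem_filter, mem_fs] at hy ⊢
    rwa [inv1 k hk, inv3 k hk])
  have cP' := card_periodic (H1 ⊓ H2) P' (by
    intro k hk y hy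
    rw [hP', Finset.mem_filter, mem_fs] at hy ⊢
    rwa [inv1 k hk, inv3 k hk])
  have cW := card_periodic (H1 ⊓ H2) W (by
    intro k hk y hy
    rw [hW, Finset.mem_filter, mem_fs] at hy ⊢
    rwa [inv2 k hk, inv4 k hk])
  have cW' := card_periodic (H1 ⊓ H2) W' (by
    intro k hk y hy
    rw [hW', Finset.mem_filter, mem_fs] at hy ⊢
    rwa [inv2 k hk, inv4 k hk])
  have nP : P.card ≠ 0 := Finset.card_ne_zero.2 ⟨0, by simp [hP, hx2, H1.zero_mem]⟩
  have nW' : W'.card ≠ 0 := Finset.card_ne_zero.2 ⟨0, by simp [hW', hx1, H2.zero_mem]⟩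
  have b1 : P.card * W'.card ≤ (fs (H1 ⊓ H2)).card * (C2 \ C1).card := by
    apply grid_bound H1 H2 P W' _ x
    · intro y hy; simp only [hP, Finset.mem_filter, mem_fs] at hy; exact hy.1
    · intro y hy; simp only [hW', Finset.mem_filter, mem_fs] at hy; exact hy.1
    · intro y hy z hz
      simp only [hP, hW', Finset.mem_filter, mem_fs] at hy hz
      rw [Finset.mem_sdiff, key1 y hy.1, key2 z hz.1]
      exact ⟨hy.2, hz.2⟩
  have b2 : P'.card * W.card ≤ (fs (H1 ⊓ H2)).card * (C1 \ C2).card := by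
    apply grid_bound H1 H2 P' W _ x
    · intro y hy; simp only [hP', Finset.mem_filter, mem_fs] at hy; exact hy.1
    · intro y hy; simp only [hW, Finset.mem_filter, mem_fs] at hy; exact hy.1
    · intro y hy z hz
      simp only [hP', hW, Finset.mem_filter, mem_fs] at hy hz
      rw [Finset.mem_sdiff, key1 y hy.1, key2 z hz.1]
      exact ⟨hz.2, hy.2⟩
  rw [← e1, ← e2]
  exact arith_union _ _ _ _ _ _ _ (fs_pos _) (cP.resolve_left nP) (cW'.resolve_left nW') cP' cW b1 b2

lemma union_lemma (C1 C2 : Finset G) (N : ℕ) (h1 : N ≤ C1.card + (fs (st C1)).card)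
    (h2 : N ≤ C2.card + (fs (st C2)).card) :
    N ≤ (C1 ∪ C2).card + (fs (st (C1 ∪ C2))).card := by
  by_cases c1 : C1 ⊆ C2
  · rwa [Finset.union_eq_right.2 c1]
  by_cases c2 : C2 ⊆ C1
  · rwa [Finset.union_eq_left.2 c2]
  obtain ⟨y, hy1, hy2⟩ := Finset.not_subset.1 c1
  obtain ⟨x, hx2, hx1⟩ := Finset.not_subset.1 c2
  have u1 := union_half C1 C2 (st C1) (st C2) (fun g hg => hg) (fun g hg => hg) x hx2 hx1
  have u2 := union_half C2 C1 (st C2) (st C1) (fun g hg => hg) (fun g hg => hg) y hy1 hy2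
  rw [inf_comm] at u2
  have le : (fs (st C1 ⊓ st C2)).card ≤ (fs (st (C1 ∪ C2))).card := by
    apply Finset.card_le_card
    intro g hg
    rw [mem_fs, AddSubgroup.mem_inf] at hg
    rw [mem_fs, mem_st]
    intro x
    rw [Finset.mem_union, Finset.mem_union, mem_st.1 hg.1, mem_st.1 hg.2]
  have k1 : (C1 ∪ C2).card = C1.card + (C2 \ C1).card := by
    rw [← Finset.card_union_of_disjoint Finset.disjoint_sdiff, Finset.union_sdiff_self_eq_union]
  have k2 : (C1 ∪ C2).card = C2.card + (C1 \ C2).card := by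
    rw [Finset.union_comm, ← Finset.card_union_of_disjoint Finset.disjoint_sdiff,
      Finset.union_sdiff_self_eq_union]
  omega

lemma local_kneser (n : ℕ) : ∀ (A B : Finset G), B.card = n → (0 : G) ∈ A → (0 : G) ∈ B →
    ∃ C : Finset G, C ⊆ A + B ∧ (0 : G) ∈ C ∧ A.card + B.card ≤ C.card + (fs (st C)).card := by
  induction n using Nat.strong_induction_on with
  | _ n ih =>
    intro A B hn hA hB
    by_cases h : ∀ e ∈ A, ∀ b ∈ B, b + e ∈ A
    · refine ⟨A, ?_, hA, ?_⟩
      · intro a ha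
        rw [Finset.mem_add]
        exact ⟨a, ha, 0, hB, add_zero a⟩
      · apply Nat.add_le_add_left
        apply Finset.card_le_card
        intro b hb
        rw [mem_fs, mem_st]
        have himg : A.image (fun x => b + x) = A := by
          apply Finset.eq_of_subset_of_card_le
          · intro y hy
            obtain ⟨x, hx, rfl⟩ := Finset.mem_image.1 hy
            exact h x hx b hb
          · rw [Finset.card_image_of_injective _ (add_right_injective b)]
        intro x
        constructor
        · intro hx
          rw [← himg, Finset.mem_image] at hx
          obtain ⟨y, hy, hxy⟩ := hx
          rwa [← add_left_cancel hxy]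
        · intro hx; exact h x hx b hb
    · push Not at h
      obtain ⟨e, he, b, hb, hbe⟩ := h
      set B' := B.filter (fun y => y + e ∈ A) with hB'
      set A' := A ∪ B.image (fun y => y + e) with hA'
      have hlt : B'.card < n := by
        rw [← hn]
        apply Finset.card_lt_card
        refine ⟨Finset.filter_subset _ _, fun hs => hbe ?_⟩
        exact (Finset.mem_filter.1 (hs hb)).2
      obtain ⟨C, hC, h0, hcard⟩ := ih _ hlt A' B' rfl (Finset.mem_union_left _ hA)
        (by simp [hB', hB, he])
      refine ⟨C, hC.trans ?_, h0, le_trans (le_of_eq ?_) hcard⟩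
      · intro z hz
        obtain ⟨p, hp, r, hr, rfl⟩ := Finset.mem_add.1 hz
        rw [hB', Finset.mem_filter] at hr
        rw [hA', Finset.mem_union, Finset.mem_image] at hp
        rcases hp with hp | ⟨y, hy, rfl⟩
        · exact Finset.add_mem_add hp hr.1
        · rw [show y + e + r = (r + e) + y by abel]
          exact Finset.add_mem_add hr.2 hy
      · have e1 : B'.card = (A ∩ B.image (fun y => y + e)).card := by
          rw [← Finset.card_image_of_injective B' (add_left_injective e)]
          congr 1
          ext z
          simp only [hB', Finset.mem_image, Finset.mem_filter, Finset.mem_inter]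
          constructor
          · rintro ⟨y, ⟨hy, hy2⟩, rfl⟩; exact ⟨hy2, y, hy, rfl⟩
          · rintro ⟨h1, y, hy, rfl⟩; exact ⟨y, ⟨hy, h1⟩, rfl⟩
        rw [e1, hA', Finset.card_union_add_card_inter,
          Finset.card_image_of_injective _ (add_left_injective e)]

lemma local_kneser' (A B : Finset G) (a b : G) (ha : a ∈ A) (hb : b ∈ B) :
    ∃ C : Finset G, C ⊆ A + B ∧ a + b ∈ C ∧ A.card + B.card ≤ C.card + (fs (st C)).card := by
  obtain ⟨C, hC, h0, hc⟩ := local_kneser _ (A.image (fun x => -a + x)) (B.image (fun x => -b + x)) rfl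
    (Finset.mem_image.2 ⟨a, ha, by simp⟩) (Finset.mem_image.2 ⟨b, hb, by simp⟩)
  rw [Finset.card_image_of_injective _ (add_right_injective _),
    Finset.card_image_of_injective _ (add_right_injective _)] at hc
  refine ⟨C.image (fun x => (a + b) + x), ?_, Finset.mem_image.2 ⟨0, h0, by simp⟩, ?_⟩
  · intro z hz
    obtain ⟨y, hy, rfl⟩ := Finset.mem_image.1 hz
    obtain ⟨p, hp, r, hr, rfl⟩ := Finset.mem_add.1 (hC hy)
    obtain ⟨p, hp', rfl⟩ := Finset.mem_image.1 hp
    obtain ⟨r, hr', rfl⟩ := Finset.mem_image.1 hr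
    rw [show a + b + (-a + p + (-b + r)) = p + r by abel]
    exact Finset.add_mem_add hp' hr'
  · rw [Finset.card_image_of_injective _ (add_right_injective _)]
    refine hc.trans (Nat.add_le_add_left (Finset.card_le_card ?_) _)
    intro g hg
    rw [mem_fs, mem_st] at hg ⊢
    intro x
    simp only [Finset.mem_image]
    constructor
    · rintro ⟨y, hy, hyx⟩
      refine ⟨-g + y, ?_, ?_⟩
      · rw [← hg]; simpa using hy
      · rw [show a + b + (-g + y) = -g + (a + b + y) by abel, hyx]; simp
    · rintro ⟨y, hy, rfl⟩
      exact ⟨g + y, (hg y).2 hy, by abel⟩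

lemma kneser_weak (A B : Finset G) (hA : A.Nonempty) (hB : B.Nonempty) :
    A.card + B.card ≤ (A + B).card + (fs (st (A + B))).card := by
  choose! f hf using fun (p : G × G) (hp : p ∈ A ×ˢ B) =>
    local_kneser' A B p.1 p.2 (Finset.mem_product.1 hp).1 (Finset.mem_product.1 hp).2
  have main : ∀ I : Finset (G × G), I.Nonempty → I ⊆ A ×ˢ B →
      A.card + B.card ≤ (I.biUnion f).card + (fs (st (I.biUnion f))).card := by
    intro I hI
    induction hI using Finset.Nonempty.cons_induction with
    | singleton a =>
      intro hs
      rw [Finset.singleton_biUnion]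
      exact (hf a (hs (Finset.mem_singleton_self a))).2.2
    | cons a s ha hs ih =>
      intro hsub
      rw [Finset.cons_eq_insert] at hsub ⊢
      rw [Finset.biUnion_insert]
      apply union_lemma
      · exact (hf a (hsub (Finset.mem_insert_self _ _))).2.2
      · exact ih ((Finset.subset_insert _ _).trans hsub)
  have e : (A ×ˢ B).biUnion f = A + B := by
    apply Finset.Subset.antisymm
    · rw [Finset.biUnion_subset]
      intro p hp; exact (hf p hp).1
    · intro z hz
      obtain ⟨a, ha, b, hb, rfl⟩ := Finset.mem_add.1 hz
      have hp : (a, b) ∈ A ×ˢ B := Finset.mem_product.2 ⟨ha, hb⟩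
      exact Finset.mem_biUnion.2 ⟨_, hp, (hf _ hp).2.1⟩
  have := main (A ×ˢ B) (hA.product hB) (Finset.Subset.refl _)
  rwa [e] at this

lemma add_fs_st (C : Finset G) : C + fs (st C) = C := by
  apply Finset.Subset.antisymm
  · intro z hz
    obtain ⟨a, ha, k, hk, rfl⟩ := Finset.mem_add.1 hz
    rw [mem_fs, mem_st] at hk
    rw [add_comm]; exact (hk a).2 ha
  · intro z hz
    rw [← add_zero z]
    exact Finset.add_mem_add hz (by simp [AddSubgroup.zero_mem])

lemma fs_add_fs (K : AddSubgroup G) : fs K + fs K = fs K := by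
  ext z
  constructor
  · intro hz
    obtain ⟨a, ha, k, hk, rfl⟩ := Finset.mem_add.1 hz
    rw [mem_fs] at *
    exact K.add_mem ha hk
  · intro hz
    rw [← add_zero z]
    exact Finset.add_mem_add hz (by simp [AddSubgroup.zero_mem])

/-- Kneser's theorem. -/
lemma kneser (A B : Finset G) (hA : A.Nonempty) (hB : B.Nonempty) :
    (A + fs (st (A + B))).card + (B + fs (st (A + B))).card ≤
      (A + B).card + (fs (st (A + B))).card := by
  set K := st (A + B) with hK
  have hne : (fs K).Nonempty := Finset.card_pos.1 (fs_pos K)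
  have e : (A + fs K) + (B + fs K) = A + B := by
    rw [add_add_add_comm, fs_add_fs, hK, add_fs_st]
  have := kneser_weak (A + fs K) (B + fs K) (hA.add hne) (hB.add hne)
  rw [e] at this
  exact this

end TT

namespace TT
variable {Q : Type*} [AddCommGroup Q] [Fintype Q] [DecidableEq Q]

/-! ### Progressions -/

lemma core_ap (A : Finset Q) (x f : Q) (hf : f ∈ A) (hfx : f + x ∉ A)
    (hu : ∀ a ∈ A, a + x ∉ A → a = f) :
    ∃ k : ℕ, (∀ i < k, f - i • x ∈ A) ∧
      (∀ i < k, ∀ j < k, f - i • x = f - j • x → i = j) ∧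
      ∀ a ∈ A, (∃ i < k, a = f - i • x) ∨ ∀ g ∈ AddSubgroup.zmultiples x, a + g ∈ A := by
  have hex : ∃ k : ℕ, f - k • x ∉ A := by
    refine ⟨addOrderOf x - 1, ?_⟩
    have h1 : (addOrderOf x - 1) • x + x = 0 := by
      rw [← succ_nsmul, Nat.sub_add_cancel (addOrderOf_pos x), addOrderOf_nsmul_eq_zero]
    rw [eq_neg_of_add_eq_zero_left h1]
    simpa using hfx
  let k := Nat.find hex
  have hk : f - k • x ∉ A := Nat.find_spec hex
  have hkm : ∀ i < k, f - i • x ∈ A := fun i hi => not_not.1 (Nat.find_min hex hi)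
  have hinj : ∀ i < k, ∀ j < k, i < j → f - i • x ≠ f - j • x := by
    intro i hi j hj hij he
    obtain ⟨m, rfl⟩ : ∃ m, j = i + (m + 1) := ⟨j - i - 1, by omega⟩
    have h0 : (m + 1) • x = 0 := by
      rw [add_nsmul] at he
      have : i • x = i • x + (m+1) • x := sub_right_injective he
      simpa using this
    apply hfx
    have : f + x = f - m • x := by
      rw [succ_nsmul] at h0
      rw [eq_neg_of_add_eq_zero_left h0]; simp
    rw [this]
    exact hkm m (by omega)
  refine ⟨k, hkm, ?_, ?_⟩
  · intro i hi j hj he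
    rcases lt_trichotomy i j with h | h | h
    · exact absurd he (hinj i hi j hj h)
    · exact h
    · exact absurd he.symm (hinj j hj i hi h)
  · intro a ha
    by_cases hall : ∀ n : ℕ, a + n • x ∈ A
    · right
      intro g hg
      obtain ⟨n, hn⟩ := (mem_zmultiples_iff_mem_range_addOrderOf).1 hg |> Finset.mem_image.1
      rw [← hn.2]; exact hall n
    · left
      push Not at hall
      let n := Nat.find hall
      have hn : a + n • x ∉ A := Nat.find_spec hall
      have hnm : ∀ i < n, a + i • x ∈ A := fun i hi => not_not.1 (Nat.find_min hall hi)
      have hn0 : n ≠ 0 := by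
        intro h; rw [h] at hn; simp [ha] at hn
      obtain ⟨m, hm⟩ := Nat.exists_eq_succ_of_ne_zero hn0
      have e : a + m • x = f := by
        apply hu _ (hnm m (by omega))
        rw [add_assoc, ← succ_nsmul, ← Nat.succ_eq_add_one, ← hm]; exact hn
      refine ⟨m, ?_, by rw [← e]; simp⟩
      by_contra hmk
      push Not at hmk
      apply hk
      obtain ⟨l, rfl⟩ := Nat.exists_eq_add_of_le hmk
      rw [← e, show a + (k + l) • x - k • x = a + l • x by rw [add_nsmul]; abel]
      exact hnm l (by omega)

lemma ap_of_core (A : Finset Q) (x f : Q) (hf : f ∈ A) (hfx : f + x ∉ A)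
    (hu : ∀ a ∈ A, a + x ∉ A → a = f)
    (hno : ∀ a ∈ A, ¬ ∀ g ∈ AddSubgroup.zmultiples x, a + g ∈ A) : IsAPWith (-x) A := by
  obtain ⟨k, h1, h2, h3⟩ := core_ap A x f hf hfx hu
  have e : A = (Finset.range k).image (fun i => f + (i : ℕ) • (-x)) := by
    ext a
    simp only [Finset.mem_image, Finset.mem_range]
    constructor
    · intro ha
      rcases h3 a ha with ⟨i, hi, rfl⟩ | h
      · exact ⟨i, hi, by rw [smul_neg, sub_eq_add_neg]⟩
      · exact absurd h (hno a ha)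
    · rintro ⟨i, hi, rfl⟩
      have := h1 i hi
      rwa [smul_neg, ← sub_eq_add_neg]
  refine ⟨f, k, ?_, e⟩
  rw [e, Finset.card_image_of_injOn, Finset.card_range]
  intro i hi j hj hij
  simp only [Finset.coe_range, Set.mem_Iio] at hi hj
  apply h2 i hi j hj
  simpa [smul_neg, ← sub_eq_add_neg] using hij

lemma uniq_of_card (A : Finset Q) (x : Q) (h : (A + {0, x}).card ≤ A.card + 1) :
    ∀ a ∈ A, ∀ b ∈ A, a + x ∉ A → b + x ∉ A → a = b := by
  intro a ha b hb hax hbx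
  by_contra hab
  have hs : insert (a + x) (insert (b + x) A) ⊆ A + {0, x} := by
    intro z hz
    simp only [Finset.mem_insert] at hz
    rcases hz with rfl | rfl | hz
    · exact Finset.add_mem_add ha (by simp)
    · exact Finset.add_mem_add hb (by simp)
    · simpa using Finset.add_mem_add hz (show (0:Q) ∈ ({0, x} : Finset Q) by simp)
  have := Finset.card_le_card hs
  rw [Finset.card_insert_of_notMem (by simp [hab, hax]), Finset.card_insert_of_notMem hbx] at this
  omega

/-- no subgroup beats the trivial one -/
def NoSub (A : Finset Q) : Prop := ∀ K : AddSubgroup Q, K ≠ ⊥ → fs K + A ≠ Finset.univ →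
  (fs K).card + A.card ≤ (fs K + A).card

def Cauchy (A : Finset Q) : Prop := ∀ Z : Finset Q, Z.Nonempty → Z + A ≠ Finset.univ →
  Z.card + A.card ≤ (Z + A).card + 1

lemma card_coset (K : AddSubgroup Q) (f : Q) : ((fs K).image (f + ·)).card = (fs K).card :=
  Finset.card_image_of_injective _ (add_right_injective f)

lemma card_coset_sub (K : AddSubgroup Q) (f : Q) (A : Finset Q) (h : ∀ g ∈ K, f + g ∈ A) :
    (fs K).card ≤ A.card := by
  rw [← card_coset K f]
  apply Finset.card_le_card
  intro z hz
  obtain ⟨g, hg, rfl⟩ := Finset.mem_image.1 hz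
  exact h g (by simpa using hg)

lemma B1 (A : Finset Q) (hA : A.Nonempty) (hN : NoSub A) (hq : 2 * A.card ≤ Fintype.card Q) (x : Q)
    (hx : x ≠ 0) (h : (A + {0, x}).card ≤ A.card + 1) : IsAPWith (-x) A := by
  set L := AddSubgroup.zmultiples x with hL
  have hLb : L ≠ ⊥ := by
    rw [hL]; simpa using hx
  have hA0 := Finset.card_pos.2 hA
  have hLp := fs_pos L
  by_cases hex : ∃ f ∈ A, f + x ∉ A
  · obtain ⟨f, hf, hfx⟩ := hex
    have hu : ∀ a ∈ A, a + x ∉ A → a = f := fun a ha hax =>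
      uniq_of_card A x h a ha f hf hax hfx
    by_cases hno : ∀ a ∈ A, ¬ ∀ g ∈ AddSubgroup.zmultiples x, a + g ∈ A
    · exact ap_of_core A x f hf hfx hu hno
    · exfalso
      push Not at hno
      obtain ⟨a, ha, hag⟩ := hno
      have h1 := card_coset_sub L a A hag
      obtain ⟨k, hk1, hk2, hk3⟩ := core_ap A x f hf hfx hu
      have hsub : fs L + A ⊆ A.erase f ∪ (fs L).image (f + ·) := by
        intro z hz
        obtain ⟨g, hg, b, hb, rfl⟩ := Finset.mem_add.1 hz
        rw [mem_fs] at hg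
        rw [Finset.mem_union]
        by_cases hgb : g + b ∈ A.erase f
        · exact Or.inl hgb
        right
        rw [Finset.mem_image]
        rcases hk3 b hb with ⟨i, hi, rfl⟩ | h'
        · refine ⟨g - i • x, ?_, by abel⟩
          rw [mem_fs]
          exact L.sub_mem hg (L.nsmul_mem (AddSubgroup.mem_zmultiples x) i)
        · have : g + b = f := by
            by_contra hne
            exact hgb (Finset.mem_erase.2 ⟨hne, by rw [add_comm]; exact h' g hg⟩)
          exact ⟨0, by simp [L.zero_mem], by rw [this]; simp⟩
      have h2 := Finset.card_le_card hsub
      have h3 := Finset.card_union_le (A.erase f) ((fs L).image (f + ·))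
      rw [card_coset, Finset.card_erase_of_mem hf] at h3
      by_cases hU : fs L + A = Finset.univ
      · rw [hU, Finset.card_univ] at h2
        omega
      · have := hN L hLb hU
        omega
  · exfalso
    push Not at hex
    have h1 : ∀ n : ℕ, ∀ a ∈ A, a + n • x ∈ A := by
      intro n
      induction n with
      | zero => simp
      | succ n ih => intro a ha; rw [succ_nsmul, ← add_assoc]; exact hex _ (ih a ha)
    have hsub : fs L + A ⊆ A := by
      intro z hz
      obtain ⟨g, hg, b, hb, rfl⟩ := Finset.mem_add.1 hz
      rw [mem_fs] at hg
      obtain ⟨n, hn⟩ := (mem_zmultiples_iff_mem_range_addOrderOf).1 hg |> Finset.mem_image.1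
      rw [← hn.2, add_comm]; exact h1 n b hb
    have h2 := Finset.card_le_card hsub
    by_cases hU : fs L + A = Finset.univ
    · rw [hU, Finset.card_univ] at h2
      omega
    · have := hN L hLb hU
      omega

lemma grow (C : Finset Q) (d : Q) (hd : AddSubgroup.zmultiples d = ⊤) (hC : C.Nonempty)
    (hU : C ≠ Finset.univ) : C.card + 1 ≤ (C + {0, d}).card := by
  have hs : C ⊆ C + {0, d} := fun z hz => by
    simpa using Finset.add_mem_add hz (show (0:Q) ∈ ({0, d} : Finset Q) by simp)
  apply Finset.card_lt_card
  refine Finset.ssubset_iff_subset_ne.2 ⟨hs, fun he => hU ?_⟩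
  obtain ⟨c, hc⟩ := hC
  have h1 : ∀ n : ℕ, c + n • d ∈ C := by
    intro n
    induction n with
    | zero => simpa using hc
    | succ n ih =>
      rw [succ_nsmul, ← add_assoc, he]; exact Finset.add_mem_add ih (by simp)
  ext z
  simp only [Finset.mem_univ, iff_true]
  have : z - c ∈ AddSubgroup.zmultiples d := by rw [hd]; trivial
  obtain ⟨n, hn⟩ := (mem_zmultiples_iff_mem_range_addOrderOf).1 this |> Finset.mem_image.1
  have := h1 n
  rw [hn.2] at this
  simpa using this

/-- the progression `0, d, ..., n d` -/
def R (d : Q) (n : ℕ) : Finset Q := (Finset.range (n + 1)).image (fun i : ℕ => i • d)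

lemma R_succ (d : Q) (n : ℕ) : R d (n + 1) = R d n + {0, d} := by
  ext z
  simp only [R, Finset.mem_image, Finset.mem_range, Finset.mem_add, Finset.mem_insert,
    Finset.mem_singleton]
  constructor
  · rintro ⟨i, hi, rfl⟩
    rcases Nat.lt_or_ge i (n + 1) with h | h
    · exact ⟨i • d, ⟨i, h, rfl⟩, 0, Or.inl rfl, by simp⟩
    · obtain rfl : i = n + 1 := by omega
      exact ⟨n • d, ⟨n, by omega, rfl⟩, d, Or.inr rfl, by rw [succ_nsmul]⟩
  · rintro ⟨y, ⟨i, hi, rfl⟩, w, rfl | rfl, rfl⟩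
    · exact ⟨i, by omega, by simp⟩
    · exact ⟨i + 1, by omega, by rw [succ_nsmul]⟩

lemma R_grow (B : Finset Q) (d : Q) (hd : AddSubgroup.zmultiples d = ⊤) (hB : B.Nonempty) (n : ℕ)
    (hU : B + R d (n + 1) ≠ Finset.univ) :
    (B + {0, d}).card + n ≤ (B + R d (n + 1)).card := by
  induction n with
  | zero =>
    apply le_of_eq
    have e : R d (0 + 1) = {0, d} := by
      ext z; simp [R, Finset.range_add_one]
      tauto
    rw [e]; rfl
  | succ n ih =>
    have e : B + R d (n + 1 + 1) = (B + R d (n + 1)) + {0, d} := by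
      rw [R_succ d (n+1), add_assoc]
    have hU' : B + R d (n + 1) ≠ Finset.univ := by
      intro h
      apply hU
      rw [e, h]
      ext z
      simp only [Finset.mem_univ, iff_true]
      simpa using Finset.add_mem_add (Finset.mem_univ z) (show (0:Q) ∈ ({0, d} : Finset Q) by simp)
    have h1 := ih hU'
    have h2 := grow (B + R d (n + 1)) d hd (hB.add ⟨0, by simp [R]; exact ⟨0, by simp⟩⟩) hU'
    rw [e]; omega

lemma B2 (A B : Finset Q) (d : Q) (hA : IsAPWith d A) (h2 : 2 ≤ A.card) (hB : B.Nonempty)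
    (hd : AddSubgroup.zmultiples d = ⊤) (hU : A + B ≠ Finset.univ)
    (hc : (A + B).card + 1 ≤ A.card + B.card) : IsAPWith d B := by
  obtain ⟨a, k, hk, hAe⟩ := hA
  obtain ⟨n, rfl⟩ : ∃ n, k = n + 2 := ⟨k - 2, by omega⟩
  have e : A + B = (B + R d (n + 1)).image (a + ·) := by
    rw [hAe]
    ext z
    simp only [R, Finset.mem_image, Finset.mem_add, Finset.mem_range]
    constructor
    · rintro ⟨_, ⟨i, hi, rfl⟩, b, hb, rfl⟩
      exact ⟨b + i • d, ⟨b, hb, _, ⟨i, hi, rfl⟩, rfl⟩, by abel⟩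
    · rintro ⟨_, ⟨b, hb, _, ⟨i, hi, rfl⟩, rfl⟩, rfl⟩
      exact ⟨_, ⟨i, hi, rfl⟩, b, hb, by abel⟩
  have hU' : B + R d (n + 1) ≠ Finset.univ := by
    intro h
    apply hU
    rw [e, h]
    ext z
    simp only [Finset.mem_image, Finset.mem_univ, true_and, iff_true]
    exact ⟨-a + z, by simp⟩
  have h3 := R_grow B d hd hB n hU'
  have h4 : (A + B).card = (B + R d (n + 1)).card := by
    rw [e, Finset.card_image_of_injective _ (add_right_injective a)]
  have h5 : (B + {0, d}).card ≤ B.card + 1 := by omega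
  have h6 : (B + {0, -d}).card ≤ B.card + 1 := by
    have : B + {0, -d} = (B + {0, d}).image (-d + ·) := by
      ext z
      simp only [Finset.mem_image, Finset.mem_add, Finset.mem_insert, Finset.mem_singleton]
      constructor
      · rintro ⟨b, hb, w, rfl | rfl, rfl⟩
        · exact ⟨b + d, ⟨b, hb, d, Or.inr rfl, rfl⟩, by abel⟩
        · exact ⟨b, ⟨b, hb, 0, Or.inl rfl, by simp⟩, by abel⟩
      · rintro ⟨_, ⟨b, hb, w, rfl | rfl, rfl⟩, rfl⟩
        · exact ⟨b, hb, -d, Or.inr rfl, by abel⟩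
        · exact ⟨b, hb, 0, Or.inl rfl, by abel⟩
    rw [this, Finset.card_image_of_injective _ (add_right_injective _)]
    exact h5
  have hBU : B ≠ Finset.univ := by
    rintro rfl
    apply hU
    obtain ⟨y, hy⟩ := Finset.card_pos.1 (show 0 < A.card by omega)
    ext z
    simp only [Finset.mem_univ, iff_true]
    simpa using Finset.add_mem_add hy (Finset.mem_univ (-y + z))
  have hd' : AddSubgroup.zmultiples (-d) = ⊤ := by rw [AddSubgroup.zmultiples_neg, hd]
  have hno : ∀ a ∈ B, ¬ ∀ g ∈ AddSubgroup.zmultiples (-d), a + g ∈ B := by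
    intro b hb hall
    apply hBU
    ext z
    simp only [Finset.mem_univ, iff_true]
    simpa using hall (-b + z) (by rw [hd']; trivial)
  have h7 := grow B (-d) hd' hB hBU
  have hex : ∃ f ∈ B, f + -d ∉ B := by
    by_contra hcon
    push Not at hcon
    have : B + {0, -d} ⊆ B := by
      intro z hz
      obtain ⟨b, hb, w, hw, rfl⟩ := Finset.mem_add.1 hz
      simp only [Finset.mem_insert, Finset.mem_singleton] at hw
      rcases hw with rfl | rfl
      · simpa using hb
      · exact hcon b hb
    have := Finset.card_le_card this
    omega
  obtain ⟨f, hf, hfx⟩ := hex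
  have := ap_of_core B (-d) f hf hfx (fun a ha hax => uniq_of_card B (-d) h6 a ha f hf hax hfx) hno
  simpa using this

end TT

namespace TT
variable {Q : Type*} [AddCommGroup Q] [Fintype Q] [DecidableEq Q]

/-! ### A Vosper type theorem -/

/-- translate -/
def tr (x : Q) (Z : Finset Q) : Finset Q := Z.image (x + ·)

@[simp] lemma card_tr (x : Q) (Z : Finset Q) : (tr x Z).card = Z.card :=
  Finset.card_image_of_injective _ (add_right_injective x)

lemma mem_tr {x z : Q} {Z : Finset Q} : z ∈ tr x Z ↔ z - x ∈ Z := by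
  rw [tr, Finset.mem_image]
  constructor
  · rintro ⟨y, hy, rfl⟩; simpa using hy
  · intro h; exact ⟨_, h, by abel⟩

lemma tr_add (x : Q) (Z Y : Finset Q) : tr x Z + Y = tr x (Z + Y) := by
  ext w
  simp only [mem_tr, Finset.mem_add]
  constructor
  · rintro ⟨a, ha, b, hb, rfl⟩
    exact ⟨_, ha, b, hb, by abel⟩
  · rintro ⟨a, ha, b, hb, h⟩
    exact ⟨a + x, by simpa using ha, b, hb, by rw [add_right_comm, h]; abel⟩

lemma ne_univ_of_card {Z : Finset Q} {k : ℕ} (h : Z.card + (k + 1) ≤ Fintype.card Q) : Z ≠ Finset.univ := by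
  rintro rfl
  rw [Finset.card_univ] at h; omega

def Frag (Y Z : Finset Q) : Prop :=
  2 ≤ Z.card ∧ (Z + Y).card + 1 ≤ Z.card + Y.card ∧ (Z + Y).card + 2 ≤ Fintype.card Q

def Sidon (X : Finset Q) : Prop := ∀ x y, x ≠ y → (tr x X ∩ tr y X).card ≤ 1

lemma Frag.tr {Y Z : Finset Q} (h : Frag Y Z) (x : Q) : Frag Y (tr x Z) := by
  unfold Frag; rw [tr_add, card_tr, card_tr]; exact h

lemma tr_tr (x y : Q) (Z : Finset Q) : tr x (tr y Z) = tr (x + y) Z := by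
  ext z; simp only [mem_tr]; rw [show z - x - y = z - (x + y) by abel]

lemma Sidon.tr {X : Finset Q} (h : Sidon X) (x : Q) : Sidon (tr x X) := by
  intro a b hab
  rw [tr_tr, tr_tr]
  exact h _ _ (by simpa using hab)

lemma Frag.dual {Y Z : Finset Q} (h : Frag Y Z) :
    ∃ W, Frag Y W ∧ W.card + (Z + Y).card = Fintype.card Q := by
  obtain ⟨h1, h2, h3⟩ := h
  let W := ((Z + Y)ᶜ).image (fun x => -x)
  have hW : W.card = ((Z + Y)ᶜ).card := Finset.card_image_of_injective _ neg_injective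
  have hW2 := Finset.card_add_card_compl (Z + Y)
  have hsub : W + Y ⊆ (Zᶜ).image (fun x => -x) := by
    intro w hw
    obtain ⟨a, ha, y, hy, rfl⟩ := Finset.mem_add.1 hw
    obtain ⟨v, hv, rfl⟩ := Finset.mem_image.1 ha
    rw [Finset.mem_image]
    refine ⟨v - y, ?_, by abel⟩
    rw [Finset.mem_compl] at hv ⊢
    intro hvy
    exact hv (by simpa using Finset.add_mem_add hvy hy)
  have h4 := Finset.card_le_card hsub
  rw [Finset.card_image_of_injective _ neg_injective] at h4
  have h5 := Finset.card_add_card_compl Z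
  refine ⟨W, ⟨by omega, by omega, by omega⟩, by omega⟩

lemma exists_min_frag {Y Z : Finset Q} (h : Frag Y Z) :
    ∃ M, Frag Y M ∧ ∀ M', Frag Y M' → M.card ≤ M'.card := by
  obtain ⟨M, hM, hmin⟩ := Finset.exists_min_image (Finset.univ.filter (Frag Y)) Finset.card
    ⟨Z, by simpa using h⟩
  exact ⟨M, by simpa using hM, fun M' hM' => hmin M' (by simpa using hM')⟩

lemma min_inter {Y Z : Finset Q} (hY : Cauchy Y) (h : Frag Y Z)
    (hmin : ∀ M', Frag Y M' → Z.card ≤ M'.card) (x : Q) :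
    (Z ∩ tr x Z).card ≤ 1 ∨ tr x Z = Z := by
  by_contra hcon
  push Not at hcon
  obtain ⟨hc1, hc2⟩ := hcon
  obtain ⟨W, hW, hWc⟩ := h.dual
  have hWm := hmin W hW
  obtain ⟨h1, h2, h3⟩ := h
  have hZY : Z + Y ≠ Finset.univ := ne_univ_of_card h3
  have hC := hY Z (Finset.card_pos.1 (by omega)) hZY
  have hlt : (Z ∩ tr x Z).card < Z.card := by
    apply Finset.card_lt_card
    refine Finset.ssubset_iff_subset_ne.2 ⟨Finset.inter_subset_left, fun he => hc2 ?_⟩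
    rw [Finset.inter_eq_left] at he
    exact (Finset.eq_of_subset_of_card_le he (by simp)).symm
  have hI : (Z ∩ tr x Z) + Y ⊆ (Z + Y) ∩ tr x (Z + Y) := by
    rw [← tr_add]; exact Finset.inter_add_subset
  have hU : (Z ∪ tr x Z) + Y = (Z + Y) ∪ tr x (Z + Y) := by
    rw [← tr_add]; exact Finset.union_add
  have hI' := Finset.card_le_card hI
  have e1 := Finset.card_union_add_card_inter (Z + Y) (tr x (Z + Y))
  have e2 := Finset.card_union_add_card_inter Z (tr x Z)
  rw [card_tr] at e1 e2
  have hle : ((Z + Y) ∩ tr x (Z + Y)).card ≤ (Z + Y).card :=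
    Finset.card_le_card Finset.inter_subset_left
  have hnf : ¬ Frag Y (Z ∩ tr x Z) := fun hf => by have := hmin _ hf; omega
  have hIY : (Z ∩ tr x Z).card + Y.card ≤ ((Z ∩ tr x Z) + Y).card := by
    by_contra hh
    exact hnf ⟨by omega, by omega, by omega⟩
  have hUu : (Z ∪ tr x Z) + Y = Finset.univ := by
    by_contra hne
    have := hY _ (Finset.card_pos.1 (by omega)) hne
    rw [hU] at this
    omega
  rw [hU] at hUu
  rw [hUu, Finset.card_univ] at e1
  omega

lemma dichotomy {Y Z : Finset Q} (hY : Cauchy Y) (h : Frag Y Z)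
    (hmin : ∀ M', Frag Y M' → Z.card ≤ M'.card) :
    Sidon Z ∨ ∃ (K : AddSubgroup Q) (z : Q), K ≠ ⊥ ∧ Z = tr z (fs K) := by
  have key := min_inter hY h hmin
  by_cases hs : Sidon Z
  · exact Or.inl hs
  right
  unfold Sidon at hs
  push Not at hs
  obtain ⟨x, y, hxy, hc⟩ := hs
  have e : tr x Z ∩ tr y Z = tr x (Z ∩ tr (y - x) Z) := by
    ext z
    simp only [Finset.mem_inter, mem_tr]
    rw [show z - x - (y - x) = z - y by abel]
  rw [e, card_tr] at hc
  have hst : ∀ g, tr g Z = Z → g ∈ st Z := by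
    intro g hg
    rw [mem_st]; intro w
    conv_lhs => rw [← hg, mem_tr]
    simp
  have hK : y - x ∈ st Z := hst _ ((key (y - x)).resolve_left (by omega))
  have hyx : y - x ≠ 0 := sub_ne_zero.2 hxy.symm
  obtain ⟨z, hz⟩ := Finset.card_pos.1 (show 0 < Z.card by have := h.1; omega)
  refine ⟨st Z, z, ?_, ?_⟩
  · intro hb; rw [hb] at hK; exact hyx (by simpa using hK)
  · ext w
    rw [mem_tr, mem_fs]
    constructor
    · intro hw
      apply hst
      refine (key (w - z)).resolve_left ?_
      have h1 : w ∈ Z ∩ tr (w - z) Z := by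
        rw [Finset.mem_inter, mem_tr]; exact ⟨hw, by simpa using hz⟩
      have h2 : (y - x) + w ∈ Z ∩ tr (w - z) Z := by
        rw [Finset.mem_inter, mem_tr]
        refine ⟨(mem_st.1 hK w).2 hw, ?_⟩
        rw [show y - x + w - (w - z) = (y - x) + z by abel]
        exact (mem_st.1 hK z).2 hz
      have := Finset.one_lt_card.2 ⟨w, h1, _, h2, fun he => hyx (by simpa using he.symm)⟩
      omega
    · intro hw
      have := (mem_st.1 hw z).2 hz
      simpa using this

lemma sidon_two {X N : Finset Q} (hX : Sidon X) (hN : 2 ≤ N.card) :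
    2 * X.card ≤ (N + X).card + 1 := by
  obtain ⟨a, ha, b, hb, hab⟩ := Finset.one_lt_card.1 (show 1 < N.card by omega)
  have hs : tr a X ∪ tr b X ⊆ N + X := by
    intro z hz
    rw [Finset.mem_union, mem_tr, mem_tr] at hz
    rcases hz with hz | hz
    · simpa using Finset.add_mem_add ha hz
    · simpa using Finset.add_mem_add hb hz
  have h1 := Finset.card_le_card hs
  have h2 := Finset.card_union_add_card_inter (tr a X) (tr b X)
  have h3 := hX a b hab
  rw [card_tr, card_tr] at h2
  omega

lemma sidon_three {X N : Finset Q} (hX : Sidon X) (hN : 3 ≤ N.card) :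
    3 * X.card ≤ (N + X).card + 3 := by
  obtain ⟨a, b, c, ha, hb, hc, hab, hac, hbc⟩ := Finset.two_lt_card_iff.1 (show 2 < N.card by omega)
  have hs : (tr a X ∪ tr b X) ∪ tr c X ⊆ N + X := by
    intro z hz
    rw [Finset.mem_union, Finset.mem_union, mem_tr, mem_tr, mem_tr] at hz
    rcases hz with (hz | hz) | hz
    · simpa using Finset.add_mem_add ha hz
    · simpa using Finset.add_mem_add hb hz
    · simpa using Finset.add_mem_add hc hz
  have h1 := Finset.card_le_card hs
  have h2 := Finset.card_union_add_card_inter (tr a X) (tr b X)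
  have h2' := Finset.card_union_add_card_inter (tr a X ∪ tr b X) (tr c X)
  have h3 := hX a b hab
  have h4 := hX a c hac
  have h5 := hX b c hbc
  have h6 := Finset.card_union_le (tr a X ∩ tr c X) (tr b X ∩ tr c X)
  rw [← Finset.union_inter_distrib_right] at h6
  rw [card_tr, card_tr] at h2
  rw [card_tr] at h2'
  omega

lemma two_cosets (X : Finset Q) (h0 : 0 ∈ X) (K : AddSubgroup Q) (hX : ¬ ∀ x ∈ X, x ∈ K) :
    2 * (fs K).card ≤ (fs K + X).card := by
  push Not at hX
  obtain ⟨x, hx, hxK⟩ := hX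
  have hs : fs K ∪ tr x (fs K) ⊆ fs K + X := by
    intro z hz
    rw [Finset.mem_union, mem_tr] at hz
    rcases hz with hz | hz
    · simpa using Finset.add_mem_add hz h0
    · simpa using Finset.add_mem_add hz hx
  have hd : Disjoint (fs K) (tr x (fs K)) := by
    rw [Finset.disjoint_left]
    intro z hz hz'
    rw [mem_tr] at hz'
    rw [mem_fs] at hz hz'
    exact hxK (by simpa using K.sub_mem hz hz')
  have := Finset.card_le_card hs
  rw [Finset.card_union_of_disjoint hd, card_tr] at this
  omega

lemma two_le_fs {K : AddSubgroup Q} (h : K ≠ ⊥) : 2 ≤ (fs K).card := by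
  obtain ⟨⟨x, hx⟩, hx1⟩ := AddSubgroup.ne_bot_iff_exists_ne_zero.1 h
  have hx0 : x ≠ 0 := fun h => hx1 (Subtype.ext h)
  exact Finset.one_lt_card.2 ⟨x, by simpa using hx, 0, by simp [K.zero_mem], hx0⟩

lemma B3b {X : Finset Q} (hS : Sidon X) (h0 : 0 ∈ X) (K : AddSubgroup Q) (hK : K ≠ ⊥)
    (hX : ¬ ∀ x ∈ X, x ∈ K) : (fs K).card + X.card ≤ (fs K + X).card := by
  have h1 := two_cosets X h0 K hX
  have h2 := sidon_two hS (two_le_fs hK)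
  omega

lemma fs_bot : (fs (⊥ : AddSubgroup Q)) = {0} := by
  ext x; simp [AddSubgroup.mem_bot]

lemma B3c {X : Finset Q} (hS : Sidon X) (h0 : 0 ∈ X) (Z : Finset Q) (hZ : Z.Nonempty) :
    X.card + Z.card ≤ (X + Z).card + 1 ∨ AddSubgroup.closure (X : Set Q) ≤ st (X + Z) := by
  have hk := kneser X Z ⟨0, h0⟩ hZ
  set K := st (X + Z) with hKdef
  have hz0 : (0 : Q) ∈ fs K := by simp [K.zero_mem]
  have hZK : Z.card ≤ (Z + fs K).card := Finset.card_le_card (fun z hz => by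
    simpa using Finset.add_mem_add hz hz0)
  by_cases hK : K = ⊥
  · left
    have hXK : X.card ≤ (X + fs K).card := Finset.card_le_card (fun z hz => by
      simpa using Finset.add_mem_add hz hz0)
    have : (fs K).card = 1 := by rw [hK, fs_bot]; simp
    omega
  by_cases hX : ∀ x ∈ X, x ∈ K
  · right
    rw [AddSubgroup.closure_le]
    exact fun x hx => hX x hx
  · left
    have := B3b hS h0 K hK hX
    rw [add_comm] at this
    rw [add_comm (fs K) X] at this
    omega

lemma sub_half (L : AddSubgroup Q) (h : L ≠ ⊤) : 2 * (fs L).card ≤ Fintype.card Q := by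
  have hx : ∃ x, x ∉ L := by
    by_contra hh; push Not at hh; exact h (by ext x; simp [hh x])
  obtain ⟨x, hx⟩ := hx
  have hd : Disjoint (fs L) (tr x (fs L)) := by
    rw [Finset.disjoint_left]
    intro z hz hz'
    rw [mem_tr] at hz'
    rw [mem_fs] at hz hz'
    exact hx (by simpa using L.sub_mem hz hz')
  have := Finset.card_le_univ (fs L ∪ tr x (fs L))
  rw [Finset.card_union_of_disjoint hd, card_tr] at this
  omega

lemma B3L {A X : Finset Q} (hN : NoSub A) (hq : 2 * A.card ≤ Fintype.card Q)
    (hS : Sidon X) (h0 : 0 ∈ X) (hk : 3 ≤ X.card) (hF : Frag A X) :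
    AddSubgroup.closure (X : Set Q) = ⊤ := by
  obtain ⟨hF1, hF2, hF3⟩ := hF
  set L := AddSubgroup.closure (X : Set Q) with hL
  have hXL : ∀ x ∈ X, x ∈ L := fun x hx => AddSubgroup.subset_closure hx
  have hXLc : X.card ≤ (fs L).card := Finset.card_le_card fun x hx => by simpa using hXL x hx
  have hLb : L ≠ ⊥ := by
    intro hb
    rw [hb, fs_bot] at hXLc; simp at hXLc; omega
  by_contra hLt
  by_cases hall : ∀ a ∈ A, ∀ l ∈ L, l + a ∈ X + A
  · have hs : fs L + A ⊆ X + A := by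
      intro z hz
      obtain ⟨l, hl, a, ha, rfl⟩ := Finset.mem_add.1 hz
      exact hall a ha l (by simpa using hl)
    have h1 := Finset.card_le_card hs
    have h2 := hN L hLb (ne_univ_of_card (k := 1) (by omega))
    omega
  · push Not at hall
    obtain ⟨n, hn, l, hl, hln⟩ := hall
    set An := A.filter (fun a => a - n ∈ L) with hAn
    set Ar := A.filter (fun a => ¬ (a - n ∈ L)) with hAr
    have hsplit : An.card + Ar.card = A.card := Finset.card_filter_add_card_filter_not _
    have hnA : n ∈ An := by simp [hAn, hn, L.zero_mem]
    have h1 : X.card + An.card ≤ (X + An).card + 1 := by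
      refine (B3c hS h0 An ⟨n, hnA⟩).resolve_right fun hle => hln ?_
      have h2 : n ∈ X + An := by simpa using Finset.add_mem_add h0 hnA
      have h3 := (mem_st.1 (hle hl) n).2 h2
      exact Finset.add_subset_add_left (Finset.filter_subset _ _) h3
    have hdis : Disjoint (X + An) (X + Ar) := by
      rw [Finset.disjoint_left]
      intro z hz hz'
      obtain ⟨x, hx, a, ha, rfl⟩ := Finset.mem_add.1 hz
      obtain ⟨x', hx', a', ha', he⟩ := Finset.mem_add.1 hz'
      rw [hAn, Finset.mem_filter] at ha
      rw [hAr, Finset.mem_filter] at ha'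
      apply ha'.2
      have : a' - n = (a - n) + x - x' := by
        have : a' = x + a - x' := by rw [← he]; abel
        rw [this]; abel
      rw [this]
      exact L.sub_mem (L.add_mem ha.2 (hXL x hx)) (hXL x' hx')
    have hun : (X + An) ∪ (X + Ar) ⊆ X + A :=
      Finset.union_subset (Finset.add_subset_add_left (Finset.filter_subset _ _))
        (Finset.add_subset_add_left (Finset.filter_subset _ _))
    have h2 := Finset.card_le_card hun
    rw [Finset.card_union_of_disjoint hdis] at h2
    have hsubAr : Ar ⊆ X + Ar := fun z hz => by simpa using Finset.add_mem_add h0 hz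
    have heq : Ar = X + Ar := Finset.eq_of_subset_of_card_le hsubAr (by omega)
    have hle : L ≤ st Ar := by
      rw [hL, AddSubgroup.closure_le]
      intro x hx
      have himg : tr x Ar ⊆ Ar := by
        intro z hz
        rw [mem_tr] at hz
        rw [heq]
        simpa using Finset.add_mem_add hx hz
      have he2 := Finset.eq_of_subset_of_card_le himg (by simp)
      change x ∈ st Ar
      rw [mem_st]
      intro w
      conv_lhs => rw [← he2, mem_tr]
      simp
    have hs : fs L + A ⊆ Ar ∪ tr n (fs L) := by
      intro z hz
      obtain ⟨l, hl, a, ha, rfl⟩ := Finset.mem_add.1 hz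
      rw [mem_fs] at hl
      rw [Finset.mem_union, mem_tr, mem_fs]
      by_cases han : a - n ∈ L
      · right; rw [add_sub_assoc]; exact L.add_mem hl han
      · left
        exact (mem_st.1 (hle hl) a).2 (by simp [hAr, ha, han])
    have h3 := Finset.card_le_card hs
    have h4 := Finset.card_union_le Ar (tr n (fs L))
    rw [card_tr] at h4
    have hAnp : 0 < An.card := Finset.card_pos.2 ⟨n, hnA⟩
    have h5 := sub_half L hLt
    by_cases hU : fs L + A = Finset.univ
    · rw [hU, Finset.card_univ] at h3; omega
    · have := hN L hLb hU
      omega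

lemma B3 (A B : Finset Q) (hC : Cauchy A) (hN : NoSub A) (hq : 2 * A.card ≤ Fintype.card Q)
    (h2 : 2 ≤ A.card) (hF : Frag A B) : ∃ x, x ≠ 0 ∧ (A + {0, x}).card ≤ A.card + 1 := by
  obtain ⟨X', hX', hmin⟩ := exists_min_frag hF
  have hsid := dichotomy hC hX' hmin
  rcases hsid with hsid | ⟨K, z, hK, hXK⟩
  swap
  · exfalso
    obtain ⟨f1, f2, f3⟩ := hX'
    rw [hXK, tr_add, card_tr] at f2 f3
    rw [card_tr] at f2
    have := hN K hK (ne_univ_of_card f3)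
    omega
  obtain ⟨x0, hx0⟩ := Finset.card_pos.1 (show 0 < X'.card by have := hX'.1; omega)
  have hX2 := hX'.tr (-x0)
  have hS := hsid.tr (-x0)
  have h0 : (0 : Q) ∈ tr (-x0) X' := by rw [mem_tr]; simpa using hx0
  generalize tr (-x0) X' = X at hX2 hS h0
  by_cases hk : X.card ≤ 2
  · have hXc : X.card = 2 := le_antisymm hk hX2.1
    obtain ⟨x, hx, hxn⟩ := Finset.exists_mem_ne (show 1 < X.card by omega) 0
    refine ⟨x, hxn, ?_⟩
    have e : ({0, x} : Finset Q) = X := Finset.eq_of_subset_of_card_le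
      (by intro w hw; simp at hw; rcases hw with rfl | rfl <;> assumption)
      (by rw [Finset.card_pair hxn.symm, hXc])
    rw [e, add_comm]
    have := hX2.2.1
    omega
  exfalso
  push Not at hk
  have hLt := B3L hN hq hS h0 hk hX2
  have hXC : Cauchy X := by
    intro Z hZ hU
    rcases B3c hS h0 Z hZ with h | h
    · rw [add_comm Z X]; omega
    · exfalso
      apply hU
      rw [hLt] at h
      obtain ⟨z, hz⟩ := hZ
      ext w
      simp only [Finset.mem_univ, iff_true]
      rw [add_comm]
      have h1 : z ∈ X + Z := by simpa using Finset.add_mem_add h0 hz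
      have := (mem_st.1 (h (show w - z ∈ (⊤ : AddSubgroup Q) from trivial)) z).2 h1
      simpa using this
  have hFA : Frag X A := ⟨h2, by have := hX2.2.1; rw [add_comm A X]; omega, by
    rw [add_comm A X]; exact hX2.2.2⟩
  obtain ⟨N, hNF, hNmin⟩ := exists_min_frag hFA
  rcases dichotomy hXC hNF hNmin with hNs | ⟨K, z, hK, hNK⟩
  · have a1 := sidon_two hS hNF.1
    have a2 := hNF.2.1
    have a3 := sidon_three hS (show 3 ≤ N.card by have := hNF.1; omega)
    have a4 := sidon_three hNs hk
    rw [add_comm X N] at a4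
    omega
  · obtain ⟨f1, f2, f3⟩ := hNF
    rw [hNK, tr_add, card_tr] at f2 f3
    rw [card_tr] at f2
    by_cases hXK : ∀ x ∈ X, x ∈ K
    · have : K = ⊤ := by
        rw [eq_top_iff, ← hLt, AddSubgroup.closure_le]
        exact fun x hx => hXK x hx
      apply ne_univ_of_card f3
      ext w
      simp only [Finset.mem_univ, iff_true]
      simpa using Finset.add_mem_add (show w ∈ fs K by rw [this]; simp) h0
    · have := B3b hS h0 K hK hXK
      omega

end TT

namespace TT

/-! ### The numerical part for two progressions -/

lemma row_sum (d e : ℕ → ℤ) (i w v : ℕ) :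
    ∑ k ∈ Finset.range (i + w + v + 1),
      (if k < i then d k else if k ≤ i + v then e (k - i) else d (k - v)) + d i =
    ∑ k ∈ Finset.range (i + w + 1), d k + ∑ k ∈ Finset.range (v + 1), e k := by
  rw [show i + w + v + 1 = i + (v + 1) + w by ring, show i + w + 1 = i + 1 + w by ring,
    Finset.sum_range_add, Finset.sum_range_add, Finset.sum_range_add _ (i + 1) w,
    Finset.sum_range_succ d i]
  have h1 : ∑ k ∈ Finset.range i,
      (if k < i then d k else if k ≤ i + v then e (k - i) else d (k - v)) =
      ∑ k ∈ Finset.range i, d k :=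
    Finset.sum_congr rfl fun k hk => by rw [if_pos (Finset.mem_range.1 hk)]
  have h2 : ∑ k ∈ Finset.range (v + 1),
      (if i + k < i then d (i + k) else if i + k ≤ i + v then e (i + k - i) else d (i + k - v)) =
      ∑ k ∈ Finset.range (v + 1), e k :=
    Finset.sum_congr rfl fun k hk => by
      have := Finset.mem_range.1 hk
      rw [if_neg (by omega), if_pos (by omega)]
      congr 1; omega
  have h3 : ∑ k ∈ Finset.range w,
      (if i + (v + 1) + k < i then d (i + (v + 1) + k) else if i + (v + 1) + k ≤ i + v then
        e (i + (v + 1) + k - i) else d (i + (v + 1) + k - v)) =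
      ∑ k ∈ Finset.range w, d (i + 1 + k) :=
    Finset.sum_congr rfl fun k hk => by
      rw [if_neg (by omega), if_neg (by omega)]
      congr 1; omega
  rw [h1, h2, h3]; ring

structure Seq (h u v : ℕ) (s t x : ℕ → ℕ) : Prop where
  hu : 1 ≤ u
  hv : 1 ≤ v
  hs : ∀ i ≤ u, s i ≤ h
  ht : ∀ i ≤ v, t i ≤ h
  hx : ∀ i, x i ≤ h
  P2s : ∀ i ≤ u, ∀ j ≤ v, s i ≤ x (i + j)
  P2t : ∀ i ≤ u, ∀ j ≤ v, t j ≤ x (i + j)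
  P3 : ∀ i ≤ u, ∀ j ≤ v, h < s i + t j → x (i + j) = h
  P4 : ∀ i ≤ u, ∀ j ≤ v, h < 2 * s i → x (i + j) < h → s i + 2 * t j ≤ 2 * x (i + j)
  P5 : ∑ k ∈ Finset.range (u + v + 1), x k + 1 =
    ∑ k ∈ Finset.range (u + 1), s k + ∑ k ∈ Finset.range (v + 1), t k
  hd : u * h + 1 ≤ ∑ k ∈ Finset.range (u + 1), s k

variable {h u v : ℕ} {s t x : ℕ → ℕ}

lemma Seq.refl (S : Seq h u v s t x) :
    Seq h u v (fun i => s (u - i)) (fun i => t (v - i)) (fun i => x (u + v - i)) where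
  hu := S.hu
  hv := S.hv
  hs i _ := S.hs _ (by omega)
  ht i _ := S.ht _ (by omega)
  hx i := S.hx _
  P2s i hi j hj := by
    have := S.P2s (u - i) (by omega) (v - j) (by omega)
    rwa [show u - i + (v - j) = u + v - (i + j) by omega] at this
  P2t i hi j hj := by
    have := S.P2t (u - i) (by omega) (v - j) (by omega)
    rwa [show u - i + (v - j) = u + v - (i + j) by omega] at this
  P3 i hi j hj := by
    have := S.P3 (u - i) (by omega) (v - j) (by omega)
    rwa [show u - i + (v - j) = u + v - (i + j) by omega] at this
  P4 i hi j hj := by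
    have := S.P4 (u - i) (by omega) (v - j) (by omega)
    rwa [show u - i + (v - j) = u + v - (i + j) by omega] at this
  P5 := by
    have h1 := Finset.sum_range_reflect x (u + v + 1)
    have h2 := Finset.sum_range_reflect s (u + 1)
    have h3 := Finset.sum_range_reflect t (v + 1)
    simp only [Nat.add_sub_cancel] at h1 h2 h3
    rw [h1, h2, h3]; exact S.P5
  hd := by
    have h2 := Finset.sum_range_reflect s (u + 1)
    simp only [Nat.add_sub_cancel] at h2
    rw [h2]; exact S.hd

lemma Seq.total (S : Seq h u v s t x) :
    ∑ k ∈ Finset.range (u + v + 1), ((h : ℤ) - x k) + h =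
      ∑ k ∈ Finset.range (u + 1), ((h : ℤ) - s k) + ∑ k ∈ Finset.range (v + 1), ((h : ℤ) - t k) + 1 := by
  have h5 : ((∑ k ∈ Finset.range (u + v + 1), x k + 1 : ℕ) : ℤ) =
    ((∑ k ∈ Finset.range (u + 1), s k + ∑ k ∈ Finset.range (v + 1), t k : ℕ) : ℤ) := by rw [S.P5]
  push_cast at h5
  simp only [Finset.sum_sub_distrib, Finset.sum_const, Finset.card_range, nsmul_eq_mul]
  push_cast
  linarith

/-- row bounds -/
noncomputable def row (h v i : ℕ) (s t : ℕ → ℕ) (k : ℕ) : ℤ :=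
  if k < i then (h : ℤ) - s k else if k ≤ i + v then (h : ℤ) - t (k - i) else (h : ℤ) - s (k - v)

lemma Seq.row_le (S : Seq h u v s t x) (i : ℕ) (hi : i ≤ u) (k : ℕ) (hk : k ≤ u + v) :
    (h : ℤ) - x k ≤ row h v i s t k := by
  unfold row
  split_ifs with h1 h2
  · have := S.P2s k (by omega) 0 (by omega)
    simp only [add_zero] at this; omega
  · have := S.P2t i hi (k - i) (by omega)
    rw [show i + (k - i) = k by omega] at this; omega
  · have := S.P2s (k - v) (by omega) v le_rfl
    rw [show k - v + v = k by omega] at this; omega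

lemma Seq.row_tot (S : Seq h u v s t x) (i : ℕ) (hi : i ≤ u) :
    ∑ k ∈ Finset.range (u + v + 1), row h v i s t k + 1 =
      ∑ k ∈ Finset.range (u + v + 1), ((h : ℤ) - x k) + s i := by
  obtain ⟨w, rfl⟩ := Nat.exists_eq_add_of_le hi
  have := row_sum (fun k => (h : ℤ) - s k) (fun k => (h : ℤ) - t k) i w v
  have h2 := S.total
  unfold row
  linarith

lemma Seq.C1 (S : Seq h u v s t x) (c : ℕ) (hc : c < u + v) (hcn : x c < h) (c0 : ℕ) (hc0 : c0 < c) :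
    x c0 < h := by
  by_contra hcon
  have hfull : x c0 = h := le_antisymm (S.hx _) (not_lt.1 hcon)
  obtain ⟨i, j, hi, hj, hij⟩ : ∃ i j, i < u ∧ j ≤ v ∧ i + j = c := by
    have := S.hu
    by_cases h : c ≤ u - 1
    · exact ⟨c, 0, by omega, by omega, by omega⟩
    · exact ⟨u - 1, c - (u - 1), by omega, by omega, by omega⟩
  have hst : s i + t j ≤ h := by
    by_contra hh
    have := S.P3 i hi.le j hj (by omega)
    rw [hij] at this; omega
  have hshift : ∀ k, k < c → (h : ℤ) - x (k + 1) ≤ row h v i s t k := by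
    intro k hk
    unfold row
    have := S.hv
    split_ifs with h1 h2
    · have := S.P2s k (by omega) 1 (by omega)
      omega
    · have := S.P2t (i + 1) hi (k - i) (by omega)
      rw [show i + 1 + (k - i) = k + 1 by omega] at this; omega
    · omega
  have hle := S.row_le i hi.le
  have htot := S.row_tot i hi.le
  have hrc : row h v i s t c = (h : ℤ) - t j := by
    unfold row
    rw [if_neg (by omega), if_pos (by omega)]
    rw [show c - i = j by omega]
  obtain ⟨m, rfl⟩ : ∃ m, c = c0 + m + 1 := ⟨c - c0 - 1, by omega⟩
  obtain ⟨p, hp⟩ : ∃ p, u + v + 1 = c0 + (m + 2) + p := ⟨u + v + 1 - (c0 + (m + 2)), by omega⟩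
  rw [hp, Finset.sum_range_add, Finset.sum_range_add, Finset.sum_range_add _ (c0 + (m+2)),
    Finset.sum_range_add _ c0, Finset.sum_range_succ _ (m + 1), Finset.sum_range_succ' _ (m+1)] at htot
  have i1 : ∑ k ∈ Finset.range c0, ((h : ℤ) - x k) ≤ ∑ k ∈ Finset.range c0, row h v i s t k :=
    Finset.sum_le_sum fun k hk => hle k (by have := Finset.mem_range.1 hk; omega)
  have i2 : ∑ k ∈ Finset.range p, ((h : ℤ) - x (c0 + (m+2) + k)) ≤
      ∑ k ∈ Finset.range p, row h v i s t (c0 + (m + 2) + k) :=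
    Finset.sum_le_sum fun k hk => hle _ (by have := Finset.mem_range.1 hk; omega)
  have i3 : ∑ k ∈ Finset.range (m + 1), ((h : ℤ) - x (c0 + (k + 1))) ≤
      ∑ k ∈ Finset.range (m + 1), row h v i s t (c0 + k) :=
    Finset.sum_le_sum fun k hk => hshift (c0 + k) (by have := Finset.mem_range.1 hk; omega)
  rw [show c0 + (m + 1) = c0 + m + 1 by ring, hrc] at htot
  simp only [add_zero, hfull] at htot
  omega

lemma Seq.C1' (S : Seq h u v s t x) (c : ℕ) (hc : 0 < c) (hc' : c ≤ u + v) (hcn : x c < h) (c0 : ℕ)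
    (hc0 : c < c0) (hc0' : c0 ≤ u + v) : x c0 < h := by
  have := S.refl.C1 (u + v - c) (by omega) (by
    rw [show u + v - (u + v - c) = c by omega]; exact hcn) (u + v - c0) (by omega)
  rwa [show u + v - (u + v - c0) = c0 by omega] at this

lemma Seq.C2 (S : Seq h u v s t x) : ∃ k ≤ u + v, x k = h := by
  by_contra hcon
  push Not at hcon
  have hnf : ∀ k ≤ u + v, x k < h := fun k hk => lt_of_le_of_ne (S.hx k) (hcon k hk)
  have hu := S.hu
  have hv := S.hv
  have h01 : h < s 0 + s 1 := by
    obtain ⟨w, rfl⟩ := Nat.exists_eq_add_of_le hu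
    have h1 := S.hd
    rw [show 1 + w + 1 = 2 + w by ring, Finset.sum_range_add, Finset.sum_range_succ,
      Finset.sum_range_one] at h1
    have h2 : ∑ k ∈ Finset.range w, s (2 + k) ≤ ∑ k ∈ Finset.range w, h :=
      Finset.sum_le_sum fun k hk => S.hs _ (by have := Finset.mem_range.1 hk; omega)
    simp only [Finset.sum_const, Finset.card_range, smul_eq_mul] at h2
    have : (1 + w) * h = h + w * h := by ring
    omega
  obtain ⟨i, hi1, hi2⟩ : ∃ i, i ≤ 1 ∧ h < 2 * s i := by
    by_cases h0 : h < 2 * s 0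
    · exact ⟨0, by omega, h0⟩
    · exact ⟨1, by omega, by omega⟩
  have hiu : i ≤ u := by omega
  have htot := S.row_tot i hiu
  have hle := S.row_le i hiu
  have g0 := S.P4 i hiu 0 (by omega) hi2 (hnf _ (by omega))
  have g1 := S.P4 i hiu 1 (by omega) hi2 (hnf _ (by omega))
  have r0 : row h v i s t i = (h : ℤ) - t 0 := by
    unfold row; rw [if_neg (by omega), if_pos (by omega), Nat.sub_self]
  have r1 : row h v i s t (i + 1) = (h : ℤ) - t 1 := by
    unfold row; rw [if_neg (by omega), if_pos (by omega), Nat.add_sub_cancel_left]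
  obtain ⟨p, hp⟩ : ∃ p, u + v + 1 = i + 2 + p := ⟨u + v + 1 - (i + 2), by omega⟩
  have hsp : ∀ f : ℕ → ℤ, ∑ k ∈ Finset.range (i + 2 + p), f k =
      ∑ k ∈ Finset.range i, f k + f i + f (i + 1) + ∑ k ∈ Finset.range p, f (i + 2 + k) := by
    intro f
    rw [Finset.sum_range_add, Finset.sum_range_succ, Finset.sum_range_succ]
  rw [hp, hsp, hsp, r0, r1] at htot
  have i1 : ∑ k ∈ Finset.range i, ((h : ℤ) - x k) ≤ ∑ k ∈ Finset.range i, row h v i s t k :=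
    Finset.sum_le_sum fun k hk => hle k (by have := Finset.mem_range.1 hk; omega)
  have i2 : ∑ k ∈ Finset.range p, ((h : ℤ) - x (i + 2 + k)) ≤
      ∑ k ∈ Finset.range p, row h v i s t (i + 2 + k) :=
    Finset.sum_le_sum fun k hk => hle _ (by have := Finset.mem_range.1 hk; omega)
  simp only [add_zero] at g0
  omega

lemma Seq.main (S : Seq h u v s t x) :
    (∀ k, 0 < k → k ≤ u + v → x k = h) ∨ (∀ k, k < u + v → x k = h) := by
  have hu := S.hu
  have hv := S.hv
  have hint : ∀ k, 0 < k → k < u + v → x k = h := by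
    intro k hk hk'
    by_contra hne
    have hlt := lt_of_le_of_ne (S.hx k) hne
    obtain ⟨k', hk1, hk2⟩ := S.C2
    rcases lt_trichotomy k' k with hh | hh | hh
    · have := S.C1 k hk' hlt k' hh; omega
    · rw [hh] at hk2; omega
    · have := S.C1' k hk hk'.le hlt k' hh hk1; omega
  by_cases hb : x (u + v) = h
  · left
    intro k h1 h2
    rcases Nat.lt_or_ge k (u + v) with h3 | h3
    · exact hint k h1 h3
    · rw [show k = u + v by omega]; exact hb
  right
  intro k hk
  rcases Nat.eq_zero_or_pos k with rfl | h1
  swap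
  · exact hint k h1 hk
  by_contra ha
  have q1 : s 0 + t 0 ≤ h := by
    by_contra hh; exact ha (S.P3 0 (by omega) 0 (by omega) (by omega))
  have q2 : s u + t v ≤ h := by
    by_contra hh; exact hb (S.P3 u (by omega) v (by omega) (by omega))
  have p1 := S.P2s 0 (by omega) 0 (by omega)
  have p2 := S.P2t 0 (by omega) 0 (by omega)
  have p3 := S.P2s u (by omega) v (by omega)
  have p4 := S.P2t u (by omega) v (by omega)
  have htot := S.total
  obtain ⟨u, rfl⟩ := Nat.exists_eq_add_of_le' hu
  obtain ⟨v, rfl⟩ := Nat.exists_eq_add_of_le' hv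
  have e : u + 1 + (v + 1) + 1 = (u + v + 1) + 1 + 1 := by ring
  rw [e, Finset.sum_range_succ, Finset.sum_range_succ', Finset.sum_range_succ (n := u + 1),
    Finset.sum_range_succ' (n := u), Finset.sum_range_succ (n := v + 1),
    Finset.sum_range_succ' (n := v)] at htot
  have z1 : ∑ k ∈ Finset.range (u + v + 1), ((h : ℤ) - x (k + 1)) = 0 :=
    Finset.sum_eq_zero fun k hk => by
      have := Finset.mem_range.1 hk
      rw [hint (k + 1) (by omega) (by omega)]; simp
  have z2 : 0 ≤ ∑ k ∈ Finset.range u, ((h : ℤ) - s (k + 1)) :=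
    Finset.sum_nonneg fun k hk => by
      have := Finset.mem_range.1 hk
      have := S.hs (k + 1) (by omega)
      omega
  have z3 : 0 ≤ ∑ k ∈ Finset.range v, ((h : ℤ) - t (k + 1)) :=
    Finset.sum_nonneg fun k hk => by
      have := Finset.mem_range.1 hk
      have := S.ht (k + 1) (by omega)
      omega
  rw [show u + v + 1 + 1 = u + 1 + (v + 1) by ring] at htot
  simp only [add_zero] at *
  omega

end TT

namespace TT
variable {Q : Type*} [AddCommGroup Q] [Fintype Q] [DecidableEq Q]

/-! ### Coset configurations -/

/-- support -/
def sp (f : Q → ℕ) : Finset Q := Finset.univ.filter (fun a => 0 < f a)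

@[simp] lemma mem_sp {f : Q → ℕ} {a : Q} : a ∈ sp f ↔ 0 < f a := by simp [sp]

lemma sum_sp (f : Q → ℕ) : ∑ a ∈ sp f, f a = ∑ a, f a :=
  Finset.sum_subset (Finset.subset_univ _) fun a _ ha => by simpa using ha

structure Cfg (h : ℕ) (s t x : Q → ℕ) : Prop where
  hpos : 0 < h
  s_le : ∀ a, s a ≤ h
  t_le : ∀ a, t a ≤ h
  x_le : ∀ a, x a ≤ h
  P2s : ∀ a b, 0 < s a → 0 < t b → s a ≤ x (a + b)
  P2t : ∀ a b, 0 < s a → 0 < t b → t b ≤ x (a + b)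
  P3 : ∀ a b, 0 < s a → 0 < t b → h < s a + t b → x (a + b) = h
  P4a : ∀ a b, h < 2 * s a → 0 < t b → x (a + b) < h → h + 3 * t b ≤ 3 * x (a + b)
  P4b : ∀ a b, h < 2 * s a → 0 < t b → x (a + b) < h → s a + 2 * t b ≤ 2 * x (a + b)
  P5 : ∑ c, x c + 1 = ∑ a, s a + ∑ b, t b
  supp : ∀ c, 0 < x c → ∃ a b, 0 < s a ∧ 0 < t b ∧ a + b = c
  bound : 3 * ∑ c, x c ≤ 2 * (Fintype.card Q * h) + 2
  hd : (sp s).card * h + 1 ≤ ∑ a, s a + h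
  hst : ∑ a, s a ≤ ∑ b, t b
  two : 2 ≤ (sp s).card
  cau : Cauchy (sp s)
  hq : 3 * (sp s).card ≤ Fintype.card Q + 2

variable {h : ℕ} {s t x : Q → ℕ}

lemma Cfg.dsub (S : Cfg h s t x) (I : Finset Q) (hI : I ⊆ sp s) :
    I.card * h + 1 ≤ ∑ a ∈ I, s a + h := by
  have h1 := Finset.sum_sdiff (f := s) hI
  have h2 := Finset.card_sdiff_add_card_eq_card hI
  have h3 : ∑ a ∈ sp s \ I, s a ≤ (sp s \ I).card * h := by
    have := Finset.sum_le_card_nsmul (sp s \ I) s h (fun a _ => S.s_le a)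
    simpa using this
  rw [sum_sp] at h1
  have h4 := S.hd
  rw [← h2] at h4
  have : ((sp s \ I).card + I.card) * h = (sp s \ I).card * h + I.card * h := by ring
  omega

lemma Cfg.pair (S : Cfg h s t x) {a b : Q} (ha : 0 < s a) (hb : 0 < s b) (hab : a ≠ b) :
    h < s a + s b := by
  have := S.dsub {a, b} (by intro c hc; simp at hc; rcases hc with rfl | rfl <;> simpa)
  rw [Finset.card_pair hab, Finset.sum_pair hab] at this
  omega

lemma Cfg.q4 (S : Cfg h s t x) : 4 ≤ Fintype.card Q := by
  have := S.two; have := S.hq; omega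

lemma Cfg.add_pos (S : Cfg h s t x) {a b : Q} (ha : 0 < s a) (hb : 0 < t b) : 0 < x (a + b) :=
  ha.trans_le (S.P2s a b ha hb)

lemma Cfg.sp_x (S : Cfg h s t x) : sp x = sp s + sp t := by
  ext c
  rw [mem_sp, Finset.mem_add]
  constructor
  · intro hc
    obtain ⟨a, b, ha, hb, rfl⟩ := S.supp c hc
    exact ⟨a, by simpa, b, by simpa, rfl⟩
  · rintro ⟨a, ha, b, hb, rfl⟩
    exact S.add_pos (by simpa using ha) (by simpa using hb)

lemma Cfg.t_card (S : Cfg h s t x) : (sp s).card ≤ (sp t).card := by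
  by_contra hcon
  have h1 : ∑ b ∈ sp t, t b ≤ (sp t).card * h := by
    have := Finset.sum_le_card_nsmul (sp t) t h (fun a _ => S.t_le a)
    simpa using this
  rw [sum_sp] at h1
  have h2 := S.hd
  have h3 := S.hst
  have h4 : ((sp t).card + 1) * h ≤ (sp s).card * h := Nat.mul_le_mul_right _ (by omega)
  have h5 : ((sp t).card + 1) * h = (sp t).card * h + h := by ring
  omega

lemma Cfg.claim (S : Cfg h s t x) : (sp s + sp t).card + 1 ≤ (sp s).card + (sp t).card := by
  by_contra hcon
  push Not at hcon
  set A := sp s with hA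
  set B := sp t with hB
  have hAne : A.Nonempty := Finset.card_pos.1 (by have : 2 ≤ A.card := S.two; omega)
  have hBc := S.t_card
  rw [← hA, ← hB] at hBc
  have hA2 := S.two
  rw [← hA] at hA2
  have hBne : B.Nonempty := Finset.card_pos.1 (by omega)
  obtain ⟨a1, ha1, hmin⟩ := Finset.exists_min_image A s hAne
  have ha1p : 0 < s a1 := by simpa [hA] using ha1
  have ha1h := S.s_le a1
  obtain ⟨g, hg⟩ : ∃ g, g + s a1 = h + 1 := ⟨h + 1 - s a1, by omega⟩
  have hg1 : 1 ≤ g := by omega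
  have hgh : g ≤ h := by omega
  set A' := A.erase a1 with hA'
  have hA'c : A'.card + 1 = A.card := Finset.card_erase_add_one ha1
  have hsA' : ∀ a ∈ A', g ≤ s a ∧ 0 < s a ∧ a ∈ A := by
    intro a ha
    obtain ⟨hne, haA⟩ := Finset.mem_erase.1 ha
    have hap : 0 < s a := by simpa [hA] using haA
    have := S.pair hap ha1p hne
    exact ⟨by omega, hap, haA⟩
  set E := B.filter (fun b => g ≤ t b) with hE
  set F := B.filter (fun b => ¬ g ≤ t b) with hF
  have hEF : E.card + F.card = B.card := Finset.card_filter_add_card_filter_not _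
  have htEF : ∑ b ∈ E, t b + ∑ b ∈ F, t b = ∑ b, t b := by
    rw [← sum_sp t]; exact Finset.sum_filter_add_sum_filter_not _ _ _
  have hAE : A + E ⊆ A + B := Finset.add_subset_add_left (Finset.filter_subset _ _)
  have hfull : ∀ c ∈ A + E, x c = h := by
    intro c hc
    obtain ⟨a, ha, b, hb, rfl⟩ := Finset.mem_add.1 hc
    have hb' := (Finset.mem_filter.1 hb)
    have := hmin a ha
    exact S.P3 a b (by simpa [hA] using ha) (by simpa [hB] using hb'.1) (by omega)
  set nw := (A + B) \ (A + E) with hnw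
  have hnwc : nw.card + (A + E).card = (A + B).card := Finset.card_sdiff_add_card_eq_card hAE
  have hnws : ∑ c ∈ nw, x c + ∑ c ∈ A + E, x c = ∑ c, x c := by
    rw [Finset.sum_sdiff hAE, ← S.sp_x, sum_sp]
  set n2 := nw.filter (fun c => c ∈ A' + B) with hn2
  set n1 := nw.filter (fun c => ¬ c ∈ A' + B) with hn1
  have hn12 : n2.card + n1.card = nw.card := Finset.card_filter_add_card_filter_not _
  have hn12s : ∑ c ∈ n2, x c + ∑ c ∈ n1, x c = ∑ c ∈ nw, x c :=
    Finset.sum_filter_add_sum_filter_not _ _ _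
  set F1 := F.filter (fun b => a1 + b ∈ n1) with hF1
  set F2 := F.filter (fun b => ¬ a1 + b ∈ n1) with hF2
  have hF12 : F1.card + F2.card = F.card := Finset.card_filter_add_card_filter_not _
  have hF12s : ∑ c ∈ F1, t c + ∑ c ∈ F2, t c = ∑ c ∈ F, t c :=
    Finset.sum_filter_add_sum_filter_not _ _ _
  have hn1e : n1 = F1.image (a1 + ·) := by
    ext c
    rw [Finset.mem_image]
    constructor
    · intro hc
      have hc1 := (Finset.mem_filter.1 hc)
      have hc2 := Finset.mem_sdiff.1 hc1.1
      obtain ⟨a, ha, b, hb, rfl⟩ := Finset.mem_add.1 hc2.1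
      have haa : a = a1 := by
        by_contra hne
        exact hc1.2 (Finset.add_mem_add (Finset.mem_erase.2 ⟨hne, ha⟩) hb)
      subst haa
      refine ⟨b, Finset.mem_filter.2 ⟨Finset.mem_filter.2 ⟨hb, fun hgb => ?_⟩, hc⟩, rfl⟩
      exact hc2.2 (Finset.add_mem_add ha (Finset.mem_filter.2 ⟨hb, hgb⟩))
    · rintro ⟨b, hb, rfl⟩
      exact (Finset.mem_filter.1 hb).2
  have hn1c : n1.card = F1.card := by
    rw [hn1e, Finset.card_image_of_injective _ (add_right_injective a1)]
  have hn1s : ∑ c ∈ F1, t c ≤ ∑ c ∈ n1, x c := by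
    rw [hn1e, Finset.sum_image (fun a _ b _ hab => add_right_injective a1 hab)]
    refine Finset.sum_le_sum fun b hb => S.P2t a1 b ha1p ?_
    have := (Finset.mem_filter.1 (Finset.mem_filter.1 hb).1).1
    simpa [hB] using this
  have hF2s : ∑ c ∈ F2, t c + F2.card ≤ F2.card * g := by
    have h1 : ∑ c ∈ F2, (t c + 1) ≤ F2.card * g := by
      have := Finset.sum_le_card_nsmul F2 (fun c => t c + 1) g (fun b hb => by
        have := (Finset.mem_filter.1 (Finset.mem_filter.1 hb).1).2
        show t b + 1 ≤ g
        omega)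
      simpa using this
    rw [Finset.sum_add_distrib] at h1
    simpa using h1
  have hEs : ∑ b ∈ E, t b ≤ E.card * h := by
    have := Finset.sum_le_card_nsmul E t h (fun a _ => S.t_le a)
    simpa using this
  have hAEs : ∑ c ∈ A + E, x c = (A + E).card * h := by
    rw [Finset.sum_congr rfl hfull]; simp
  have hn2x : ∀ c ∈ n2, ∃ a ∈ A', s a ≤ x c := by
    intro c hc
    obtain ⟨a, ha, b, hb, rfl⟩ := Finset.mem_add.1 (Finset.mem_filter.1 hc).2
    exact ⟨a, ha, S.P2s a b (hsA' a ha).2.1 (by simpa [hB] using hb)⟩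
  have hn2g : ∀ c ∈ n2, g ≤ x c := by
    intro c hc
    obtain ⟨a, ha, hax⟩ := hn2x c hc
    exact (hsA' a ha).1.trans hax
  have hP5 := S.P5
  have hge : ∀ I ⊆ n2, I.card * g ≤ ∑ c ∈ I, x c := by
    intro I hI
    have := Finset.card_nsmul_le_sum I x g (fun c hc => hn2g c (hI hc))
    simpa using this
  by_cases hEe : E.Nonempty
  · have hAEu : A + E ≠ Finset.univ := by
      intro hu
      have h1 := S.bound
      have h2 := S.q4
      have h3 := S.hpos
      rw [hu, Finset.card_univ] at hAEs
      have : 4 * 1 ≤ Fintype.card Q * h := Nat.mul_le_mul h2 h3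
      omega
    have hcau := S.cau E hEe (by rw [add_comm]; exact hAEu)
    rw [add_comm E] at hcau
    change E.card + A.card ≤ (A + E).card + 1 at hcau
    obtain ⟨r0, hr0⟩ : ∃ r0, (A + E).card + 1 = E.card + A.card + r0 := ⟨_, (Nat.add_sub_cancel' hcau).symm⟩
    -- sum of s bounded
    rcases Nat.eq_zero_or_pos r0 with hz | hr
    · subst hz
      have hpos : 0 < n2.card := by omega
      obtain ⟨c, hc⟩ := Finset.card_pos.1 hpos
      obtain ⟨a, ha, hax⟩ := hn2x c hc
      have h1 := hge (n2.erase c) (Finset.erase_subset _ _)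
      have h2 := Finset.add_sum_erase n2 x hc
      have h3 := Finset.card_erase_add_one hc
      have h4 : F2.card * g ≤ (n2.erase c).card * g := Nat.mul_le_mul_right _ (by omega)
      have h5 := Finset.add_sum_erase A s (hsA' a ha).2.2
      have h6 : ∑ a' ∈ A.erase a, s a' ≤ (A.erase a).card * h := by
        have := Finset.sum_le_card_nsmul (A.erase a) s h (fun a _ => S.s_le a)
        simpa using this
      have h7 := Finset.card_erase_add_one (hsA' a ha).2.2
      have h8 : (A + E).card * h = E.card * h + (A.erase a).card * h := by
        rw [← add_mul]; congr 1; omega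
      have h9 : ∑ a ∈ A, s a = ∑ a, s a := sum_sp s
      omega
    · have h6 : ∑ a ∈ A, s a ≤ A.card * h := by
        have := Finset.sum_le_card_nsmul A s h (fun a _ => S.s_le a)
        simpa using this
      have h9 : ∑ a ∈ A, s a = ∑ a, s a := sum_sp s
      obtain ⟨r, rfl⟩ := Nat.exists_eq_add_of_le' hr
      have h8 : (A + E).card * h = E.card * h + A.card * h + r * h := by
        rw [← add_mul, ← add_mul]; congr 1; omega
      have h1 := hge n2 le_rfl
      have h2 : F2.card * g ≤ (n2.card + r) * g := Nat.mul_le_mul_right _ (by omega)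
      have h3 : (n2.card + r) * g = n2.card * g + r * g := by ring
      have h4 : r * g ≤ r * h := Nat.mul_le_mul_left _ hgh
      omega
  · rw [Finset.not_nonempty_iff_eq_empty] at hEe
    obtain ⟨b, hb⟩ := hBne
    have hAEe : A + E = ∅ := by rw [hEe]; simp
    rw [hAEe] at hnwc hnws
    rw [hEe] at htEF hEF
    simp only [Finset.sum_empty, Finset.card_empty] at hnwc hnws htEF hEF
    have hnwe : nw = A + B := by rw [hnw, hAEe]; simp
    set J := A'.image (fun a => a + b) with hJ
    have hJs : J ⊆ n2 := by
      intro c hc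
      obtain ⟨a, ha, rfl⟩ := Finset.mem_image.1 hc
      rw [hn2, Finset.mem_filter, hnwe]
      exact ⟨Finset.add_mem_add (hsA' a ha).2.2 hb, Finset.add_mem_add ha hb⟩
    have hJc : J.card = A'.card := Finset.card_image_of_injective _ (add_left_injective b)
    have hJx : ∑ a ∈ A', s a ≤ ∑ c ∈ J, x c := by
      rw [hJ, Finset.sum_image (fun a _ b' _ hab => add_left_injective b hab)]
      exact Finset.sum_le_sum fun a ha => S.P2s a b (hsA' a ha).2.1 (by simpa [hB] using hb)
    have hJd := Finset.sum_sdiff (f := x) hJs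
    have hJdc := Finset.card_sdiff_add_card_eq_card hJs
    have hpos : 0 < (n2 \ J).card := by omega
    obtain ⟨c, hc⟩ := Finset.card_pos.1 hpos
    obtain ⟨a, ha, hax⟩ := hn2x c (Finset.sdiff_subset hc)
    have ha1a := hmin a (hsA' a ha).2.2
    have h1 := hge ((n2 \ J).erase c) ((Finset.erase_subset _ _).trans Finset.sdiff_subset)
    have h2 := Finset.add_sum_erase (n2 \ J) x hc
    have h3 := Finset.card_erase_add_one hc
    have h4 : F2.card * g ≤ ((n2 \ J).erase c).card * g := Nat.mul_le_mul_right _ (by omega)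
    have h5 := Finset.add_sum_erase A s ha1
    rw [← hA'] at h5
    have h9 : ∑ a ∈ A, s a = ∑ a, s a := sum_sp s
    omega

end TT

namespace TT
variable {Q : Type*} [AddCommGroup Q] [Fintype Q] [DecidableEq Q]
variable {h : ℕ} {s t x : Q → ℕ}

lemma Cfg.resid (S : Cfg h s t x) :
    (Fintype.card Q : ℤ) * h ≤ 3 * ∑ c, ((h : ℤ) - x c) + 2 := by
  have h1 : ((3 * ∑ c, x c : ℕ) : ℤ) ≤ ((2 * (Fintype.card Q * h) + 2 : ℕ) : ℤ) := by
    exact_mod_cast S.bound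
  push_cast at h1
  rw [Finset.sum_sub_distrib, Finset.sum_const, Finset.card_univ, nsmul_eq_mul]
  linarith

lemma sum_except1 (f g : Q → ℤ) (b1 : Q) (K : ℤ) (h1 : ∀ b, b ≠ b1 → f b ≤ g b)
    (h2 : f b1 ≤ g b1 - K) : ∑ b, f b ≤ ∑ b, g b - K := by
  have : ∑ b, f b ≤ ∑ b, (g b - if b = b1 then K else 0) := by
    apply Finset.sum_le_sum
    intro b _
    by_cases hb : b = b1
    · rw [if_pos hb, hb]; exact h2
    · rw [if_neg hb]; simpa using h1 b hb
  rw [Finset.sum_sub_distrib] at this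
  simpa using this

lemma sum_except2 (f g : Q → ℤ) (b1 b2 : Q) (hne : b1 ≠ b2) (K L : ℤ)
    (h1 : ∀ b, b ≠ b1 → b ≠ b2 → f b ≤ g b)
    (h2 : f b1 ≤ g b1 - K) (h3 : f b2 ≤ g b2 - L) : ∑ b, f b ≤ ∑ b, g b - K - L := by
  have h4 := sum_except1 f (fun b => g b - if b = b1 then K else 0) b2 L (by
    intro b hb
    by_cases hb1 : b = b1
    · simp only [if_pos hb1]; rw [hb1]; exact h2
    · simp only [if_neg hb1]; simpa using h1 b hb1 hb) (by
    simp only [if_neg hne.symm]; simpa using h3)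
  rw [Finset.sum_sub_distrib] at h4
  simpa using h4

lemma sum_ind (P : Q → Prop) [DecidablePred P] (a b : ℤ) :
    ∑ c, (if P c then a else b) = (Finset.univ.filter P).card * a +
      (Fintype.card Q - (Finset.univ.filter P).card : ℤ) * b := by
  rw [Finset.sum_ite, Finset.sum_const, Finset.sum_const, nsmul_eq_mul, nsmul_eq_mul]
  have := Finset.card_filter_add_card_filter_not (s := (Finset.univ : Finset Q)) P
  rw [Finset.card_univ] at this
  congr 2
  rw [← this]; push_cast; ring

lemma Cfg.dsum (S : Cfg h s t x) (u : ℕ) (hu : (sp s).card = u + 1) (a0 a1 : Q) (ha1 : 0 < s a1)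
    (hmax : ∀ a, 0 < s a → s a ≤ s a0) :
    (u : ℤ) * (h - s a0) + (h - s a1) + 1 ≤ h := by
  have h1 := S.hd
  rw [hu, ← sum_sp, ← Finset.add_sum_erase (sp s) s (by simpa using ha1 : a1 ∈ sp s)] at h1
  have h2 : ∑ a ∈ (sp s).erase a1, s a ≤ u * s a0 := by
    have := Finset.sum_le_card_nsmul ((sp s).erase a1) s (s a0)
      (fun a ha => hmax a (by simpa using Finset.mem_of_mem_erase ha))
    rw [Finset.card_erase_of_mem (by simpa using ha1), hu] at this
    simpa using this
  zify at h1 h2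
  push_cast at h1 h2
  nlinarith

lemma Cfg.D1a (S : Cfg h s t x) (hU : sp s + sp t = Finset.univ) (h3 : 3 ≤ (sp s).card) : False := by
  have hcl := S.claim
  obtain ⟨u, hu⟩ : ∃ u, (sp s).card = u + 1 := ⟨(sp s).card - 1, by omega⟩
  rw [hU, Finset.card_univ] at hcl
  obtain ⟨a0, ha0, hmax⟩ := Finset.exists_max_image (sp s) s (Finset.card_pos.1 (by omega))
  obtain ⟨a1, ha1, hmin⟩ := Finset.exists_min_image (sp s) s (Finset.card_pos.1 (by omega))
  rw [mem_sp] at ha0 ha1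
  simp only [mem_sp] at hmax hmin
  have hds := S.dsum u hu a0 a1 ha1 hmax
  have hres := S.resid
  have hsum : ∑ c, ((h : ℤ) - x c) ≤
      ∑ c, (if 0 < t (c - a0) then ((h : ℤ) - s a0) else ((h : ℤ) - s a1)) := by
    apply Finset.sum_le_sum
    intro c _
    split_ifs with hc
    · have := S.P2s a0 (c - a0) ha0 hc
      rw [show a0 + (c - a0) = c by abel] at this
      omega
    · obtain ⟨a, ha, b, hb, rfl⟩ := Finset.mem_add.1 (show c ∈ sp s + sp t by rw [hU]; simp)
      rw [mem_sp] at ha hb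
      have := S.P2s a b ha hb
      have := hmin a ha
      omega
  rw [sum_ind] at hsum
  have hm : (Finset.univ.filter (fun c => 0 < t (c - a0))).card = (sp t).card := by
    rw [← card_tr a0 (sp t)]
    congr 1
    ext c
    simp [mem_tr]
  rw [hm] at hsum
  have hq := S.hq
  rw [hu] at hq hcl h3
  have hs01 := hmin a0 ha0
  have hs0 := S.s_le a0
  have hhp := S.hpos
  have hBq : (sp t).card ≤ Fintype.card Q := Finset.card_le_univ _
  generalize (sp t).card = B at *
  generalize Fintype.card Q = q at *
  generalize ∑ c, ((h : ℤ) - x c) = R at *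
  obtain ⟨D0, hD0⟩ : ∃ D0 : ℤ, D0 = h - s a0 := ⟨_, rfl⟩
  obtain ⟨D1, hD1⟩ : ∃ D1 : ℤ, D1 = h - s a1 := ⟨_, rfl⟩
  rw [← hD0, ← hD1] at hds hsum
  have e0 : 0 ≤ D0 := by omega
  have e1 : D0 ≤ D1 := by omega
  have hR : R ≤ q * D0 + u * (D1 - D0) := by
    have : ((q : ℤ) - B) * (D1 - D0) ≤ u * (D1 - D0) :=
      mul_le_mul_of_nonneg_right (by omega) (by omega)
    nlinarith
  have hR2 : R ≤ (q - u * (u + 1)) * D0 + u * (h - 1) := by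
    have : (u : ℤ) * D1 ≤ u * (h - 1 - u * D0) :=
      mul_le_mul_of_nonneg_left (by linarith) (by positivity)
    nlinarith
  have hq' : (3 : ℤ) * u + 1 ≤ q := by omega
  have hu2 : (2 : ℤ) ≤ u := by omega
  have hh1 : (1 : ℤ) ≤ h := by omega
  have hqh : (3 * (u : ℤ) + 1) * h ≤ q * h := mul_le_mul_of_nonneg_right hq' (by omega)
  rcases le_or_gt ((q : ℤ)) (u * (u + 1)) with hc | hc
  · have : ((q : ℤ) - u * (u + 1)) * D0 ≤ 0 := mul_nonpos_of_nonpos_of_nonneg (by linarith) e0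
    nlinarith
  · have hle : ((u : ℤ) + 1) * D0 ≤ h - 1 := by nlinarith
    have h5 : ((q : ℤ) - u * (u + 1)) * ((u + 1) * D0) ≤ (q - u * (u + 1)) * (h - 1) :=
      mul_le_mul_of_nonneg_left hle (by linarith)
    have h6 : ((u : ℤ) + 1) * R ≤ q * (h - 1) := by
      have : ((u : ℤ) + 1) * R ≤ (u + 1) * ((q - u * (u + 1)) * D0 + u * (h - 1)) :=
        mul_le_mul_of_nonneg_left hR2 (by omega)
      nlinarith
    have h7 : ((u : ℤ) + 1) * (q * h - 2) ≤ (u + 1) * (3 * R) :=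
      mul_le_mul_of_nonneg_left (by linarith) (by omega)
    have h8 : 3 * ((q : ℤ) * h - 2) ≤ (u + 1) * (q * h - 2) :=
      mul_le_mul_of_nonneg_right (by omega) (by nlinarith)
    nlinarith

lemma Cfg.D1b (S : Cfg h s t x) (hU : sp s + sp t = Finset.univ) (h2 : (sp s).card = 2) : False := by
  have hcl := S.claim
  rw [hU, Finset.card_univ, h2] at hcl
  obtain ⟨a0, ha0, hmax⟩ := Finset.exists_max_image (sp s) s (Finset.card_pos.1 (by omega))
  obtain ⟨a1, ha1, hne⟩ := Finset.exists_mem_ne (show 1 < (sp s).card by omega) a0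
  have hA : sp s = {a0, a1} := by
    symm
    apply Finset.eq_of_subset_of_card_le
    · intro c hc
      simp only [Finset.mem_insert, Finset.mem_singleton] at hc
      rcases hc with rfl | rfl <;> assumption
    · rw [Finset.card_pair hne.symm, h2]
  have hs10 := hmax a1 ha1
  rw [mem_sp] at ha0 ha1
  have hpair := S.pair ha0 ha1 hne.symm
  have hres := S.resid
  have hsum : ∑ a, s a = s a0 + s a1 := by rw [← sum_sp, hA, Finset.sum_pair hne.symm]
  have hhp := S.hpos
  have hs0 := S.s_le a0
  have hs1 := S.s_le a1
  have hq4 := S.q4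
  -- translate
  have htrans : ∑ c, ((h : ℤ) - x c) = ∑ b, ((h : ℤ) - x (a0 + b)) :=
    (Equiv.sum_comp (Equiv.addLeft a0) (fun c => (h : ℤ) - x c)).symm
  set e := a1 - a0 with he
  obtain ⟨D0, hD0⟩ : ∃ D0 : ℤ, D0 = h - s a0 := ⟨_, rfl⟩
  obtain ⟨D1, hD1⟩ : ∃ D1 : ℤ, D1 = h - s a1 := ⟨_, rfl⟩
  obtain ⟨ρ, hρ⟩ : ∃ ρ : Q → ℤ, ∀ b, ρ b = h - x (a0 + b) := ⟨_, fun _ => rfl⟩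
  have htr2 : ∑ c, ((h : ℤ) - x c) = ∑ b, ρ b := by
    rw [htrans]; exact Finset.sum_congr rfl fun b _ => (hρ b).symm
  have ρ0 : ∀ b, 0 ≤ ρ b := fun b => by rw [hρ]; have := S.x_le (a0 + b); omega
  have F1 : ∀ b, 0 < t b → ρ b ≤ D0 := fun b hb => by
    rw [hρ, hD0]; have := S.P2s a0 b ha0 hb; omega
  have ea : ∀ b, a0 + (b + e) = a1 + b := fun b => by rw [he]; abel
  have F2 : ∀ b, 0 < t b → ρ (b + e) ≤ D1 := fun b hb => by
    rw [hρ, hD1, ea]; have := S.P2s a1 b ha1 hb; omega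
  have F3 : ∀ b, 0 < t b → 0 < ρ b → 3 * ((t b : ℤ) + ρ b) ≤ 2 * h := fun b hb hr => by
    rw [hρ] at hr ⊢
    have := S.P4a a0 b (by omega) hb (by omega)
    omega
  have F4 : ∀ b, 0 < ρ (b + e) → (t b : ℤ) ≤ D1 := fun b hr => by
    rw [hρ, ea] at hr
    rcases Nat.eq_zero_or_pos (t b) with hb | hb
    · omega
    · by_contra hcon
      have := S.P3 a1 b ha1 hb (by omega)
      omega
  have F5 : ∀ b, t b = 0 → ρ b ≤ D1 := fun b hb => by
    obtain ⟨a, ha, b', hb', hab⟩ := Finset.mem_add.1 (show a0 + b ∈ sp s + sp t by rw [hU]; simp)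
    rw [mem_sp] at hb'
    rw [hA] at ha
    simp only [Finset.mem_insert, Finset.mem_singleton] at ha
    rcases ha with rfl | rfl
    · rw [add_left_cancel hab] at hb'; omega
    · have : b' + e = b := by
        have := ea b'
        rw [hab] at this
        exact add_left_cancel this
      rw [← this]; exact F2 b' hb'
  have hM : ∀ b b', t b = 0 → t b' = 0 → b = b' := by
    intro b b' hb hb'
    by_contra hbb
    have h1 := Finset.card_le_card (show ({b, b'} : Finset Q) ⊆ (sp t)ᶜ by
      intro c hc
      simp only [Finset.mem_insert, Finset.mem_singleton] at hc
      rcases hc with rfl | rfl <;> simp [*])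
    rw [Finset.card_pair hbb] at h1
    have := Finset.card_add_card_compl (sp t)
    omega
  have hT : ∑ b, 3 * ((t b : ℤ) + ρ b) =
      3 * ((Fintype.card Q : ℤ) * h) - 6 * h + 3 * D0 + 3 * D1 + 3 := by
    rw [← Finset.mul_sum, Finset.sum_add_distrib, ← htr2]
    have h5 : ((∑ c, x c + 1 : ℕ) : ℤ) = ((∑ a, s a + ∑ b, t b : ℕ) : ℤ) := by rw [S.P5]
    rw [hsum] at h5
    push_cast at h5
    rw [Finset.sum_sub_distrib, Finset.sum_const, Finset.card_univ, nsmul_eq_mul]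
    rw [hD0, hD1]; linarith
  rw [htr2] at hres
  set w := (Finset.univ.filter (fun b => 0 < ρ b)).card with hw
  have hg : ∑ b, (if 0 < ρ b then (2 * h : ℤ) else 3 * h) =
      3 * ((Fintype.card Q : ℤ) * h) - w * h := by
    rw [sum_ind, ← hw]; ring
  have hDD : ∑ b, (if 0 < ρ b then D0 else 0) = w * D0 := by
    rw [sum_ind, ← hw]; ring
  have e0 : 0 ≤ D0 := by omega
  have e1 : D0 ≤ D1 := by omega
  have e2 : D0 + D1 + 1 ≤ h := by omega
  have hh1 : (1 : ℤ) ≤ h := by omega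
  have hY : 4 * (h : ℤ) ≤ (Fintype.card Q : ℤ) * h :=
    mul_le_mul_of_nonneg_right (by omega) (by omega)
  have ptw : ∀ b, 0 < t b → 3 * ((t b : ℤ) + ρ b) ≤ if 0 < ρ b then (2 * h : ℤ) else 3 * h := by
    intro b hb
    split_ifs with hr
    · exact F3 b hb hr
    · have := ρ0 b; have := S.t_le b; omega
  have ptr : ∀ b, 0 < t b → ρ b ≤ if 0 < ρ b then D0 else 0 := by
    intro b hb
    split_ifs with hr
    · exact F1 b hb
    · omega
  have hwq : w ≤ Fintype.card Q := Finset.card_le_univ _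
  have hw0 : 0 < w := by
    by_contra hcon
    have : ∑ b, ρ b = 0 := by
      apply Finset.sum_eq_zero
      intro b _
      by_contra hb
      have hbp : 0 < ρ b := lt_of_le_of_ne (ρ0 b) (Ne.symm hb)
      exact hcon (Finset.card_pos.2 ⟨b, by simpa using hbp⟩)
    omega
  have hwalk : (∃ b, ρ b = 0) → ∃ b, ρ b = 0 ∧ 0 < ρ (b + e) := by
    rintro ⟨b, hb⟩
    by_contra hcon
    push Not at hcon
    set Z := Finset.univ.filter (fun b => ρ b = 0) with hZ
    have hZs : Z + sp s ⊆ tr a0 Z := by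
      intro c hc
      obtain ⟨z, hz, a, ha, rfl⟩ := Finset.mem_add.1 hc
      have hz0 : ρ z = 0 := by simpa [hZ] using hz
      rw [hA] at ha
      simp only [Finset.mem_insert, Finset.mem_singleton] at ha
      rw [mem_tr]
      rcases ha with rfl | rfl
      · simpa using hz
      · have h1 := hcon z hz0
        have h2 := ρ0 (z + e)
        have : ρ (z + e) = 0 := le_antisymm h1 h2
        rw [he, ← add_sub_assoc] at this
        simpa [hZ] using this
    have h1 := Finset.card_le_card hZs
    rw [card_tr] at h1
    have hZn : Z.Nonempty := ⟨b, by simpa [hZ] using hb⟩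
    have hZw : Z.card + w ≤ Fintype.card Q := by
      rw [hw, ← Finset.card_union_of_disjoint]
      · exact Finset.card_le_univ _
      · rw [Finset.disjoint_left]
        intro c hc hc'
        simp [hZ] at hc hc'
        omega
    have := S.cau Z hZn (by
      intro hu
      rw [hu, Finset.card_univ] at h1
      omega)
    omega
  by_cases hMe : ∃ bs, t bs = 0
  · obtain ⟨bs, hbs⟩ := hMe
    have hnb : ∀ b, b ≠ bs → 0 < t b := fun b hb => by
      rcases Nat.eq_zero_or_pos (t b) with h | h
      · exact absurd (hM b bs h hbs) hb
      · exact h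
    by_cases hrb : ρ bs = 0
    · have q1 := sum_except1 (fun b => 3 * ((t b : ℤ) + ρ b)) _ bs (3 * h)
        (fun b hb => ptw b (hnb b hb)) (by simp [hrb, hbs])
      have q2 : ∑ b, ρ b ≤ ∑ b, if 0 < ρ b then D0 else 0 := Finset.sum_le_sum fun b _ => by
        by_cases hb : b = bs
        · rw [hb, hrb]; simp
        · exact ptr b (hnb b hb)
      rw [hg, hT] at q1
      rw [hDD] at q2
      have hw2 : w ≤ 2 := by
        by_contra hcon
        have : 3 * (h : ℤ) ≤ w * h := mul_le_mul_of_nonneg_right (by omega) (by omega)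
        omega
      interval_cases w <;> omega
    · have hrb' : 0 < ρ bs := lt_of_le_of_ne (ρ0 bs) (Ne.symm hrb)
      have hr5 := F5 bs hbs
      have q2 := sum_except1 ρ _ bs (D0 - D1) (fun b hb => ptr b (hnb b hb)) (by
        simp only [if_pos hrb']; omega)
      rw [hDD] at q2
      by_cases hZ : ∃ b, ρ b = 0
      · obtain ⟨b1, hb1, hb1e⟩ := hwalk hZ
        have hb14 := F4 b1 hb1e
        have q1 := sum_except2 (fun b => 3 * ((t b : ℤ) + ρ b)) _ b1 bs
          (by rintro rfl; omega) (3 * h - 3 * D1) (2 * h - 3 * D1)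
          (fun b _ hb => ptw b (hnb b hb)) (by simp only [hb1, lt_irrefl, if_false]; omega)
          (by simp only [if_pos hrb', hbs]; push_cast; omega)
        rw [hg, hT] at q1
        have hw2 : w ≤ 3 := by
          by_contra hcon
          have : 4 * (h : ℤ) ≤ w * h := mul_le_mul_of_nonneg_right (by omega) (by omega)
          omega
        interval_cases w <;> omega
      · push Not at hZ
        have hwq' : w = Fintype.card Q := by
          rw [hw, ← Finset.card_univ]; congr 1
          rw [Finset.filter_true_of_mem]
          intro b _
          exact lt_of_le_of_ne (ρ0 b) (hZ b).symm
        have q1 := sum_except1 (fun b => 3 * ((t b : ℤ) + ρ b)) _ bs (2 * h - 3 * D1)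
          (fun b hb => ptw b (hnb b hb)) (by simp only [if_pos hrb', hbs]; push_cast; omega)
        rw [hg, hT, hwq'] at q1
        omega
  · have hnb : ∀ b, 0 < t b := fun b => by
      by_contra hb; exact hMe ⟨b, by omega⟩
    have q2 : ∑ b, ρ b ≤ ∑ b, if 0 < ρ b then D0 else 0 := Finset.sum_le_sum fun b _ => ptr b (hnb b)
    rw [hDD] at q2
    by_cases hZ : ∃ b, ρ b = 0
    · obtain ⟨b1, hb1, hb1e⟩ := hwalk hZ
      have hb14 := F4 b1 hb1e
      have q1 := sum_except1 (fun b => 3 * ((t b : ℤ) + ρ b)) _ b1 (3 * h - 3 * D1)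
        (fun b _ => ptw b (hnb b)) (by simp only [hb1, lt_irrefl, if_false]; omega)
      rw [hg, hT] at q1
      have hw2 : w ≤ 2 := by
        by_contra hcon
        have : 3 * (h : ℤ) ≤ w * h := mul_le_mul_of_nonneg_right (by omega) (by omega)
        omega
      interval_cases w <;> omega
    · push Not at hZ
      have hwq' : w = Fintype.card Q := by
        rw [hw, ← Finset.card_univ]; congr 1
        rw [Finset.filter_true_of_mem]
        intro b _
        exact lt_of_le_of_ne (ρ0 b) (hZ b).symm
      have q1 : ∑ b, 3 * ((t b : ℤ) + ρ b) ≤ ∑ b, if 0 < ρ b then (2 * h : ℤ) else 3 * h :=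
        Finset.sum_le_sum fun b _ => ptw b (hnb b)
      rw [hg, hT, hwq'] at q1
      rw [hwq'] at q2
      have hq5 : Fintype.card Q ≤ 5 := by
        by_contra hcon
        have : 6 * (h : ℤ) ≤ (Fintype.card Q : ℤ) * h := mul_le_mul_of_nonneg_right (by omega) (by omega)
        omega
      clear hg hDD hwq' hwq htrans htr2 hcl hT hw hw0
      generalize Fintype.card Q = q at *
      interval_cases q <;> omega

lemma Cfg.D1 (S : Cfg h s t x) : sp s + sp t ≠ Finset.univ := by
  intro hU
  rcases Nat.lt_or_ge 2 (sp s).card with h3 | h3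
  · exact S.D1a hU h3
  · exact S.D1b hU (le_antisymm h3 S.two)

end TT

namespace TT
variable {Q : Type*} [AddCommGroup Q] [Fintype Q] [DecidableEq Q]
variable {h : ℕ} {s t x : Q → ℕ}

lemma Cfg.D2_reps (S : Cfg h s t x) (h1 : (sp s + sp t).card + 1 = Fintype.card Q)
    (hg : ∀ y, y ≠ 0 → (sp s).card + 2 ≤ (sp s + {0, y}).card) :
    ∃ z : Q, (∀ a, 0 < s a → t (z - a) = 0) ∧ (sp t).card + (sp s).card = Fintype.card Q ∧
      ∀ c, c ≠ z → ∀ a1, ∃ a, a ≠ a1 ∧ 0 < s a ∧ 0 < t (c - a) := by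
  have hne : (sp s + sp t)ᶜ.card = 1 := by
    have := Finset.card_add_card_compl (sp s + sp t); omega
  obtain ⟨z, hz⟩ := Finset.card_eq_one.1 hne
  have hz1 : z ∉ sp s + sp t := by
    rw [← Finset.mem_compl, hz]; simp
  have hzt : ∀ a, 0 < s a → t (z - a) = 0 := by
    intro a ha
    by_contra hcon
    apply hz1
    exact Finset.mem_add.2 ⟨a, by simpa, z - a, by simpa using Nat.pos_of_ne_zero hcon, by abel⟩
  have hcl := S.claim
  have hsub : (sp s).image (fun a => z - a) ⊆ (sp t)ᶜ := by
    intro b hb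
    obtain ⟨a, ha, rfl⟩ := Finset.mem_image.1 hb
    rw [mem_sp] at ha
    simp [hzt a ha]
  have hic : ((sp s).image (fun a => z - a)).card = (sp s).card :=
    Finset.card_image_of_injective _ (sub_right_injective)
  have hcc := Finset.card_add_card_compl (sp t)
  have hle := Finset.card_le_card hsub
  have heq : (sp s).image (fun a => z - a) = (sp t)ᶜ :=
    Finset.eq_of_subset_of_card_le hsub (by omega)
  refine ⟨z, hzt, by omega, ?_⟩
  intro c hc a1
  have hy := hg (c - z) (sub_ne_zero.2 hc)
  have hE : sp s + {0, c - z} = (sp s \ tr (c - z) (sp s)) ∪ tr (c - z) (sp s) := by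
    ext w
    simp only [Finset.mem_add, Finset.mem_insert, Finset.mem_singleton, Finset.mem_union,
      Finset.mem_sdiff, mem_tr]
    constructor
    · rintro ⟨a, ha, b, rfl | rfl, rfl⟩
      · by_cases h5 : a + 0 - (c - z) ∈ sp s
        · exact Or.inr h5
        · exact Or.inl ⟨by simpa using ha, h5⟩
      · right; simpa using ha
    · rintro (⟨ha, _⟩ | ha)
      · exact ⟨w, ha, 0, Or.inl rfl, by simp⟩
      · exact ⟨_, ha, c - z, Or.inr rfl, by abel⟩
  have h3 := Finset.card_union_le (sp s \ tr (c - z) (sp s)) (tr (c - z) (sp s))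
  rw [← hE, card_tr] at h3
  obtain ⟨a, ha, hane⟩ := Finset.exists_mem_ne
    (show 1 < (sp s \ tr (c - z) (sp s)).card by omega) a1
  rw [Finset.mem_sdiff, mem_tr] at ha
  refine ⟨a, hane, by simpa using ha.1, ?_⟩
  by_contra hcon
  have : c - a ∈ (sp t)ᶜ := by simpa using hcon
  rw [← heq] at this
  obtain ⟨a', ha', he⟩ := Finset.mem_image.1 this
  apply ha.2
  have : a - (c - z) = a' := by
    have h7 : a' = z - (z - a') := by abel
    rw [h7, he]; abel
  rw [this]; exact ha'

lemma D2_arith_big (u q h D0 D1 D2 R : ℤ) (hu : 3 ≤ u) (hq : 3 * u + 1 ≤ q) (hh : 1 ≤ h)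
    (e0 : 0 ≤ D0) (e1 : D0 ≤ D2) (e2 : D2 ≤ D1) (hs : (u - 1) * D0 + D1 + D2 + 1 ≤ h)
    (hR : R ≤ (q - 1 - u) * D0 + u * D2 + h) (hres : q * h ≤ 3 * R + 2) : False := by
  have h1 : u * (2 * D2) ≤ u * (h - 1 - (u - 1) * D0) :=
    mul_le_mul_of_nonneg_left (by linarith) (by linarith)
  have h2 : 2 * R ≤ 2 * h + u * (h - 1) + (2 * q - 2 - u - u * u) * D0 := by nlinarith
  have hqh : (3 * u + 1) * h ≤ q * h := mul_le_mul_of_nonneg_right hq (by linarith)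
  have huh : 3 * (h + 1) ≤ u * (h + 1) := mul_le_mul_of_nonneg_right hu (by linarith)
  rcases le_or_gt (2 * q - 2 - u - u * u) 0 with hc | hc
  · have h3 : (2 * q - 2 - u - u * u) * D0 ≤ 0 := mul_nonpos_of_nonpos_of_nonneg hc e0
    nlinarith
  · have h4 : (u + 1) * D0 ≤ h - 1 := by nlinarith
    have h5 := mul_le_mul_of_nonneg_left h4 hc.le
    have h6 : (u + 1) * (2 * (q * h)) ≤ (u + 1) * (3 * (2 * h + u * (h - 1) + (2 * q - 2 - u - u * u) * D0) + 4) :=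
      mul_le_mul_of_nonneg_left (by linarith) (by linarith)
    have h7 : (u + 1) * (q * h - 3 * h - 2) ≤ 3 * ((h - 1) * (q - 1)) := by nlinarith
    have hq10 : 10 * h ≤ q * h := mul_le_mul_of_nonneg_right (by linarith) (by linarith)
    have h8 : 4 * (q * h - 3 * h - 2) ≤ (u + 1) * (q * h - 3 * h - 2) :=
      mul_le_mul_of_nonneg_right (by linarith) (by linarith)
    nlinarith

lemma Cfg.D2 (S : Cfg h s t x) (h1 : (sp s + sp t).card + 1 = Fintype.card Q)
    (h3 : 3 ≤ (sp s).card)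
    (hg : ∀ y, y ≠ 0 → (sp s).card + 2 ≤ (sp s + {0, y}).card) : False := by
  obtain ⟨z, hz, hcard, hrep⟩ := S.D2_reps h1 hg
  obtain ⟨u, hu⟩ : ∃ u, (sp s).card = u + 1 := ⟨(sp s).card - 1, by omega⟩
  obtain ⟨a1, ha1, hmin1⟩ := Finset.exists_min_image (sp s) s (Finset.card_pos.1 (by omega))
  have hc1 := Finset.card_erase_add_one ha1
  obtain ⟨a2, ha2, hmin2⟩ := Finset.exists_min_image ((sp s).erase a1) s (Finset.card_pos.1 (by omega))
  have hc2 := Finset.card_erase_add_one ha2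
  obtain ⟨a0, ha0, hmax⟩ := Finset.exists_max_image (((sp s).erase a1).erase a2) s
    (Finset.card_pos.1 (by omega))
  have hsum1 := Finset.add_sum_erase (sp s) s ha1
  have hsum2 := Finset.add_sum_erase ((sp s).erase a1) s ha2
  have hsum3 : ∑ a ∈ ((sp s).erase a1).erase a2, s a ≤ (((sp s).erase a1).erase a2).card * s a0 := by
    simpa using Finset.sum_le_card_nsmul _ s (s a0) hmax
  have ha2' := (Finset.mem_erase.1 ha2)
  have ha0' := Finset.mem_erase.1 ha0
  have ha0'' := Finset.mem_erase.1 ha0'.2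
  have p0 : 0 < s a0 := by simpa using ha0''.2
  have p1 : 0 < s a1 := by simpa using ha1
  have p2 : 0 < s a2 := by simpa using ha2'.2
  have o1 := hmin1 a2 ha2'.2
  have o2 := hmin2 a0 ha0'.2
  have l0 := S.s_le a0
  have hhp := S.hpos
  have hpair := S.pair p0 p2 ha0'.1
  have hq := S.hq
  have hd := S.hd
  have hres := S.resid
  rw [sum_sp] at hsum1
  have hc2' : (((sp s).erase a1).erase a2).card + 2 = u + 1 := by omega
  obtain ⟨n, hn⟩ : ∃ n, (((sp s).erase a1).erase a2).card = n := ⟨_, rfl⟩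
  rw [hn] at hsum3 hc2'
  have hnu : u = n + 1 := by omega
  have hds : ((u : ℤ) - 1) * (h - s a0) + (h - s a1) + (h - s a2) + 1 ≤ h := by
    rw [hu, hnu] at hd
    have hd' : ((n + 1 + 1) * h + 1 : ℤ) ≤ (s a1 + (s a2 + n * s a0)) + h := by
      exact_mod_cast (by omega : (n + 1 + 1) * h + 1 ≤ (s a1 + (s a2 + n * s a0)) + h)
    rw [hnu]; push_cast
    linarith
  have htrans : ∑ c, ((h : ℤ) - x c) = ∑ b, ((h : ℤ) - x (a0 + b)) :=
    (Equiv.sum_comp (Equiv.addLeft a0) (fun c => (h : ℤ) - x c)).symm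
  obtain ⟨D0, hD0⟩ : ∃ D0 : ℤ, D0 = h - s a0 := ⟨_, rfl⟩
  obtain ⟨D1, hD1⟩ : ∃ D1 : ℤ, D1 = h - s a1 := ⟨_, rfl⟩
  obtain ⟨D2, hD2⟩ : ∃ D2 : ℤ, D2 = h - s a2 := ⟨_, rfl⟩
  rw [← hD0, ← hD1, ← hD2] at hds
  have e0 : 0 ≤ D0 := by omega
  have e1 : D0 ≤ D2 := by omega
  have e2 : D2 ≤ D1 := by omega
  obtain ⟨ρ, hρ⟩ : ∃ ρ : Q → ℤ, ∀ b, ρ b = h - x (a0 + b) := ⟨_, fun _ => rfl⟩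
  have htr2 : ∑ c, ((h : ℤ) - x c) = ∑ b, ρ b := by
    rw [htrans]; exact Finset.sum_congr rfl fun b _ => (hρ b).symm
  rw [htr2] at hres
  have ρ0 : ∀ b, 0 ≤ ρ b := fun b => by rw [hρ]; have := S.x_le (a0 + b); omega
  have ρh : ∀ b, ρ b ≤ h := fun b => by rw [hρ]; omega
  have F1 : ∀ b, 0 < t b → ρ b ≤ D0 := fun b hb => by
    rw [hρ, hD0]; have := S.P2s a0 b p0 hb; omega
  have F2 : ∀ b, b ≠ z - a0 → ρ b ≤ D2 := fun b hb => by
    obtain ⟨a, hane, ha, hta⟩ := hrep (a0 + b) (fun hcon => hb (by rw [← hcon]; abel)) a1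
    have h5 := S.P2s a _ ha hta
    rw [show a + (a0 + b - a) = a0 + b by abel] at h5
    have h6 := hmin2 a (Finset.mem_erase.2 ⟨hane, by simpa using ha⟩)
    rw [hρ, hD2]; omega
  have hzt := hz a0 p0
  have hspt : (Finset.univ.filter (fun b => 0 < t b)).card = (sp t).card := rfl
  rcases Nat.lt_or_ge 2 u with hu3 | hu2
  · have hR : ∑ b, ρ b ≤ ∑ b, (if 0 < t b then D0 else D2) - (D2 - h) := by
      apply sum_except1 _ _ (z - a0)
      · intro b hb
        split_ifs with hc
        · exact F1 b hc
        · exact F2 b hb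
      · rw [if_neg (by omega)]; have := ρh (z - a0); linarith
    rw [sum_ind, hspt] at hR
    refine D2_arith_big u (Fintype.card Q) h D0 D1 D2 _ (by omega) (by omega) (by omega) e0 e1 e2
      hds ?_ hres
    have hB : ((sp t).card : ℤ) = Fintype.card Q - 1 - u := by omega
    rw [hB] at hR
    linarith
  · have hu2 : u = 2 := by omega
    have hB : ((sp t).card : ℤ) = Fintype.card Q - 3 := by omega
    have F3 : ∀ b, 0 < t b → 0 < ρ b → 3 * ((t b : ℤ) + ρ b) ≤ 2 * h := fun b hb hr => by
      rw [hρ] at hr ⊢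
      have := S.P4a a0 b (by omega) hb (by omega)
      omega
    have hT : ∑ b, 3 * ((t b : ℤ) + ρ b) =
        3 * ((Fintype.card Q : ℤ) * h) - 9 * h + 3 * D0 + 3 * D1 + 3 * D2 + 3 := by
      have hss : ∑ a, s a = s a1 + (s a2 + s a0) := by
        rw [← hsum1, ← hsum2]
        have : ((sp s).erase a1).erase a2 = {a0} := by
          obtain ⟨w, hw⟩ := Finset.card_eq_one.1 (show (((sp s).erase a1).erase a2).card = 1 by omega)
          rw [hw] at ha0 ⊢
          rw [Finset.mem_singleton.1 ha0]
        rw [this, Finset.sum_singleton]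
      rw [← Finset.mul_sum, Finset.sum_add_distrib, ← htr2]
      have h5 : ((∑ c, x c + 1 : ℕ) : ℤ) = ((∑ a, s a + ∑ b, t b : ℕ) : ℤ) := by rw [S.P5]
      rw [hss] at h5
      push_cast at h5
      rw [Finset.sum_sub_distrib, Finset.sum_const, Finset.card_univ, nsmul_eq_mul]
      rw [hD0, hD1, hD2]; linarith
    obtain ⟨w, hw⟩ : ∃ w, (Finset.univ.filter (fun b => 0 < t b ∧ 0 < ρ b)).card = w := ⟨_, rfl⟩
    have g1 : ∑ b, 3 * ((t b : ℤ) + ρ b) ≤ ∑ b, ((if 0 < t b then (3 * h : ℤ) else 3 * D2) -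
        (if 0 < t b ∧ 0 < ρ b then (h : ℤ) else 0)) - (3 * D2 - 3 * h) := by
      apply sum_except1 _ _ (z - a0)
      · intro b hb
        by_cases hc : 0 < t b
        · by_cases hr : 0 < ρ b
          · rw [if_pos hc, if_pos ⟨hc, hr⟩]; have := F3 b hc hr; linarith
          · rw [if_pos hc, if_neg (by tauto)]; have := S.t_le b; omega
        · rw [if_neg hc, if_neg (by tauto)]; have := F2 b hb; omega
      · rw [if_neg (by omega), if_neg (by omega), hzt]; have := ρh (z - a0); push_cast; linarith
    have g2 : ∑ b, ρ b ≤ ∑ b, ((if 0 < t b then (0 : ℤ) else D2) +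
        (if 0 < t b ∧ 0 < ρ b then D0 else 0)) - (D2 - h) := by
      apply sum_except1 _ _ (z - a0)
      · intro b hb
        by_cases hc : 0 < t b
        · by_cases hr : 0 < ρ b
          · rw [if_pos hc, if_pos ⟨hc, hr⟩]; have := F1 b hc; linarith
          · rw [if_pos hc, if_neg (by tauto)]; omega
        · rw [if_neg hc, if_neg (by tauto)]; have := F2 b hb; omega
      · rw [if_neg (by omega), if_neg (by omega)]; have := ρh (z - a0); linarith
    rw [hT, Finset.sum_sub_distrib, sum_ind, sum_ind, hspt, hw, hB] at g1
    rw [Finset.sum_add_distrib, sum_ind, sum_ind, hspt, hw, hB] at g2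
    rw [hu2] at hds
    have hw2 : w ≤ 2 := by
      by_contra hcon
      have : (3 : ℤ) * h ≤ w * h := mul_le_mul_of_nonneg_right (by omega) (by omega)
      linarith
    have hwD : (w : ℤ) * D0 ≤ 2 * D0 := mul_le_mul_of_nonneg_right (by omega) e0
    have h7 : (7 : ℤ) * h ≤ Fintype.card Q * h := mul_le_mul_of_nonneg_right (by omega) (by omega)
    push_cast at hds
    linarith

end TT

namespace TT
variable {Q : Type*} [AddCommGroup Q] [Fintype Q] [DecidableEq Q]
variable {h : ℕ} {s t x : Q → ℕ}

lemma Cfg.ap_s (S : Cfg h s t x) (hN : NoSub (sp s)) : ∃ d, IsAPWith d (sp s) := by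
  have h2 := S.two
  have hq := S.hq
  have hcl := S.claim
  have htc := S.t_card
  have hU := S.D1
  have hlt : (sp s + sp t).card < Fintype.card Q := by
    rw [← Finset.card_univ]
    exact Finset.card_lt_card (Finset.ssubset_univ_iff.2 hU)
  have key : ∃ y, y ≠ 0 ∧ (sp s + {0, y}).card ≤ (sp s).card + 1 := by
    by_cases h3 : (sp s).card = 2
    · obtain ⟨a, b, hab, he⟩ := Finset.card_eq_two.1 h3
      refine ⟨b - a, sub_ne_zero.2 hab.symm, ?_⟩
      have : sp s + {0, b - a} ⊆ {a, b, b + (b - a)} := by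
        rw [he]
        intro c hc
        obtain ⟨w, hw, y, hy, rfl⟩ := Finset.mem_add.1 hc
        simp only [Finset.mem_insert, Finset.mem_singleton] at hw hy ⊢
        rcases hw with rfl | rfl <;> rcases hy with rfl | rfl <;> simp
      have h5 := Finset.card_le_card this
      have h6 := Finset.card_le_three (a := a) (b := b) (c := b + (b - a))
      omega
    · by_cases h4 : (sp s + sp t).card + 2 ≤ Fintype.card Q
      · refine B3 (sp s) (sp t) S.cau hN (by omega) h2 ⟨by omega, ?_, ?_⟩
        · rw [add_comm (sp t)]; omega
        · rw [add_comm (sp t)]; omega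
      · by_contra hcon
        push Not at hcon
        exact S.D2 (by omega) (by omega) (fun y hy => hcon y hy)
  obtain ⟨y, hy, hc⟩ := key
  exact ⟨-y, B1 (sp s) (Finset.card_pos.1 (by omega)) hN (by omega) y hy hc⟩

lemma Cfg.gen (S : Cfg h s t x) (d : Q) (hA : IsAPWith d (sp s)) : AddSubgroup.zmultiples d = ⊤ := by
  have h2 := S.two
  obtain ⟨a, k, hk, hAe⟩ := hA
  set L := AddSubgroup.zmultiples d with hL
  have hsub : fs L + sp s ⊆ (fs L).image (a + ·) := by
    rw [hAe]
    intro c hc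
    obtain ⟨l, hl, w, hw, rfl⟩ := Finset.mem_add.1 hc
    obtain ⟨i, _, rfl⟩ := Finset.mem_image.1 hw
    rw [mem_fs] at hl
    refine Finset.mem_image.2 ⟨l + i • d, ?_, by abel⟩
    rw [mem_fs]
    exact L.add_mem hl (L.nsmul_mem (AddSubgroup.mem_zmultiples d) i)
  have hle := Finset.card_le_card hsub
  rw [card_coset] at hle
  have h0 : (fs L).Nonempty := ⟨0, by rw [mem_fs]; exact L.zero_mem⟩
  have hu : fs L + sp s = Finset.univ := by
    by_contra hne
    have := S.cau _ h0 hne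
    omega
  rw [hu, Finset.card_univ] at hle
  rw [eq_top_iff]
  intro z _
  have : fs L = Finset.univ := Finset.eq_univ_of_card _ (le_antisymm (Finset.card_le_univ _) hle)
  rw [← mem_fs, this]; simp

lemma Cfg.concl (S : Cfg h s t x) (hN : NoSub (sp s)) :
    ∃ d, IsAPWith d (sp s) ∧ IsAPWith d (sp t) ∧ ∃ α β, 0 < s α ∧ 0 < t β ∧
      (∀ c, c ≠ α + β → x c = 0 ∨ x c = h) ∧
      ∀ a b, 0 < s a → 0 < t b → a + b = α + β → a = α ∧ b = β := by
  obtain ⟨d, hA⟩ := S.ap_s hN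
  have hd := S.gen d hA
  have h2 := S.two
  have htc := S.t_card
  have hU := S.D1
  have hB := B2 (sp s) (sp t) d hA h2 (Finset.card_pos.1 (by omega)) hd hU S.claim
  refine ⟨d, hA, hB, ?_⟩
  obtain ⟨a, k, hk, hAe⟩ := hA
  obtain ⟨b, l, hl, hBe⟩ := hB
  obtain ⟨u, rfl⟩ : ∃ u, k = u + 1 := ⟨k - 1, by omega⟩
  obtain ⟨v, rfl⟩ : ∃ v, l = v + 1 := ⟨l - 1, by omega⟩
  have hord : addOrderOf d = Fintype.card Q := by
    rw [← Nat.card_zmultiples, hd, ← Nat.card_eq_fintype_card]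
    exact AddSubgroup.card_top
  have inj : ∀ i j, i < Fintype.card Q → j < Fintype.card Q → i • d = j • d → i = j := by
    intro i j hi hj hij
    rw [← hord] at hi hj
    exact nsmul_injOn_Iio_addOrderOf hi hj hij
  have memA : ∀ c, 0 < s c ↔ ∃ i ≤ u, a + i • d = c := by
    intro c
    rw [← mem_sp, hAe, Finset.mem_image]
    simp only [Finset.mem_range, Nat.lt_succ_iff]
  have memB : ∀ c, 0 < t c ↔ ∃ i ≤ v, b + i • d = c := by
    intro c
    rw [← mem_sp, hBe, Finset.mem_image]
    simp only [Finset.mem_range, Nat.lt_succ_iff]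
  have hfadd : ∀ i j : ℕ, (a + i • d) + (b + j • d) = a + b + (i + j) • d := by
    intro i j; rw [add_nsmul]; abel
  have hAB : sp s + sp t = (Finset.range (u + v + 1)).image (fun k : ℕ => a + b + k • d) := by
    ext c
    rw [Finset.mem_add, Finset.mem_image]
    constructor
    · rintro ⟨a', ha', b', hb', rfl⟩
      rw [mem_sp, memA] at ha'
      rw [mem_sp, memB] at hb'
      obtain ⟨i, hi, rfl⟩ := ha'
      obtain ⟨j, hj, rfl⟩ := hb'
      exact ⟨i + j, Finset.mem_range.2 (by omega), (hfadd i j).symm⟩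
    · rintro ⟨k, hk, rfl⟩
      rw [Finset.mem_range] at hk
      refine ⟨a + (min k u) • d, mem_sp.2 ((memA _).2 ⟨_, by omega, rfl⟩),
        b + (k - min k u) • d, mem_sp.2 ((memB _).2 ⟨_, by omega, rfl⟩), ?_⟩
      rw [hfadd]; congr 2; omega
  have hlt : (sp s + sp t).card < Fintype.card Q := by
    rw [← Finset.card_univ]
    exact Finset.card_lt_card (Finset.ssubset_univ_iff.2 hU)
  have huv : u + v + 1 ≤ Fintype.card Q := by
    by_contra hcon
    have : ((Finset.range (Fintype.card Q)).image (fun k : ℕ => a + b + k • d)).card =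
        Fintype.card Q := by
      rw [Finset.card_image_of_injOn, Finset.card_range]
      intro i hi j hj hij
      simp only [Finset.coe_range, Set.mem_Iio] at hi hj
      exact inj i j hi hj (add_left_cancel hij)
    have h5 : (Finset.range (Fintype.card Q)).image (fun k : ℕ => a + b + k • d) ⊆ sp s + sp t := by
      rw [hAB]
      exact Finset.image_subset_image (Finset.range_subset_range.2 (by omega))
    have := Finset.card_le_card h5
    omega
  have sumA : ∀ f : Q → ℕ, ∑ c ∈ sp s, f c = ∑ i ∈ Finset.range (u + 1), f (a + i • d) := by
    intro f
    rw [hAe, Finset.sum_image]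
    intro i hi j hj hij
    simp only [Finset.coe_range, Set.mem_Iio] at hi hj
    exact inj i j (by omega) (by omega) (add_left_cancel hij)
  have sumB : ∀ f : Q → ℕ, ∑ c ∈ sp t, f c = ∑ i ∈ Finset.range (v + 1), f (b + i • d) := by
    intro f
    rw [hBe, Finset.sum_image]
    intro i hi j hj hij
    simp only [Finset.coe_range, Set.mem_Iio] at hi hj
    exact inj i j (by omega) (by omega) (add_left_cancel hij)
  have sumX : ∀ f : Q → ℕ, ∑ c ∈ sp x, f c =
      ∑ i ∈ Finset.range (u + v + 1), f (a + b + i • d) := by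
    intro f
    rw [S.sp_x, hAB, Finset.sum_image]
    intro i hi j hj hij
    simp only [Finset.coe_range, Set.mem_Iio] at hi hj
    exact inj i j (by omega) (by omega) (add_left_cancel hij)
  have ps : ∀ i ≤ u, 0 < s (a + i • d) := fun i hi => (memA _).2 ⟨i, hi, rfl⟩
  have pt : ∀ i ≤ v, 0 < t (b + i • d) := fun i hi => (memB _).2 ⟨i, hi, rfl⟩
  have hseq : Seq h u v (fun i => s (a + i • d)) (fun j => t (b + j • d))
      (fun k => x (a + b + k • d)) := by
    refine ⟨by omega, by omega, fun i _ => S.s_le _, fun i _ => S.t_le _, fun i => S.x_le _,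
      ?_, ?_, ?_, ?_, ?_, ?_⟩
    · intro i hi j hj
      simp only [← hfadd]
      exact S.P2s _ _ (ps i hi) (pt j hj)
    · intro i hi j hj
      simp only [← hfadd]
      exact S.P2t _ _ (ps i hi) (pt j hj)
    · intro i hi j hj
      simp only [← hfadd]
      exact S.P3 _ _ (ps i hi) (pt j hj)
    · intro i hi j hj
      simp only [← hfadd]
      exact fun h5 => S.P4b _ _ h5 (pt j hj)
    · have := S.P5
      rw [← sum_sp x, ← sum_sp s, ← sum_sp t, sumX, sumA, sumB] at this
      exact this
    · have := S.hd
      rw [← sum_sp s, sumA, hk] at this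
      have h6 : (u + 1) * h = u * h + h := by ring
      show u * h + 1 ≤ ∑ i ∈ Finset.range (u + 1), s (a + i • d)
      omega
  have hfull : ∀ k0, (∀ k, k ≠ k0 → k ≤ u + v → x (a + b + k • d) = h) →
      ∀ c, c ≠ a + b + k0 • d → x c = 0 ∨ x c = h := by
    intro k0 hk0 c hc
    rcases Nat.eq_zero_or_pos (x c) with h5 | h5
    · exact Or.inl h5
    · right
      rw [gt_iff_lt, ← mem_sp, S.sp_x, hAB, Finset.mem_image] at h5
      obtain ⟨k, hk, rfl⟩ := h5
      rw [Finset.mem_range] at hk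
      exact hk0 k (fun h6 => hc (by rw [h6])) (by omega)
  have huniq : ∀ i0 j0 : ℕ, i0 ≤ u → j0 ≤ v → (∀ i ≤ u, ∀ j ≤ v, i + j = i0 + j0 → i = i0) →
      ∀ a' b', 0 < s a' → 0 < t b' → a' + b' = (a + i0 • d) + (b + j0 • d) →
        a' = a + i0 • d ∧ b' = b + j0 • d := by
    intro i0 j0 hi0 hj0 hun a' b' ha' hb' he
    rw [memA] at ha'
    rw [memB] at hb'
    obtain ⟨i, hi, rfl⟩ := ha'
    obtain ⟨j, hj, rfl⟩ := hb'
    rw [hfadd, hfadd] at he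
    have h5 := inj _ _ (by omega) (by omega) (add_left_cancel he)
    have h6 := hun i hi j hj h5
    have h7 : j = j0 := by omega
    rw [h6, h7]; exact ⟨rfl, rfl⟩
  rcases hseq.main with hm | hm
  · refine ⟨a + 0 • d, b + 0 • d, ps 0 (by omega), pt 0 (by omega), ?_,
      huniq 0 0 (by omega) (by omega) (fun i _ j _ h5 => by omega)⟩
    rw [hfadd]
    exact hfull _ (fun k hk hk' => hm k (by omega) hk')
  · refine ⟨a + u • d, b + v • d, ps u (by omega), pt v (by omega), ?_,
      huniq u v (by omega) (by omega) (fun i _ j _ h5 => by omega)⟩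
    rw [hfadd]
    exact hfull _ (fun k hk hk' => hm k (by omega))

end TT

namespace TT
variable {G Q : Type*} [AddCommGroup G] [Fintype G] [DecidableEq G]
variable [AddCommGroup Q] [Fintype Q] [DecidableEq Q]

lemma Cfg.full {h : ℕ} {s t x : Q → ℕ} (S : Cfg h s t x) (α β : Q) (hα : 0 < s α) (hβ : 0 < t β)
    (hx : ∀ c, c ≠ α + β → x c = 0 ∨ x c = h) (hP : s α + t β ≤ x (α + β) + 1) :
    (∀ a, a ≠ α → s a = 0 ∨ s a = h) ∧ (∀ b, b ≠ β → t b = 0 ∨ t b = h) := by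
  have h5 := S.P5
  have hAB : α + β ∈ sp x := mem_sp.2 (S.add_pos hα hβ)
  have hα' := mem_sp.2 hα
  have hβ' := mem_sp.2 hβ
  have ex := Finset.add_sum_erase (sp x) x hAB
  have es := Finset.add_sum_erase (sp s) s hα'
  have et := Finset.add_sum_erase (sp t) t hβ'
  have cx := Finset.card_erase_add_one hAB
  have cs := Finset.card_erase_add_one hα'
  have ct := Finset.card_erase_add_one hβ'
  have hcau := S.cau (sp t) ⟨β, hβ'⟩ (by rw [add_comm]; exact S.D1)
  rw [add_comm (sp t), ← S.sp_x] at hcau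
  have hxs : ∑ c ∈ (sp x).erase (α + β), x c = ((sp x).erase (α + β)).card * h := by
    rw [Finset.sum_congr rfl (g := fun _ => h)]
    · simp
    · intro c hc
      obtain ⟨hc1, hc2⟩ := Finset.mem_erase.1 hc
      rw [mem_sp] at hc2
      rcases hx c hc1 with h6 | h6 <;> omega
  have ss : ∑ a ∈ (sp s).erase α, s a + ∑ a ∈ (sp s).erase α, (h - s a) =
      ((sp s).erase α).card * h := by
    rw [← Finset.sum_add_distrib, Finset.sum_congr rfl (g := fun _ => h)]
    · simp
    · intro c _; have := S.s_le c; omega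
  have tt : ∑ a ∈ (sp t).erase β, t a + ∑ a ∈ (sp t).erase β, (h - t a) =
      ((sp t).erase β).card * h := by
    rw [← Finset.sum_add_distrib, Finset.sum_congr rfl (g := fun _ => h)]
    · simp
    · intro c _; have := S.t_le c; omega
  have hm : ((sp s).erase α).card * h + ((sp t).erase β).card * h ≤
      ((sp x).erase (α + β)).card * h := by
    rw [← add_mul]; exact Nat.mul_le_mul_right _ (by omega)
  rw [sum_sp] at ex es et
  have z1 : ∑ a ∈ (sp s).erase α, (h - s a) = 0 := by omega
  have z2 : ∑ a ∈ (sp t).erase β, (h - t a) = 0 := by omega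
  rw [Finset.sum_eq_zero_iff] at z1 z2
  constructor
  · intro a ha
    rcases Nat.eq_zero_or_pos (s a) with h6 | h6
    · exact Or.inl h6
    · have := z1 a (Finset.mem_erase.2 ⟨ha, mem_sp.2 h6⟩)
      have := S.s_le a
      omega
  · intro a ha
    rcases Nat.eq_zero_or_pos (t a) with h6 | h6
    · exact Or.inl h6
    · have := z2 a (Finset.mem_erase.2 ⟨ha, mem_sp.2 h6⟩)
      have := S.t_le a
      omega

/-! ### Fibres of a surjective morphism -/

def cl (π : G →+ Q) (S : Finset G) (a : Q) : Finset G := S.filter (fun g => π g = a)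

@[simp] lemma mem_cl {π : G →+ Q} {S : Finset G} {a : Q} {g : G} :
    g ∈ cl π S a ↔ g ∈ S ∧ π g = a := by simp [cl]

def cn (π : G →+ Q) (S : Finset G) (a : Q) : ℕ := (cl π S a).card

lemma cn_pos {π : G →+ Q} {S : Finset G} {a : Q} : 0 < cn π S a ↔ ∃ g ∈ S, π g = a := by
  rw [cn, Finset.card_pos]
  constructor
  · rintro ⟨g, hg⟩; rw [mem_cl] at hg; exact ⟨g, hg⟩
  · rintro ⟨g, hg⟩; exact ⟨g, mem_cl.2 hg⟩

lemma cl_univ_card {π : G →+ Q} (hπ : Function.Surjective π) (a : Q) :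
    (cl π Finset.univ a).card = (fs π.ker).card := by
  obtain ⟨g, rfl⟩ := hπ a
  have : cl π Finset.univ (π g) = (fs π.ker).image (g + ·) := by
    ext w
    rw [mem_cl, Finset.mem_image]
    constructor
    · rintro ⟨_, hw⟩
      exact ⟨w - g, by rw [mem_fs, AddMonoidHom.mem_ker, map_sub, hw, sub_self], by abel⟩
    · rintro ⟨k, hk, rfl⟩
      rw [mem_fs, AddMonoidHom.mem_ker] at hk
      simp [hk]
  rw [this, Finset.card_image_of_injective _ (add_right_injective g)]

lemma cl_sub_univ {π : G →+ Q} (S : Finset G) (a : Q) : cl π S a ⊆ cl π Finset.univ a :=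
  Finset.filter_subset_filter _ (Finset.subset_univ _)

lemma cn_le {π : G →+ Q} (hπ : Function.Surjective π) (S : Finset G) (a : Q) :
    cn π S a ≤ (fs π.ker).card := by
  rw [← cl_univ_card hπ a]
  exact Finset.card_le_card (cl_sub_univ S a)

lemma mem_of_cn_full {π : G →+ Q} (hπ : Function.Surjective π) {S : Finset G} {g : G}
    (h : cn π S (π g) = (fs π.ker).card) : g ∈ S := by
  have : cl π S (π g) = cl π Finset.univ (π g) := by
    apply Finset.eq_of_subset_of_card_le (cl_sub_univ _ _)
    rw [cl_univ_card hπ]; exact h.ge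
  have h2 : g ∈ cl π S (π g) := by rw [this]; simp
  exact (mem_cl.1 h2).1

lemma sum_cn (π : G →+ Q) (S : Finset G) : ∑ a, cn π S a = S.card :=
  (Finset.card_eq_sum_card_fiberwise (f := π) (t := Finset.univ) (by simp)).symm

lemma card_G {π : G →+ Q} (hπ : Function.Surjective π) :
    Fintype.card G = Fintype.card Q * (fs π.ker).card := by
  rw [← Finset.card_univ (α := G), ← sum_cn π, Finset.sum_congr rfl (g := fun _ => (fs π.ker).card)]
  · simp
  · intro a _; exact cl_univ_card hπ a

lemma sp_cn (π : G →+ Q) (S : Finset G) : sp (cn π S) = S.image π := by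
  ext a
  rw [mem_sp, cn_pos, Finset.mem_image]

/-- preimage -/
def pre (π : G →+ Q) (Z : Finset Q) : Finset G := Finset.univ.filter (fun g => π g ∈ Z)

@[simp] lemma mem_pre {π : G →+ Q} {Z : Finset Q} {g : G} : g ∈ pre π Z ↔ π g ∈ Z := by simp [pre]

lemma card_pre {π : G →+ Q} (hπ : Function.Surjective π) (Z : Finset Q) :
    (pre π Z).card = Z.card * (fs π.ker).card := by
  rw [Finset.card_eq_sum_card_fiberwise (f := π) (t := Z) (by intro g hg; simpa using hg),
    Finset.sum_congr rfl (g := fun _ => (fs π.ker).card)]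
  · simp
  · intro a ha
    rw [← cl_univ_card hπ a]
    congr 1
    ext g
    simp only [Finset.mem_filter, mem_pre, mem_cl, Finset.mem_univ, true_and, and_iff_right_iff_imp]
    rintro rfl; exact ha

lemma pre_add {π : G →+ Q} (hπ : Function.Surjective π) (Z : Finset Q) (S : Finset G) :
    pre π Z + S = pre π (Z + S.image π) := by
  ext g
  rw [Finset.mem_add, mem_pre, Finset.mem_add]
  constructor
  · rintro ⟨a, ha, b, hb, rfl⟩
    exact ⟨π a, by simpa using ha, π b, Finset.mem_image_of_mem _ hb, by simp⟩
  · rintro ⟨a, ha, b, hb, he⟩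
    obtain ⟨w, hw, rfl⟩ := Finset.mem_image.1 hb
    refine ⟨g - w, ?_, w, hw, by abel⟩
    rw [mem_pre, map_sub, ← he]; simpa using ha

lemma cl_add_sub (π : G →+ Q) (S T : Finset G) (a b : Q) :
    cl π S a + cl π T b ⊆ cl π (S + T) (a + b) := by
  intro g hg
  obtain ⟨y, hy, z, hz, rfl⟩ := Finset.mem_add.1 hg
  rw [mem_cl] at hy hz ⊢
  exact ⟨Finset.add_mem_add hy.1 hz.1, by rw [map_add, hy.2, hz.2]⟩

lemma cn_P2s (π : G →+ Q) (S T : Finset G) (a b : Q) (hb : 0 < cn π T b) :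
    cn π S a ≤ cn π (S + T) (a + b) :=
  (Finset.card_le_card_add_right (Finset.card_pos.1 hb)).trans
    (Finset.card_le_card (cl_add_sub π S T a b))

lemma cn_P2t (π : G →+ Q) (S T : Finset G) (a b : Q) (ha : 0 < cn π S a) :
    cn π T b ≤ cn π (S + T) (a + b) :=
  (Finset.card_le_card_add_left (Finset.card_pos.1 ha)).trans
    (Finset.card_le_card (cl_add_sub π S T a b))

lemma cn_P3 {π : G →+ Q} (hπ : Function.Surjective π) (S T : Finset G) (a b : Q)
    (h : (fs π.ker).card < cn π S a + cn π T b) : cn π (S + T) (a + b) = (fs π.ker).card := by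
  have : cl π (S + T) (a + b) = cl π Finset.univ (a + b) := by
    apply Finset.Subset.antisymm (cl_sub_univ _ _)
    intro w hw
    have hw2 := (mem_cl.1 hw).2
    refine mem_cl.2 ⟨?_, hw2⟩
    by_contra hcon
    have hdis : Disjoint (cl π S a) ((cl π T b).image (fun g => w - g)) := by
      rw [Finset.disjoint_left]
      intro y hy hy2
      obtain ⟨z, hz, rfl⟩ := Finset.mem_image.1 hy2
      exact hcon (Finset.mem_add.2 ⟨w - z, (mem_cl.1 hy).1, z, (mem_cl.1 hz).1, by abel⟩)
    have hsub : cl π S a ∪ (cl π T b).image (fun g => w - g) ⊆ cl π Finset.univ a := by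
      apply Finset.union_subset (cl_sub_univ _ _)
      intro y hy
      obtain ⟨z, hz, rfl⟩ := Finset.mem_image.1 hy
      rw [mem_cl] at hz ⊢
      refine ⟨Finset.mem_univ _, ?_⟩
      rw [map_sub, hw2, hz.2]; abel
    have h1 := Finset.card_le_card hsub
    rw [Finset.card_union_of_disjoint hdis,
      Finset.card_image_of_injective _ sub_right_injective, cl_univ_card hπ] at h1
    unfold cn at h; omega
  rw [cn, this, cl_univ_card hπ]

end TT

namespace TT
variable {G Q : Type*} [AddCommGroup G] [Fintype G] [DecidableEq G]
variable [AddCommGroup Q] [Fintype Q] [DecidableEq Q]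

lemma dvd_of_periodic (K : AddSubgroup G) (U : Finset G)
    (hU : ∀ k ∈ K, ∀ y ∈ U, k + y ∈ U) : (fs K).card ∣ U.card := by
  have hs : Function.Surjective (QuotientAddGroup.mk' K) := QuotientAddGroup.mk'_surjective K
  have : U = pre (QuotientAddGroup.mk' K) (U.image (QuotientAddGroup.mk' K)) := by
    ext g
    rw [mem_pre, Finset.mem_image]
    constructor
    · intro hg; exact ⟨g, hg, rfl⟩
    · rintro ⟨w, hw, he⟩
      rw [QuotientAddGroup.mk'_apply, QuotientAddGroup.mk'_apply, QuotientAddGroup.eq] at he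
      have := hU _ he w hw
      rwa [show -w + g + w = g by abel] at this
  rw [this, card_pre hs, QuotientAddGroup.ker_mk']
  exact Dvd.intro_left _ rfl

lemma cn_P4 {π : G →+ Q} (hπ : Function.Surjective π) (S T : Finset G) (a b : Q)
    (h1 : (fs π.ker).card < 2 * cn π S a) (h2 : 0 < cn π T b)
    (h3 : cn π (S + T) (a + b) < (fs π.ker).card) :
    (fs π.ker).card + 3 * cn π T b ≤ 3 * cn π (S + T) (a + b) ∧
      cn π S a + 2 * cn π T b ≤ 2 * cn π (S + T) (a + b) := by
  have hA : (cl π S a).Nonempty := Finset.card_pos.1 (by unfold cn at h1; omega)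
  have hB : (cl π T b).Nonempty := Finset.card_pos.1 h2
  have hk := kneser _ _ hA hB
  have hC := Finset.card_le_card (cl_add_sub π S T a b)
  set C := cl π S a + cl π T b with hCdef
  obtain ⟨c0, hc0⟩ : C.Nonempty := hA.add hB
  set K := st C with hKdef
  have hCπ : ∀ c ∈ C, π c = a + b := fun c hc => (mem_cl.1 (cl_add_sub π S T a b hc)).2
  have hKH : ∀ k ∈ K, π k = 0 := by
    intro k hk
    have h5 := (mem_st.1 hk c0).2 hc0
    have h6 := hCπ _ h5
    rw [map_add, hCπ _ hc0] at h6
    simpa using h6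
  have hkp := fs_pos K
  obtain ⟨m, hm⟩ := dvd_of_periodic K (fs π.ker) (by
    intro k hk y hy
    rw [mem_fs, AddMonoidHom.mem_ker] at hy ⊢
    rw [map_add, hKH k hk, hy, add_zero])
  have per : ∀ U : Finset G, ∀ k ∈ K, ∀ y ∈ U + fs K, k + y ∈ U + fs K := by
    intro U k hk y hy
    obtain ⟨w, hw, z, hz, rfl⟩ := Finset.mem_add.1 hy
    rw [mem_fs] at hz
    exact Finset.mem_add.2 ⟨w, hw, k + z, by rw [mem_fs]; exact K.add_mem hk hz, by abel⟩
  obtain ⟨σ, hσ⟩ := dvd_of_periodic K _ (per (cl π S a))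
  have le : ∀ U : Finset G, U.card ≤ (U + fs K).card := fun U =>
    Finset.card_le_card_add_right (Finset.card_pos.1 hkp)
  have l1 := le (cl π S a)
  have l2 := le (cl π T b)
  have l3 : (fs K).card ≤ (cl π T b + fs K).card := Finset.card_le_card_add_left hB
  change cn π S a ≤ _ at l1
  change cn π T b ≤ _ at l2
  change _ ≤ cn π (S + T) (a + b) at hC
  rw [hσ] at hk l1
  rw [hm] at h1 h3 ⊢
  generalize cn π S a = s at *
  generalize cn π T b = t at *
  generalize cn π (S + T) (a + b) = x at *
  generalize (fs K).card = k at *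
  have q1 : m + 1 ≤ 2 * σ := by
    have : k * m < k * (2 * σ) := by
      have : k * (2 * σ) = 2 * (k * σ) := by ring
      omega
    exact lt_of_mul_lt_mul_left this (Nat.zero_le _)
  have q2 : σ + 1 ≤ m := by
    have : k * σ < k * m := by omega
    exact lt_of_mul_lt_mul_left this (Nat.zero_le _)
  have q3 : k * (m + 3) ≤ k * (3 * σ) := Nat.mul_le_mul_left _ (by omega)
  have q4 : k * (σ + 2) ≤ k * (2 * σ) := Nat.mul_le_mul_left _ (by omega)
  have r1 : k * (m + 3) = k * m + 3 * k := by ring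
  have r2 : k * (3 * σ) = 3 * (k * σ) := by ring
  have r3 : k * (σ + 2) = k * σ + 2 * k := by ring
  have r4 : k * (2 * σ) = 2 * (k * σ) := by ring
  constructor <;> omega

lemma ne_univ_iff (X : Finset G) : X.card ≤ Nat.card G - 1 ↔ X ≠ Finset.univ := by
  rw [Nat.card_eq_fintype_card]
  have h0 : 0 < Fintype.card G := Fintype.card_pos
  rw [← Finset.card_lt_iff_ne_univ]
  omega

lemma kappa_le (S X : Finset G) (hX : X.Nonempty) (hU : X + S ≠ Finset.univ) :
    kappa 1 S ≤ (X + S).card - X.card := by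
  have h1 : 1 ≤ X.card := Finset.card_pos.2 hX
  have h2 := (ne_univ_iff (X + S)).2 hU
  unfold kappa
  rw [if_pos ⟨X, h1, h2⟩]
  exact Nat.sInf_le ⟨X, h1, h2, rfl⟩

lemma natcard_fs (K : AddSubgroup G) : Nat.card K = (fs K).card :=
  Nat.subtype_card (fs K) (by simp)

lemma hyp_data {π : G →+ Q} (hπ : Function.Surjective π) (S : Finset G) (h0 : 0 ∈ S)
    (hgen : AddSubgroup.closure (S : Set G) = ⊤) (hH : IsHyperAtom S π.ker) :
    (sp (cn π S)).card * (fs π.ker).card + 1 ≤ S.card + (fs π.ker).card ∧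
    2 ≤ (sp (cn π S)).card ∧ Cauchy (sp (cn π S)) ∧ NoSub (sp (cn π S)) := by
  obtain ⟨⟨HF, hHF, hF1, hF2, hF3⟩, hmax⟩ := hH
  set h := (fs π.ker).card with hh
  have hp : 0 < h := fs_pos _
  have e1 : HF = pre π {0} := by
    ext g
    rw [← Finset.mem_coe, hHF, SetLike.mem_coe, AddMonoidHom.mem_ker]
    simp
  rw [sp_cn]
  set A := S.image π with hA
  have hA0 : (0 : Q) ∈ A := Finset.mem_image.2 ⟨0, h0, map_zero π⟩
  have hAp : 1 ≤ A.card := Finset.card_pos.2 ⟨0, hA0⟩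
  have z0 : ({0} : Finset Q) + A = A := by
    rw [Finset.singleton_add]; simp
  rw [ne_univ_iff] at hF2
  rw [e1, pre_add hπ, z0] at hF2 hF3
  rw [card_pre hπ, card_pre hπ, Finset.card_singleton, ← hh] at hF3
  have preu : ∀ Z : Finset Q, pre π Z ≠ Finset.univ ↔ Z ≠ Finset.univ := by
    intro Z
    apply not_congr
    constructor
    · intro h
      ext z
      obtain ⟨g, rfl⟩ := hπ z
      rw [← mem_pre, h]; simp
    · rintro rfl; ext g; simp
  rw [preu] at hF2
  have cau : Cauchy A := by
    intro Z hZ hU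
    have hne : (pre π Z).Nonempty := by
      obtain ⟨z, hz⟩ := hZ
      obtain ⟨g, rfl⟩ := hπ z
      exact ⟨g, by simpa⟩
    have h1 := kappa_le S (pre π Z) hne (by rw [pre_add hπ, preu]; exact hU)
    rw [pre_add hπ, card_pre hπ, card_pre hπ, ← hF3, ← Nat.sub_mul, ← Nat.sub_mul] at h1
    have h2 := le_of_mul_le_mul_right h1 hp
    have h3 : Z.card ≤ (Z + A).card := Finset.card_le_card_add_right ⟨0, hA0⟩
    rw [← hA] at h2
    omega
  refine ⟨?_, ?_, cau, ?_⟩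
  · have hSu : ({0} : Finset G) + S ≠ Finset.univ := by
      rw [Finset.singleton_add]
      intro h5
      apply hF2
      ext z
      obtain ⟨g, rfl⟩ := hπ z
      have : g ∈ S := by
        have h6 : g ∈ (Finset.univ : Finset G) := by simp
        rw [← h5] at h6
        simpa using h6
      simp only [Finset.mem_univ, iff_true]
      exact Finset.mem_image_of_mem π this
    have h1 := kappa_le S {0} (by simp) hSu
    rw [← hF3, Finset.singleton_add] at h1
    simp only [Finset.card_singleton, one_mul, zero_vadd] at h1
    have : 1 ≤ S.card := Finset.card_pos.2 ⟨0, h0⟩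
    have : 1 * h ≤ A.card * h := Nat.mul_le_mul_right _ hAp
    omega
  · by_contra hcon
    have hA1 : A = {0} := by
      obtain ⟨w, hw⟩ := Finset.card_eq_one.1 (show A.card = 1 by omega)
      rw [hw] at hA0 ⊢
      rw [Finset.mem_singleton.1 hA0]
    have hle : AddSubgroup.closure (S : Set G) ≤ π.ker := by
      rw [AddSubgroup.closure_le]
      intro g hg
      have : π g ∈ A := Finset.mem_image_of_mem π hg
      rw [hA1] at this
      simpa using this
    rw [hgen, top_le_iff] at hle
    apply hF2
    rw [hA1]
    ext z
    obtain ⟨g, rfl⟩ := hπ z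
    have : g ∈ π.ker := by rw [hle]; trivial
    simpa using this
  · intro K hK hU
    by_contra hcon
    push Not at hcon
    have hKn : (fs K).Nonempty := Finset.card_pos.1 (fs_pos K)
    have hc := cau (fs K) hKn hU
    have hpk : pre π (fs K) = fs (K.comap π) := by
      ext g; simp
    have hfr := hmax (K.comap π) (fs (K.comap π)) (by ext g; simp) ⟨fs_pos _, ?_, ?_⟩
    · rw [natcard_fs, natcard_fs, ← hpk, card_pre hπ, ← hh] at hfr
      have h5 : 2 * h ≤ (fs K).card * h := Nat.mul_le_mul_right _ (two_le_fs hK)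
      omega
    · rw [ne_univ_iff, ← hpk, pre_add hπ, preu]; exact hU
    · rw [← hF3, ← hpk, pre_add hπ, card_pre hπ, card_pre hπ, ← Nat.sub_mul, ← Nat.sub_mul]
      rw [← hA]
      congr 1
      omega

end TT

namespace TT
variable {G Q : Type*} [AddCommGroup G] [Fintype G] [DecidableEq G]
variable [AddCommGroup Q] [Fintype Q] [DecidableEq Q]

lemma qper {π : G →+ Q} (hπ : Function.Surjective π) (S : Finset G) (α : Q)
    (h : ∀ a, a ≠ α → cn π S a = 0 ∨ cn π S a = (fs π.ker).card) :
    QuasiPeriodic (π.ker : Set G) (S : Set G) := by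
  obtain ⟨y, rfl⟩ := hπ α
  refine ⟨y, ?_⟩
  have hm : ∀ g, g ∈ (({y} : Set G) + (π.ker : Set G)) ↔ π g = π y := by
    intro g
    rw [Set.singleton_add, Set.mem_image]
    constructor
    · rintro ⟨k, hk, rfl⟩
      rw [SetLike.mem_coe, AddMonoidHom.mem_ker] at hk
      rw [map_add, hk, add_zero]
    · intro hg
      exact ⟨g - y, by rw [SetLike.mem_coe, AddMonoidHom.mem_ker, map_sub, hg, sub_self], by abel⟩
  ext g
  constructor
  · intro hg
    obtain ⟨w, hw, k, hk, rfl⟩ := Set.mem_add.1 hg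
    rw [SetLike.mem_coe, AddMonoidHom.mem_ker] at hk
    rw [Set.mem_sdiff, hm] at hw ⊢
    have e : π (w + k) = π w := by rw [map_add, hk, add_zero]
    rw [e]
    refine ⟨?_, hw.2⟩
    have h1 := h _ hw.2
    have h2 : 0 < cn π S (π w) := cn_pos.2 ⟨w, by simpa using hw.1, rfl⟩
    have h3 : cn π S (π w) = (fs π.ker).card := by omega
    rw [← e] at h3
    simpa using mem_of_cn_full hπ h3
  · intro hg
    exact Set.mem_add.2 ⟨g, hg, 0, π.ker.zero_mem, by simp⟩

lemma main {π : G →+ Q} (hπ : Function.Surjective π) (S T : Finset G)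
    (hgen : AddSubgroup.closure (S : Set G) = ⊤)
    (hST : S.card ≤ T.card)
    (hap : IsAperiodic (S + T))
    (h0S : (0 : G) ∈ S) 
    (heq : (S + T).card + 1 = S.card + T.card)
    (hbound : 3 * (S + T).card ≤ 2 * Nat.card G + 2)
    (hH : IsHyperAtom S π.ker) :
    QuasiPeriodic (π.ker : Set G) (S : Set G) ∧ QuasiPeriodic (π.ker : Set G) (T : Set G) ∧
      ∃ d : Q, IsAPWith d (S.image π) ∧ IsAPWith d (T.image π) := by
  obtain ⟨hd, two, cau, hN⟩ := hyp_data hπ S h0S hgen hH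
  have hp : 0 < (fs π.ker).card := fs_pos _
  have cG := card_G hπ
  rw [Nat.card_eq_fintype_card, cG] at hbound
  have hC : Cfg (fs π.ker).card (cn π S) (cn π T) (cn π (S + T)) := by
    refine ⟨hp, cn_le hπ S, cn_le hπ T, cn_le hπ _, fun a b _ hb => cn_P2s π S T a b hb,
      fun a b ha _ => cn_P2t π S T a b ha, fun a b _ _ h5 => cn_P3 hπ S T a b h5,
      fun a b h1 h2 h3 => (cn_P4 hπ S T a b h1 h2 h3).1,
      fun a b h1 h2 h3 => (cn_P4 hπ S T a b h1 h2 h3).2, ?_, ?_, ?_, ?_, ?_, two, cau, ?_⟩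
    · rw [sum_cn, sum_cn, sum_cn]; exact heq
    · intro c hc
      obtain ⟨g, hg, rfl⟩ := cn_pos.1 hc
      obtain ⟨a, ha, b, hb, rfl⟩ := Finset.mem_add.1 hg
      exact ⟨π a, π b, cn_pos.2 ⟨a, ha, rfl⟩, cn_pos.2 ⟨b, hb, rfl⟩, (map_add π a b).symm⟩
    · rw [sum_cn]; exact hbound
    · rw [sum_cn]; exact hd
    · rw [sum_cn, sum_cn]; exact hST
    · obtain ⟨u, hu⟩ : ∃ u, (sp (cn π S)).card = u + 1 := ⟨(sp (cn π S)).card - 1, by omega⟩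
      rw [hu] at hd ⊢
      have e : (u + 1) * (fs π.ker).card = u * (fs π.ker).card + (fs π.ker).card := by ring
      have h1 : (3 * u) * (fs π.ker).card < Fintype.card Q * (fs π.ker).card := by
        have : (3 * u) * (fs π.ker).card = 3 * (u * (fs π.ker).card) := by ring
        omega
      have := lt_of_mul_lt_mul_right h1 (Nat.zero_le _)
      omega
  obtain ⟨d, hA, hB, α, β, hα, hβ, hx, huniq⟩ := hC.concl hN
  have hP : cl π (S + T) (α + β) = cl π S α + cl π T β := by
    apply Finset.Subset.antisymm _ (cl_add_sub π S T α β)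
    intro g hg
    rw [mem_cl] at hg
    obtain ⟨a, ha, b, hb, rfl⟩ := Finset.mem_add.1 hg.1
    have h1 := huniq (π a) (π b) (cn_pos.2 ⟨a, ha, rfl⟩) (cn_pos.2 ⟨b, hb, rfl⟩)
      (by rw [← map_add]; exact hg.2)
    exact Finset.add_mem_add (mem_cl.2 ⟨ha, h1.1⟩) (mem_cl.2 ⟨hb, h1.2⟩)
  have hAn : (cl π S α).Nonempty := Finset.card_pos.1 hα
  have hBn : (cl π T β).Nonempty := Finset.card_pos.1 hβ
  have hst : st (cl π S α + cl π T β) = ⊥ := by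
    rw [eq_bot_iff]
    intro g hg
    rw [← hP, mem_st] at hg
    rw [AddSubgroup.mem_bot]
    apply hap
    obtain ⟨c0, hc0⟩ := hAn.add hBn
    rw [← hP] at hc0
    have hgk : π g = 0 := by
      have h1 := (mem_cl.1 ((hg c0).2 hc0)).2
      rw [map_add, (mem_cl.1 hc0).2] at h1
      simpa using h1
    have key : ∀ w, g + w ∈ S + T ↔ w ∈ S + T := by
      intro w
      have e : π (g + w) = π w := by rw [map_add, hgk, zero_add]
      by_cases hw : π w = α + β
      · have := hg w
        rw [mem_cl, mem_cl, e] at this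
        simpa [hw] using this
      · rcases hx _ hw with h1 | h1
        · have n1 : ∀ z, π z = π w → z ∉ S + T := by
            intro z hz hz2
            have : 0 < cn π (S + T) (π w) := cn_pos.2 ⟨z, hz2, hz⟩
            omega
          exact ⟨fun h5 => (n1 _ e h5).elim, fun h5 => (n1 _ rfl h5).elim⟩
        · have n1 : w ∈ S + T := mem_of_cn_full hπ h1
          have n2 : g + w ∈ S + T := mem_of_cn_full hπ (by rw [e]; exact h1)
          exact ⟨fun _ => n1, fun _ => n2⟩
    ext z
    constructor
    · intro hz
      obtain ⟨w, hw, y, hy, rfl⟩ := Finset.mem_add.1 hz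
      rw [Finset.mem_singleton.1 hy, add_comm w g]
      exact (key w).2 hw
    · intro hz
      refine Finset.mem_add.2 ⟨z - g, ?_, g, by simp, by abel⟩
      rw [← key]; simpa using hz
  have hk := kneser _ _ hAn hBn
  rw [hst, fs_bot, ← hP] at hk
  have hfull := hC.full α β hα hβ hx (by
    simp at hk
    unfold cn; omega)
  refine ⟨qper hπ S α hfull.1, qper hπ T β hfull.2, d, ?_, ?_⟩
  · rw [← sp_cn]; exact hA
  · rw [← sp_cn]; exact hB

end TT

/-- The `2|G|/3` theorem. -/
theorem stmt16 {G : Type*} [AddCommGroup G] [Fintype G] [DecidableEq G] (S T : Finset G)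
    (hG2 : 2 ≤ Nat.card G)
    (hgen : AddSubgroup.closure (S : Set G) = ⊤)
    (hST : S.card ≤ T.card)
    (hap : IsAperiodic (S + T))
    (h0S : (0 : G) ∈ S) (h0T : (0 : G) ∈ T)
    (heq : (S + T).card + 1 = S.card + T.card)
    (hbound : 3 * (S + T).card ≤ 2 * Nat.card G + 2)
    (H : AddSubgroup G) (hH : IsHyperAtom S H) :
    QuasiPeriodic (H : Set G) (S : Set G) ∧ QuasiPeriodic (H : Set G) (T : Set G) ∧
      ∃ d : G ⧸ H, IsAPWith d (S.image (QuotientAddGroup.mk' H)) ∧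
        IsAPWith d (T.image (QuotientAddGroup.mk' H)) := by
  have hk := QuotientAddGroup.ker_mk' H
  have := TT.main (QuotientAddGroup.mk'_surjective H) S T hgen hST hap h0S heq hbound
    (by rw [hk]; exact hH)
  rw [hk] at this
  exact this
end

section
/- Let A and B be finite subsets of an abelian group G with |A + B| = |A| + |B| - 1, and suppose A + B is periodic with period group Q ≠ {0}. Let ψ : G → G/Q be the canonical morphism and suppose there is c ∈ A + B with |(c - A) ∩ B| = 1. Write the Q-coset decompositions A = A₀ ∪ ⋯ ∪ A_u and B = B₀ ∪ ⋯ ∪ B_t with c ∈ A₀ + B₀. Then |ψ(A) + ψ(B)| = |ψ(A)| + |ψ(B)| - 1, |Aᵢ| = |Q| for all i ≥ 1, |Bⱼ| = |Q| for all j ≥ 1, and |A₀| + |B₀| ≤ |Q| + 1. -/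
open scoped Pointwise Classical

namespace KneserAux

lemma card_le_of_closed {G : Type*} [AddCommGroup G] (H : AddSubgroup G)
    (s : Finset G) (x : G) (h : ∀ g ∈ H, x + g ∈ s) : Nat.card H ≤ s.card := by
  have hf : Function.Injective (fun g : H => (⟨x + g, h g g.2⟩ : s)) := by
    intro a b hab
    simpa using hab
  have := Nat.card_le_card_of_injective _ hf
  simpa using this

lemma finite_of_closed {G : Type*} [AddCommGroup G] (H : AddSubgroup G)
    (s : Finset G) (x : G) (h : ∀ g ∈ H, x + g ∈ s) : Finite H := by
  have hf : Function.Injective (fun g : H => (⟨x + g, h g g.2⟩ : s)) := by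
    intro a b hab
    simpa using hab
  exact Finite.of_injective _ hf

lemma card_le_of_sub {G : Type*} [AddCommGroup G] (H : AddSubgroup G) [Finite H]
    (s : Finset G) (x : G) (h : ∀ y ∈ s, y - x ∈ H) : s.card ≤ Nat.card H := by
  have hf : Function.Injective (fun y : s => (⟨y - x, h y y.2⟩ : H)) := by
    intro a b hab
    have h' := congrArg Subtype.val hab
    exact Subtype.ext (sub_left_injective h')
  have := Nat.card_le_card_of_injective _ hf
  simpa using this

lemma prod_le {G : Type*} [AddCommGroup G] (H1 H2 : AddSubgroup G) [Finite H1] [Finite H2]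
    (s1 s2 t : Finset G) (h1 : ∀ a ∈ s1, a ∈ H1) (h2 : ∀ a ∈ s2, a ∈ H2) (x : G)
    (ht : ∀ a ∈ s1, ∀ b ∈ s2, x + a + b ∈ t) :
    s1.card * s2.card ≤ Nat.card (H1 ⊓ H2 : AddSubgroup G) * t.card := by
  have : Finite (H1 ⊓ H2 : AddSubgroup G) :=
    Finite.of_injective _ (AddSubgroup.inclusion_injective (inf_le_left : H1 ⊓ H2 ≤ H1))
  rw [← Finset.card_product]
  apply Finset.card_le_mul_card_image_of_maps_to (f := fun p : G × G => x + p.1 + p.2)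
  · intro p hp
    rw [Finset.mem_product] at hp
    exact ht _ hp.1 _ hp.2
  · intro y _
    by_cases he : ((s1 ×ˢ s2).filter (fun p : G × G => x + p.1 + p.2 = y)).Nonempty
    · obtain ⟨p0, hp0⟩ := he
      have hinj : Set.InjOn (Prod.fst : G × G → G)
          ((s1 ×ˢ s2).filter (fun p : G × G => x + p.1 + p.2 = y) : Finset (G × G)) := by
        rintro ⟨a, b⟩ hp ⟨a', b'⟩ hq hpq
        simp only [Finset.coe_filter, Set.mem_ofPred_eq] at hp hq hpq
        have := hp.2.trans hq.2.symm
        subst hpq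
        simp at this
        simp [this]
      rw [← Finset.card_image_of_injOn hinj]
      apply card_le_of_sub _ _ p0.1
      intro z hz
      rw [Finset.mem_image] at hz
      obtain ⟨p, hp, rfl⟩ := hz
      simp only [Finset.mem_filter, Finset.mem_product] at hp hp0
      refine ⟨H1.sub_mem (h1 _ hp.1.1) (h1 _ hp0.1.1), ?_⟩
      have e : p.1 - p0.1 = p0.2 - p.2 := by
        have := hp.2.trans hp0.2.symm
        rw [add_assoc, add_assoc, add_right_inj] at this
        rw [sub_eq_sub_iff_add_eq_add, this, add_comm]
      rw [e]
      exact H2.sub_mem (h2 _ hp0.1.2) (h2 _ hp.1.2)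
    · rw [Finset.not_nonempty_iff_eq_empty] at he
      rw [he]; simp

lemma key {G : Type*} [AddCommGroup G] (C1 C2 : Finset G) (H1 H2 : AddSubgroup G)
    [Finite H1] [Finite H2]
    (h1 : ∀ g ∈ H1, ∀ x ∈ C1, x + g ∈ C1) (h2 : ∀ g ∈ H2, ∀ x ∈ C2, x + g ∈ C2)
    (x : G) (hx1 : x ∈ C1) (hx2 : x ∉ C2) :
    Nat.card H2 ≤ (C1 \ C2).card + Nat.card (H1 ⊓ H2 : AddSubgroup G) ∨
    Nat.card H1 ≤ (C2 \ C1).card + Nat.card (H1 ⊓ H2 : AddSubgroup G) ∨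
    Nat.card H1 ≤ (C1 \ C2).card := by
  have h1' : ∀ g ∈ H1, ∀ x, x + g ∈ C1 ↔ x ∈ C1 := fun g hg x =>
    ⟨fun h => by simpa using h1 (-g) (H1.neg_mem hg) _ h, h1 g hg x⟩
  have h2' : ∀ g ∈ H2, ∀ x, x + g ∈ C2 ↔ x ∈ C2 := fun g hg x =>
    ⟨fun h => by simpa using h2 (-g) (H2.neg_mem hg) _ h, h2 g hg x⟩
  set F1 := (Set.toFinite (H1 : Set G)).toFinset with hF1
  set F2 := (Set.toFinite (H2 : Set G)).toFinset with hF2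
  have m1 : ∀ g, g ∈ F1 ↔ g ∈ H1 := by simp [hF1]
  have m2 : ∀ g, g ∈ F2 ↔ g ∈ H2 := by simp [hF2]
  have c1 : F1.card = Nat.card H1 := by
    rw [hF1, ← Set.ncard_eq_toFinset_card (H1 : Set G)]; rfl
  have c2 : F2.card = Nat.card H2 := by
    rw [hF2, ← Set.ncard_eq_toFinset_card (H2 : Set G)]; rfl
  have e1 := Finset.card_filter_add_card_filter_not (s := F1) (fun a => x + a ∈ C2)
  have e2 := Finset.card_filter_add_card_filter_not (s := F2) (fun a => x + a ∈ C1)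
  have p1 := prod_le H1 H2 (F1.filter (fun a => ¬ x + a ∈ C2)) (F2.filter (fun a => x + a ∈ C1))
    (C1 \ C2) (by simp +contextual [m1]) (by simp +contextual [m2]) x (by
      intro a ha b hb
      simp only [Finset.mem_filter, m1, m2] at ha hb
      rw [Finset.mem_sdiff, h2' b hb.1, add_right_comm, h1' a ha.1]
      exact ⟨hb.2, ha.2⟩)
  have p2 := prod_le H1 H2 (F1.filter (fun a => x + a ∈ C2)) (F2.filter (fun a => ¬ x + a ∈ C1))
    (C2 \ C1) (by simp +contextual [m1]) (by simp +contextual [m2]) x (by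
      intro a ha b hb
      simp only [Finset.mem_filter, m1, m2] at ha hb
      rw [Finset.mem_sdiff, h2' b hb.1, add_right_comm, h1' a ha.1]
      exact ⟨ha.2, hb.2⟩)
  have qV : Nat.card (H1 ⊓ H2 : AddSubgroup G) ≤ (F2.filter (fun a => x + a ∈ C1)).card := by
    apply card_le_of_closed _ _ 0
    rintro g ⟨hg1, hg2⟩
    simp only [zero_add, Finset.mem_filter, m2]
    exact ⟨hg2, h1 g hg1 x hx1⟩
  have qU' : Nat.card (H1 ⊓ H2 : AddSubgroup G) ≤ (F1.filter (fun a => ¬ x + a ∈ C2)).card := by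
    apply card_le_of_closed _ _ 0
    rintro g ⟨hg1, hg2⟩
    simp only [zero_add, Finset.mem_filter, m1]
    exact ⟨hg1, fun h => hx2 ((h2' g hg2 x).1 h)⟩
  have qU : (F1.filter (fun a => x + a ∈ C2)).card = 0 ∨
      Nat.card (H1 ⊓ H2 : AddSubgroup G) ≤ (F1.filter (fun a => x + a ∈ C2)).card := by
    rcases (F1.filter (fun a => x + a ∈ C2)).eq_empty_or_nonempty with h | ⟨a, ha⟩
    · left; rw [h]; rfl
    · right
      simp only [Finset.mem_filter, m1] at ha
      apply card_le_of_closed _ _ a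
      rintro g ⟨hg1, hg2⟩
      simp only [Finset.mem_filter, m1]
      exact ⟨H1.add_mem ha.1 hg1, by rw [← add_assoc]; exact h2 g hg2 _ ha.2⟩
  have qV' : (F2.filter (fun a => ¬ x + a ∈ C1)).card = 0 ∨
      Nat.card (H1 ⊓ H2 : AddSubgroup G) ≤ (F2.filter (fun a => ¬ x + a ∈ C1)).card := by
    rcases (F2.filter (fun a => ¬ x + a ∈ C1)).eq_empty_or_nonempty with h | ⟨a, ha⟩
    · left; rw [h]; rfl
    · right
      simp only [Finset.mem_filter, m2] at ha
      apply card_le_of_closed _ _ a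
      rintro g ⟨hg1, hg2⟩
      simp only [Finset.mem_filter, m2]
      exact ⟨H2.add_mem ha.1 hg2, by rw [← add_assoc, h1' g hg1]; exact ha.2⟩
  have : Finite (H1 ⊓ H2 : AddSubgroup G) :=
    Finite.of_injective _ (AddSubgroup.inclusion_injective (inf_le_left : H1 ⊓ H2 ≤ H1))
  have hpos : 0 < Nat.card (H1 ⊓ H2 : AddSubgroup G) := Nat.card_pos
  rw [c1] at e1
  rw [c2] at e2
  generalize (F1.filter (fun a => x + a ∈ C2)).card = U at *
  generalize (F1.filter (fun a => ¬ x + a ∈ C2)).card = U' at *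
  generalize (F2.filter (fun a => x + a ∈ C1)).card = V at *
  generalize (F2.filter (fun a => ¬ x + a ∈ C1)).card = V' at *
  generalize Nat.card (H1 ⊓ H2 : AddSubgroup G) = h at *
  generalize (C1 \ C2).card = X at *
  generalize (C2 \ C1).card = Y at *
  rw [← e1, ← e2]
  rcases qU with qU | qU
  · right; right
    subst qU
    have : h * U' ≤ h * X := by nlinarith
    have := Nat.le_of_mul_le_mul_left this hpos
    omega
  rcases qV' with qV' | qV'
  · left
    subst qV'
    have : h * V ≤ h * X := by nlinarith
    have := Nat.le_of_mul_le_mul_left this hpos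
    omega
  by_contra! hcon
  obtain ⟨k1, k2, -⟩ := hcon
  obtain ⟨p, rfl⟩ := Nat.exists_eq_add_of_le qU'
  obtain ⟨q, rfl⟩ := Nat.exists_eq_add_of_le qV'
  have k1' : X < V + q := by omega
  have k2' : Y < U + p := by omega
  have r1 : (h + p) * V < h * (V + q) := p1.trans_lt (Nat.mul_lt_mul_of_pos_left k1' hpos)
  have r2 : U * (h + q) < h * (U + p) := p2.trans_lt (Nat.mul_lt_mul_of_pos_left k2' hpos)
  have s1 : h * p < h * q := by nlinarith
  have s2 : h * q < h * p := by nlinarith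
  omega

def P {G : Type*} [AddCommGroup G] (N : ℕ) (C : Finset G) : Prop :=
  ∃ H : AddSubgroup G, Finite H ∧ (∀ g ∈ H, ∀ x ∈ C, x + g ∈ C) ∧ N ≤ C.card + Nat.card H

lemma P_union {G : Type*} [AddCommGroup G] (N : ℕ) (C1 C2 : Finset G)
    (hP1 : P N C1) (hP2 : P N C2) : P N (C1 ∪ C2) := by
  by_cases s12 : C1 ⊆ C2
  · rwa [Finset.union_eq_right.2 s12]
  by_cases s21 : C2 ⊆ C1
  · rwa [Finset.union_eq_left.2 s21]
  obtain ⟨H1, f1, h1, n1⟩ := hP1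
  obtain ⟨H2, f2, h2, n2⟩ := hP2
  obtain ⟨x, hx1, hx2⟩ := Finset.not_subset.1 s12
  obtain ⟨y, hy1, hy2⟩ := Finset.not_subset.1 s21
  have k1 := key C1 C2 H1 H2 h1 h2 x hx1 hx2
  have k2 := key C2 C1 H2 H1 h2 h1 y hy1 hy2
  rw [inf_comm H2 H1] at k2
  refine ⟨H1 ⊓ H2,
    Finite.of_injective _ (AddSubgroup.inclusion_injective (inf_le_left : H1 ⊓ H2 ≤ H1)), ?_, ?_⟩
  · rintro g ⟨hg1, hg2⟩ z hz
    rw [Finset.mem_union] at hz ⊢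
    exact hz.imp (h1 g hg1 z) (h2 g hg2 z)
  · have u1 : (C1 ∪ C2).card = (C2 \ C1).card + C1.card := by
      rw [Finset.card_sdiff_add_card, Finset.union_comm]
    have u2 : (C1 ∪ C2).card = (C1 \ C2).card + C2.card := by
      rw [Finset.card_sdiff_add_card]
    omega

def stab {G : Type*} [AddCommGroup G] (A : Finset G) : AddSubgroup G where
  carrier := {g | ∀ x, x + g ∈ A ↔ x ∈ A}
  zero_mem' := by simp
  add_mem' := by
    intro a b ha hb x
    rw [← add_assoc, hb, ha]
  neg_mem' := by
    intro a ha x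
    rw [← ha, neg_add_cancel_right]

/-- Dyson transform descent. -/
lemma exists_C {G : Type*} [AddCommGroup G] (S : Finset G) (n : ℕ) : ∀ (A B : Finset G),
    B.card ≤ n → (0 : G) ∈ B → A.Nonempty → (∀ a ∈ A, ∀ b ∈ B, a + b ∈ S) →
    ∃ C, A ⊆ C ∧ C ⊆ S ∧ P (A.card + B.card) C := by
  induction n with
  | zero =>
    intro A B hB h0
    simp only [Nat.le_zero, Finset.card_eq_zero] at hB
    simp [hB] at h0
  | succ n ih =>
    intro A B hB h0 hA hS
    by_cases hall : ∀ a ∈ A, ∀ b ∈ B, a + b ∈ A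
    · refine ⟨A, subset_rfl, fun a ha => by simpa using hS a ha 0 h0, stab A, ?_, ?_, ?_⟩
      · obtain ⟨a, ha⟩ := hA
        exact finite_of_closed _ A a (fun g hg => (hg a).2 ha)
      · exact fun g hg x hx => (hg x).2 hx
      · have hsub : ∀ b ∈ B, b ∈ stab A := by
          intro b hb x
          refine ⟨fun hx => ?_, fun hx => hall x hx b hb⟩
          have himg : A.image (· + b) = A := by
            apply Finset.eq_of_subset_of_card_le
            · intro z hz
              obtain ⟨a, ha, rfl⟩ := Finset.mem_image.1 hz
              exact hall a ha b hb
            · rw [Finset.card_image_of_injective _ (add_left_injective b)]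
          rw [← himg] at hx
          obtain ⟨a, ha, hab⟩ := Finset.mem_image.1 hx
          simp only [add_left_inj] at hab
          rwa [← hab]
        obtain ⟨a, ha⟩ := hA
        have := finite_of_closed (stab A) A a (fun g hg => (hg a).2 ha)
        have := card_le_of_sub (stab A) B 0 (by simpa using hsub)
        omega
    · push Not at hall
      obtain ⟨e, he, b, hb, heb⟩ := hall
      have hBlt : (B.filter (fun y => e + y ∈ A)).card < B.card :=
        Finset.card_lt_card (Finset.filter_ssubset.2 ⟨b, hb, heb⟩)
      have hcard : (A ∪ (B.filter (fun y => ¬ e + y ∈ A)).image (e + ·)).card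
          + (B.filter (fun y => e + y ∈ A)).card = A.card + B.card := by
        rw [Finset.card_union_of_disjoint, Finset.card_image_of_injective _ (add_right_injective e)]
        · have := Finset.card_filter_add_card_filter_not (s := B) (fun y => e + y ∈ A)
          omega
        · rw [Finset.disjoint_left]
          intro z hz hz'
          obtain ⟨y, hy, rfl⟩ := Finset.mem_image.1 hz'
          exact (Finset.mem_filter.1 hy).2 hz
      obtain ⟨C, hC1, hC2, hC3⟩ := ih (A ∪ (B.filter (fun y => ¬ e + y ∈ A)).image (e + ·))
        (B.filter (fun y => e + y ∈ A)) (by omega) (by simp [h0, he])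
        (hA.mono Finset.subset_union_left) (by
          intro a ha b hb
          rw [Finset.mem_filter] at hb
          rcases Finset.mem_union.1 ha with ha | ha
          · exact hS a ha b hb.1
          · obtain ⟨y, hy, rfl⟩ := Finset.mem_image.1 ha
            rw [add_right_comm]
            exact hS _ hb.2 _ (Finset.mem_filter.1 hy).1)
      rw [hcard] at hC3
      exact ⟨C, Finset.subset_union_left.trans hC1, hC2, hC3⟩

lemma exists_C' {G : Type*} [AddCommGroup G] (A B S : Finset G)
    (hS : ∀ a ∈ A, ∀ b ∈ B, a + b ∈ S) (a b : G) (ha : a ∈ A) (hb : b ∈ B) :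
    ∃ C, a + b ∈ C ∧ C ⊆ S ∧ P (A.card + B.card) C := by
  obtain ⟨C, h1, h2, h3⟩ := exists_C S _ (A.image (· + b)) (B.image (· - b)) le_rfl
    (Finset.mem_image.2 ⟨b, hb, sub_self b⟩) ⟨a + b, Finset.mem_image.2 ⟨a, ha, rfl⟩⟩ (by
      intro x hx y hy
      obtain ⟨x', hx', rfl⟩ := Finset.mem_image.1 hx
      obtain ⟨y', hy', rfl⟩ := Finset.mem_image.1 hy
      have := hS x' hx' y' hy'
      simpa using this)
  rw [Finset.card_image_of_injective _ (add_left_injective b),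
    Finset.card_image_of_injective _ (sub_left_injective)] at h3
  exact ⟨C, h1 (Finset.mem_image.2 ⟨a, ha, rfl⟩), h2, h3⟩

/-- Weak Kneser theorem. -/
lemma kneser {G : Type*} [AddCommGroup G] [DecidableEq G] (A B : Finset G) (hA : A.Nonempty)
    (hB : B.Nonempty) : P (A.card + B.card) (A + B) := by
  have hS : ∀ a ∈ A, ∀ b ∈ B, a + b ∈ A + B := fun a ha b hb => Finset.add_mem_add ha hb
  have hne : ((A + B).powerset.filter (fun C => P (A.card + B.card) C)).Nonempty := by
    obtain ⟨a, ha⟩ := hA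
    obtain ⟨b, hb⟩ := hB
    obtain ⟨C, _, h2, h3⟩ := exists_C' A B _ hS a b ha hb
    exact ⟨C, by simp [h2, h3]⟩
  obtain ⟨C, hC, hmax⟩ := Finset.exists_max_image _ Finset.card hne
  rw [Finset.mem_filter, Finset.mem_powerset] at hC
  have : A + B ⊆ C := by
    intro z hz
    obtain ⟨a, ha, b, hb, rfl⟩ := Finset.mem_add.1 hz
    obtain ⟨D, h1, h2, h3⟩ := exists_C' A B _ hS a b ha hb
    have hm := hmax (C ∪ D) (by
      rw [Finset.mem_filter, Finset.mem_powerset]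
      exact ⟨Finset.union_subset hC.1 h2, by convert P_union _ _ _ hC.2 h3⟩)
    have := Finset.eq_of_subset_of_card_le Finset.subset_union_left hm
    rw [this]
    exact Finset.mem_union_right _ h1
  rw [this.antisymm hC.1]
  exact hC.2

lemma sum_bounds {α β : Type*} [DecidableEq β] (A : Finset α) (f : α → β) (q : ℕ)
    (hq : ∀ y ∈ A.image f, (A.filter (fun x => f x = y)).card ≤ q) (a₀ : α) (h₀ : a₀ ∈ A) :
    A.card + q ≤ (A.filter (fun x => f x = f a₀)).card + q * (A.image f).card ∧
    ∀ a ∈ A, f a ≠ f a₀ → A.card + 2 * q ≤ (A.filter (fun x => f x = f a₀)).card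
      + (A.filter (fun x => f x = f a)).card + q * (A.image f).card := by
  have hs := Finset.card_eq_sum_card_image f A
  have m0 : f a₀ ∈ A.image f := Finset.mem_image_of_mem _ h₀
  rw [← Finset.add_sum_erase _ _ m0] at hs
  have c0 := Finset.card_erase_add_one m0
  constructor
  · have := Finset.sum_le_card_nsmul ((A.image f).erase (f a₀))
      (fun y => (A.filter (fun x => f x = y)).card) q
      (fun y hy => hq y (Finset.mem_of_mem_erase hy))
    rw [smul_eq_mul] at this
    rw [← c0]
    nlinarith
  · intro a ha hne
    have m1 : f a ∈ (A.image f).erase (f a₀) :=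
      Finset.mem_erase.2 ⟨hne, Finset.mem_image_of_mem _ ha⟩
    rw [← Finset.add_sum_erase _ _ m1] at hs
    have c1 := Finset.card_erase_add_one m1
    have := Finset.sum_le_card_nsmul (((A.image f).erase (f a₀)).erase (f a))
      (fun y => (A.filter (fun x => f x = y)).card) q
      (fun y hy => hq y (Finset.mem_of_mem_erase (Finset.mem_of_mem_erase hy)))
    rw [smul_eq_mul] at this
    rw [← c0, ← c1]
    nlinarith

lemma fiber_le {G : Type*} [AddCommGroup G] (Q : AddSubgroup G) [Finite Q] [DecidableEq (G ⧸ Q)]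
    (A : Finset G)
    (y : G ⧸ Q) : (A.filter (fun x => QuotientAddGroup.mk' Q x = y)).card ≤ Nat.card Q := by
  obtain ⟨z, rfl⟩ := QuotientAddGroup.mk'_surjective Q y
  apply card_le_of_sub _ _ z
  intro x hx
  rw [Finset.mem_filter] at hx
  have := hx.2.symm
  rw [QuotientAddGroup.mk'_eq_mk'] at this
  obtain ⟨g, hg, rfl⟩ := this
  simpa using hg

end KneserAux

open KneserAux in
theorem stmt17 {G : Type*} [AddCommGroup G] [DecidableEq G] (A B : Finset G)
    (Q : AddSubgroup G)
    (hQ : ∀ g : G, (A + B) + ({g} : Finset G) = A + B ↔ g ∈ Q)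
    (hQne : Q ≠ ⊥)
    (hcard : (A + B).card + 1 = A.card + B.card)
    (c : G) (hc : c ∈ A + B)
    (huniq : ((({c} : Finset G) - A) ∩ B).card = 1)
    (a₀ b₀ : G) (ha₀ : a₀ ∈ A) (hb₀ : b₀ ∈ B) (hab : a₀ + b₀ = c) :
    ((A.image (QuotientAddGroup.mk' Q) + B.image (QuotientAddGroup.mk' Q)).card + 1
        = (A.image (QuotientAddGroup.mk' Q)).card + (B.image (QuotientAddGroup.mk' Q)).card) ∧
    (∀ a ∈ A, QuotientAddGroup.mk' Q a ≠ QuotientAddGroup.mk' Q a₀ →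
      (A.filter (fun x => QuotientAddGroup.mk' Q x = QuotientAddGroup.mk' Q a)).card
        = Nat.card Q) ∧
    (∀ b ∈ B, QuotientAddGroup.mk' Q b ≠ QuotientAddGroup.mk' Q b₀ →
      (B.filter (fun x => QuotientAddGroup.mk' Q x = QuotientAddGroup.mk' Q b)).card
        = Nat.card Q) ∧
    (A.filter (fun x => QuotientAddGroup.mk' Q x = QuotientAddGroup.mk' Q a₀)).card
        + (B.filter (fun x => QuotientAddGroup.mk' Q x = QuotientAddGroup.mk' Q b₀)).card
      ≤ Nat.card Q + 1 := by
  have hper : ∀ g ∈ Q, ∀ x ∈ A + B, x + g ∈ A + B := by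
    intro g hg x hx
    rw [← (hQ g).2 hg]
    exact Finset.add_mem_add hx (Finset.mem_singleton_self g)
  have : Finite Q := finite_of_closed Q (A + B) c (fun g hg => hper g hg c hc)
  have hqpos : 0 < Nat.card Q := Nat.card_pos
  set ψ := QuotientAddGroup.mk' Q with hψ
  have hψeq : ∀ x y, ψ x = ψ y → y - x ∈ Q := by
    intro x y h
    rw [hψ, QuotientAddGroup.mk'_eq_mk'] at h
    obtain ⟨g, hg, rfl⟩ := h
    simpa using hg
  have hψadd : A.image ψ + B.image ψ = (A + B).image ψ := by
    ext z
    simp only [Finset.mem_add, Finset.mem_image]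
    constructor
    · rintro ⟨_, ⟨a, ha, rfl⟩, _, ⟨b, hb, rfl⟩, rfl⟩
      exact ⟨a + b, ⟨a, ha, b, hb, rfl⟩, map_add ψ a b⟩
    · rintro ⟨_, ⟨a, ha, b, hb, rfl⟩, rfl⟩
      exact ⟨_, ⟨a, ha, rfl⟩, _, ⟨b, hb, rfl⟩, (map_add ψ a b).symm⟩
  -- lower bound from Kneser
  have hlow : (A.image ψ).card + (B.image ψ).card ≤ (A.image ψ + B.image ψ).card + 1 := by
    obtain ⟨H, hHf, hH, hN⟩ := kneser (A.image ψ) (B.image ψ) ⟨_, Finset.mem_image_of_mem ψ ha₀⟩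
      ⟨_, Finset.mem_image_of_mem ψ hb₀⟩
    have hbot : H = ⊥ := by
      rw [eq_bot_iff]
      intro y hy
      obtain ⟨g, rfl⟩ := QuotientAddGroup.mk'_surjective Q y
      have hgQ : g ∈ Q := by
        rw [← hQ]
        apply Finset.eq_of_subset_of_card_le
        · intro z hz
          obtain ⟨x, hx, g', hg', rfl⟩ := Finset.mem_add.1 hz
          rw [Finset.mem_singleton] at hg'
          subst hg'
          have h1 := hH _ hy (ψ x) (by rw [hψadd]; exact Finset.mem_image_of_mem ψ hx)
          rw [hψadd] at h1
          obtain ⟨s, hs, hs'⟩ := Finset.mem_image.1 h1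
          have h2 := hper _ (hψeq s (x + g') (by rw [hs', map_add])) s hs
          simpa using h2
        · rw [Finset.card_add_singleton]
      rw [AddSubgroup.mem_bot]
      exact (QuotientAddGroup.eq_zero_iff g).2 hgQ
    subst hbot
    simpa using hN
  -- the sumset is a union of full cosets
  have hfull : Nat.card Q * (A.image ψ + B.image ψ).card ≤ (A + B).card := by
    rw [hψadd, Finset.card_eq_sum_card_image ψ (A + B), mul_comm, ← smul_eq_mul]
    apply Finset.card_nsmul_le_sum
    intro y hy
    obtain ⟨s, hs, rfl⟩ := Finset.mem_image.1 hy
    apply card_le_of_closed _ _ s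
    intro g hg
    rw [Finset.mem_filter]
    refine ⟨hper g hg s hs, ?_⟩
    rw [map_add]
    have : ψ g = 0 := (QuotientAddGroup.eq_zero_iff g).2 hg
    rw [this, add_zero]
  have h00 : (A.filter (fun x => ψ x = ψ a₀)).card + (B.filter (fun x => ψ x = ψ b₀)).card
      ≤ Nat.card Q + 1 := by
    have i1 : ((A.filter (fun x => ψ x = ψ a₀)).image (c - ·)).card
        = (A.filter (fun x => ψ x = ψ a₀)).card :=
      Finset.card_image_of_injective _ sub_right_injective
    have i2 := Finset.card_union_add_card_inter ((A.filter (fun x => ψ x = ψ a₀)).image (c - ·))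
      (B.filter (fun x => ψ x = ψ b₀))
    have i3 : ((A.filter (fun x => ψ x = ψ a₀)).image (c - ·) ∪
      (B.filter (fun x => ψ x = ψ b₀))).card ≤ Nat.card Q := by
      apply card_le_of_sub _ _ b₀
      intro y hy
      rcases Finset.mem_union.1 hy with hy | hy
      · obtain ⟨x, hx, rfl⟩ := Finset.mem_image.1 hy
        have := hψeq _ _ (Finset.mem_filter.1 hx).2
        rw [← hab]
        convert this using 1
        abel
      · exact hψeq _ _ (Finset.mem_filter.1 hy).2.symm
    have i4 : ((A.filter (fun x => ψ x = ψ a₀)).image (c - ·) ∩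
      (B.filter (fun x => ψ x = ψ b₀))).card ≤ 1 := by
      rw [← huniq]
      apply Finset.card_le_card
      intro y hy
      rw [Finset.mem_inter] at hy ⊢
      obtain ⟨x, hx, rfl⟩ := Finset.mem_image.1 hy.1
      exact ⟨Finset.sub_mem_sub (Finset.mem_singleton_self c) (Finset.mem_filter.1 hx).1,
        (Finset.mem_filter.1 hy.2).1⟩
    omega
  obtain ⟨sA, sA'⟩ := sum_bounds A ψ (Nat.card Q) (fun y _ => fiber_le Q A y) a₀ ha₀
  obtain ⟨sB, sB'⟩ := sum_bounds B ψ (Nat.card Q) (fun y _ => fiber_le Q B y) b₀ hb₀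
  have hl := Nat.mul_le_mul_left (Nat.card Q) hlow
  rw [mul_add, mul_add, mul_one] at hl
  refine ⟨?_, ?_, ?_, h00⟩
  · apply le_antisymm _ hlow
    apply Nat.le_of_mul_le_mul_left _ hqpos
    rw [mul_add, mul_add, mul_one]
    omega
  · intro a ha hne
    have := sA' a ha hne
    have : (A.filter (fun x => ψ x = ψ a)).card ≤ Nat.card Q := fiber_le Q A (ψ a)
    omega
  · intro b hb hne
    have := sB' b hb hne
    have : (B.filter (fun x => ψ x = ψ b)).card ≤ Nat.card Q := fiber_le Q B (ψ b)
    omega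
end
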